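/- arXiv:2110.00515 — 2 statements merged into one kernel-verified Lean document; each statement's English description precedes it below -/
import Mathlib

section
/- For every nonzero integer Δ₀, the set of pairs of integers (g₂, g₃) such that g₂³ − 27·g₃² = Δ₀ is finite. (This finiteness, a consequence of Siegel's theorem, is the key step in Shafarevich's proof that there are only finitely many elliptic curves over ℚ with good reduction outside a given finite set of primes.) -/
/-!
Following Mordell, attach to a solution `(g₂, g₃)` the binary cubic form
`F = x³ - g₂ x y² - 2 g₃ y³`, of discriminant `4 Δ₀`. If `F` has an integral linear factor, then
`g₂` is bounded by factoring the discriminant. Otherwise, reducing a positive definite quadratic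
covariant of `F` shows that `F` is `SL₂(ℤ)`-equivalent to one of finitely many irreducible forms
`G`. The substitution turns `F(1, 0) = 1` into a solution of the Thue equation `G(x, y) = 1`, and
`3 g₂`, the value of the Hessian of `F` at `(1, 0)`, into the value of the Hessian of `G` at that
solution.

Thue equations have finitely many solutions because a root `α` of degree `n ≥ 3` has only finitely
many rational approximations of quality `c / q ^ n`. For this, Siegel's lemma provides integer
polynomials `P`, `Q` of controlled degree and height with `P - α Q` vanishing to high order at `α`.
Given a good approximation `p₁` and a much better one `p₂`, some derivative of `P - p₂ Q` of low
order does not vanish at `p₁`, by counting the zeros of the Wronskian of `P` and `Q`; yet it is too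
small to be a nonzero rational number with its denominator.
-/

open Polynomial

section Siegel

attribute [local instance] Matrix.seminormedAddCommGroup in
lemma exists_ne_zero_sum_zsmul_eq_zero {ρ κ ι M : Type*} [Fintype ρ] [Fintype κ] [Fintype ι]
    [Nonempty ρ] [Nonempty ι] [AddCommGroup M] (b : Module.Basis ι ℤ M) (a : ρ → κ → M) {K : ℝ}
    (hK : 1 ≤ K) (ha : ∀ i j l, |(b.repr (a i j) l : ℝ)| ≤ K) {E : ℕ}
    (hlt : Fintype.card ρ * Fintype.card ι < Fintype.card κ)
    (hE : Fintype.card ρ * Fintype.card ι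
      ≤ E * (Fintype.card κ - Fintype.card ρ * Fintype.card ι)) :
    ∃ t : κ → ℤ, t ≠ 0 ∧ (∀ i, ∑ j, t j • a i j = 0) ∧
      ∀ j, |(t j : ℝ)| ≤ (Fintype.card κ * K) ^ E := by
  let A : Matrix (ρ × ι) κ ℤ := fun p j => b.repr (a p.1 j) p.2
  have hcard : Fintype.card (ρ × ι) = Fintype.card ρ * Fintype.card ι := Fintype.card_prod ρ ι
  obtain ⟨t, ht, hAt, hbound⟩ :=
    Int.Matrix.exists_ne_zero_int_vec_norm_le A (hcard ▸ hlt) Fintype.card_pos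
  refine ⟨t, ht, fun i => b.ext_elem fun l => ?_, fun j => ?_⟩
  · simpa [A, Matrix.mulVec, dotProduct, mul_comm] using congrFun hAt (i, l)
  · have hAK : max 1 ‖A‖ ≤ K := max_le hK <| (Matrix.norm_le_iff (by linarith)).2 fun p j => by
      rw [Int.norm_eq_abs]
      exact ha p.1 j p.2
    have hκ : (1 : ℝ) ≤ Fintype.card κ := mod_cast (Nat.zero_le _).trans_lt hlt
    have hexp : (Fintype.card (ρ × ι) / (Fintype.card κ - Fintype.card (ρ × ι)) : ℝ) ≤ E := by
      rw [hcard, ← Nat.cast_sub hlt.le, div_le_iff₀ (by exact_mod_cast Nat.sub_pos_of_lt hlt)]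
      exact_mod_cast hE
    calc |(t j : ℝ)| = ‖t j‖ := (Int.norm_eq_abs _).symm
      _ ≤ ‖t‖ := norm_le_pi_norm t j
      _ ≤ _ := hbound
      _ ≤ (Fintype.card κ * max 1 ‖A‖) ^ (E : ℝ) :=
        Real.rpow_le_rpow_of_exponent_le (one_le_mul_of_one_le_of_one_le hκ (le_max_left _ _)) hexp
      _ ≤ (Fintype.card κ * K) ^ E := by
        rw [Real.rpow_natCast]
        gcongr

lemma exists_forall_abs_repr_pow_le {ι S : Type*} [Finite ι] [CommRing S]
    (b : Module.Basis ι ℤ S) (α : S) :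
    ∃ K : ℝ, 1 ≤ K ∧ ∀ k l, |(b.repr (α ^ k) l : ℝ)| ≤ K ^ (k + 1) := by
  classical
  cases nonempty_fintype ι
  obtain ⟨K₀, hK₀⟩ := Finite.exists_le fun l => |(b.repr 1 l : ℝ)|
  obtain ⟨K₁, hK₁⟩ := Finite.exists_le fun i => ∑ j, |(Algebra.leftMulMatrix b α i j : ℝ)|
  obtain ⟨K, h1, h0K, h1K⟩ : ∃ K, 1 ≤ K ∧ K₀ ≤ K ∧ K₁ ≤ K :=
    ⟨max 1 (max K₀ K₁), by simp, by simp, by simp⟩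
  refine ⟨K, h1, fun k => ?_⟩
  induction k with
  | zero => exact fun l => by simpa using (hK₀ l).trans h0K
  | succ k ih =>
    intro l
    have hmul : b.repr (α ^ (k + 1)) l
        = ∑ j, Algebra.leftMulMatrix b α l j * b.repr (α ^ k) j := by
      rw [pow_succ', ← Algebra.leftMulMatrix_mulVec_repr]
      rfl
    calc |(b.repr (α ^ (k + 1)) l : ℝ)|
        ≤ ∑ j, |(Algebra.leftMulMatrix b α l j : ℝ)| * |(b.repr (α ^ k) j : ℝ)| := by
          rw [hmul, Int.cast_sum]
          simp only [← abs_mul, ← Int.cast_mul]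
          exact Finset.abs_sum_le_sum_abs _ _
      _ ≤ ∑ j, |(Algebra.leftMulMatrix b α l j : ℝ)| * K ^ (k + 1) := by
          gcongr with j
          exact ih j
      _ ≤ K * K ^ (k + 1) := by
          rw [← Finset.sum_mul]
          gcongr
          exact (hK₁ l).trans h1K
      _ = K ^ (k + 1 + 1) := (pow_succ' _ _).symm

end Siegel

section AuxiliaryPolynomials

lemma coeff_taylor_eq_sum_range {R : Type*} [CommSemiring R] {p : R[X]} {N : ℕ}
    (hN : p.natDegree < N) (r : R) (k : ℕ) :
    (taylor r p).coeff k = ∑ i ∈ Finset.range N, (i.choose k : R) * p.coeff i * r ^ (i - k) := by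
  rw [taylor_coeff, hasseDeriv_apply, sum_over_range' _ (by simp) N hN]
  simp [eval_finsetSum]

lemma X_sub_C_pow_dvd_iff_coeff_taylor {R : Type*} [CommRing R] {p : R[X]} {r : R} {n : ℕ} :
    (X - C r) ^ n ∣ p ↔ ∀ k < n, (taylor r p).coeff k = 0 := by
  rw [X_sub_C_pow_dvd_iff, X_pow_dvd_iff, taylor_apply]

variable {R S T : Type*} [CommRing R] [CommRing S] [CommRing T] [Algebra R S] [Algebra R T]

/-- The polynomial `P(X) - α Q(X)`, that is, the two-variable polynomial `P(X) - Y Q(X)` of Thue's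
method specialised at `Y = α`. -/
noncomputable def thuePoly (α : S) (P Q : R[X]) : S[X] :=
  P.map (algebraMap R S) - C α * Q.map (algebraMap R S)

lemma map_thuePoly (φ : S →ₐ[R] T) (α : S) (P Q : R[X]) :
    (thuePoly α P Q).map (φ : S →+* T) = thuePoly (φ α) P Q := by
  simp [thuePoly, Polynomial.map_map]

lemma natDegree_thuePoly_lt {P Q : R[X]} {N : ℕ} (hP : P.natDegree < N) (hQ : Q.natDegree < N)
    (α : S) : (thuePoly α P Q).natDegree < N :=
  (natDegree_sub_le _ _).trans_lt <| max_lt (natDegree_map_le.trans_lt hP) <|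
    (natDegree_C_mul_le _ _).trans_lt (natDegree_map_le.trans_lt hQ)

lemma coeff_taylor_thuePoly_ofFn {N : ℕ} (t : Fin N ⊕ Fin N → ℤ) (α : S) (k : ℕ) :
    (taylor α (thuePoly α (ofFn N (t ∘ Sum.inl)) (ofFn N (t ∘ Sum.inr)))).coeff k
      = ∑ j, t j • Sum.elim (fun i : Fin N => ((i : ℕ).choose k : ℤ) • α ^ (i - k : ℕ))
          (fun i : Fin N => -(((i : ℕ).choose k : ℤ) • α ^ (i - k + 1 : ℕ))) j := by
  rcases N.eq_zero_or_pos with rfl | hN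
  · simp [thuePoly]
  rw [coeff_taylor_eq_sum_range
      (natDegree_thuePoly_lt (ofFn_natDegree_lt hN _) (ofFn_natDegree_lt hN _) α),
    Fintype.sum_sum_type, ← Finset.sum_add_distrib, Finset.sum_range]
  refine Finset.sum_congr rfl fun i _ => ?_
  simp only [thuePoly, coeff_sub, coeff_C_mul, coeff_map, ofFn_coeff_eq_val_of_lt _ i.2,
    Function.comp_apply, Fin.eta, Sum.elim_inl, Sum.elim_inr, zsmul_eq_mul, eq_intCast]
  push_cast
  ring

lemma abs_coeff_ofFn_le {N : ℕ} {v : Fin N → ℤ} {B : ℝ} (hB : 0 ≤ B)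
    (hv : ∀ j, |(v j : ℝ)| ≤ B) (i : ℕ) : |((ofFn N v).coeff i : ℝ)| ≤ B := by
  rcases lt_or_ge i N with hi | hi
  · simpa only [ofFn_coeff_eq_val_of_lt _ hi] using hv ⟨i, hi⟩
  · simpa only [ofFn_coeff_eq_zero_of_ge _ hi, Int.cast_zero, abs_zero] using hB

lemma exists_forall_abs_repr_choose_zsmul_pow_le {ι : Type*} [Finite ι]
    (b : Module.Basis ι ℤ S) (α : S) :
    ∃ A : ℝ, 1 ≤ A ∧ ∀ {N i e : ℕ}, i < N → e ≤ N → ∀ k l,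
      |(b.repr ((i.choose k : ℤ) • α ^ e) l : ℝ)| ≤ A ^ N := by
  obtain ⟨K, hK, hrepr⟩ := exists_forall_abs_repr_pow_le b α
  refine ⟨2 * K ^ 2, by nlinarith, fun {N i e} hi he k l => ?_⟩
  have hchoose : (i.choose k : ℝ) ≤ 2 ^ N := mod_cast
    (Nat.choose_le_two_pow i k).trans (Nat.pow_le_pow_right two_pos hi.le)
  have hpow : |(b.repr (α ^ e) l : ℝ)| ≤ (K ^ 2) ^ N := by
    rw [← pow_mul]
    exact (hrepr e l).trans (pow_le_pow_right₀ hK (by omega))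
  calc |(b.repr ((i.choose k : ℤ) • α ^ e) l : ℝ)|
      = i.choose k * |(b.repr (α ^ e) l : ℝ)| := by
        rw [map_zsmul, Finsupp.smul_apply, smul_eq_mul, Int.cast_mul, abs_mul, Int.cast_natCast,
          Nat.abs_cast]
    _ ≤ 2 ^ N * (K ^ 2) ^ N := by gcongr
    _ = (2 * K ^ 2) ^ N := (mul_pow _ _ _).symm

theorem exists_X_sub_C_pow_dvd_thuePoly {ι : Type*} [Fintype ι] [Nonempty ι]
    (b : Module.Basis ι ℤ S) (α : S) :
    ∃ A : ℝ, 1 ≤ A ∧ ∀ {s N E : ℕ}, 0 < s → s * Fintype.card ι < 2 * N →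
      s * Fintype.card ι ≤ E * (2 * N - s * Fintype.card ι) →
      ∃ P Q : ℤ[X], (P ≠ 0 ∨ Q ≠ 0) ∧ P.natDegree < N ∧ Q.natDegree < N ∧
        (∀ i, |(P.coeff i : ℝ)| ≤ A ^ (N * E)) ∧ (∀ i, |(Q.coeff i : ℝ)| ≤ A ^ (N * E)) ∧
        (X - C α) ^ s ∣ thuePoly α P Q := by
  obtain ⟨A, hA, hrepr⟩ := exists_forall_abs_repr_choose_zsmul_pow_le b α
  refine ⟨4 * A, by linarith, fun {s N E} hs hlt hE => ?_⟩
  have hN : 0 < N := by omega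
  have : Nonempty (Fin s) := ⟨⟨0, hs⟩⟩
  let a (k : Fin s) : Fin N ⊕ Fin N → S :=
    Sum.elim (fun i => ((i : ℕ).choose k : ℤ) • α ^ (i - k : ℕ))
      (fun i => -(((i : ℕ).choose k : ℤ) • α ^ (i - k + 1 : ℕ)))
  have ha (k j l) : |(b.repr (a k j) l : ℝ)| ≤ A ^ N := by
    rcases j with i | i
    · exact hrepr i.2 (by omega) k l
    · simpa only [a, Sum.elim_inr, map_neg, Finsupp.neg_apply, Int.cast_neg, abs_neg]
        using hrepr i.2 (by omega) k l
  obtain ⟨t, ht, hta, hbound⟩ := exists_ne_zero_sum_zsmul_eq_zero b a (one_le_pow₀ hA) ha (E := E)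
    (by simpa [two_mul] using hlt) (by simpa [two_mul] using hE)
  have htA (j) : |(t j : ℝ)| ≤ (4 * A) ^ (N * E) := by
    have hcard : (Fintype.card (Fin N ⊕ Fin N) : ℝ) ≤ 4 ^ N := by
      have : N + N ≤ 4 ^ N := by
        rw [show 4 = 2 * 2 by rfl, mul_pow]
        nlinarith [N.lt_two_pow_self, Nat.pow_le_pow_right two_pos hN]
      simpa using mod_cast this
    calc |(t j : ℝ)| ≤ _ := hbound j
      _ ≤ (4 ^ N * A ^ N) ^ E := by gcongr
      _ = (4 * A) ^ (N * E) := by rw [← mul_pow, pow_mul]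
  refine ⟨ofFn N (t ∘ Sum.inl), ofFn N (t ∘ Sum.inr), ?_, ofFn_natDegree_lt hN _,
    ofFn_natDegree_lt hN _, abs_coeff_ofFn_le (by positivity) fun j => htA (.inl j),
    abs_coeff_ofFn_le (by positivity) fun j => htA (.inr j), ?_⟩
  · contrapose! ht
    have hinl := injective_ofFn N (ht.1.trans (map_zero _).symm)
    have hinr := injective_ofFn N (ht.2.trans (map_zero _).symm)
    exact funext <| Sum.forall.2 ⟨congrFun hinl, congrFun hinr⟩
  · exact X_sub_C_pow_dvd_iff_coeff_taylor.2 fun k hk =>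
      (coeff_taylor_thuePoly_ofFn t α k).trans (hta ⟨k, hk⟩)

end AuxiliaryPolynomials

section Nonvanishing

lemma pow_sub_one_dvd_wronskian {R : Type*} [CommRing R] {p a : R[X]} {n : ℕ} (h : p ^ n ∣ a)
    (b : R[X]) : p ^ (n - 1) ∣ wronskian a b :=
  dvd_sub (((pow_dvd_pow p n.pred_le).trans h).mul_right _)
    ((pow_sub_one_dvd_derivative_of_pow_dvd h).mul_right _)

lemma wronskian_thuePoly {R S : Type*} [CommRing R] [CommRing S] [Algebra R S] (α : S)
    (P Q : R[X]) :
    wronskian (thuePoly α P Q) (Q.map (algebraMap R S)) = (wronskian P Q).map (algebraMap R S) := by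
  simp only [thuePoly, wronskian, derivative_sub, derivative_C_mul, derivative_map,
    Polynomial.map_sub, Polynomial.map_mul]
  ring

lemma wronskian_mul_mul {R : Type*} [CommRing R] (g a b : R[X]) :
    wronskian (g * a) (g * b) = g ^ 2 * wronskian a b := by
  simp only [wronskian, derivative_mul]
  ring

variable {F L : Type*} [Field F] [Field L] [Algebra F L] {α : L}

lemma minpoly_pow_dvd_of_X_sub_C_pow_dvd_map (hα : IsSeparable F α) {n : ℕ} {V : F[X]}
    (h : (X - C α) ^ n ∣ V.map (algebraMap F L)) : minpoly F α ^ n ∣ V := by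
  induction n generalizing V with
  | zero => simp
  | succ n ih =>
    rcases eq_or_ne V 0 with rfl | hV
    · exact dvd_zero _
    have hroot : aeval α V = 0 := by
      rw [← eval_map_algebraMap]
      exact dvd_iff_isRoot.1 ((dvd_pow_self _ n.succ_ne_zero).trans h)
    obtain ⟨W, rfl⟩ := minpoly.dvd F α hroot
    rw [pow_succ']
    refine mul_dvd_mul_left _ (ih ?_)
    have hmap := (Polynomial.map_ne_zero_iff (algebraMap F L).injective).2 hV
    have hsimple := rootMultiplicity_le_one_of_separable (Separable.map (f := algebraMap F L) hα) α
    rw [← le_rootMultiplicity_iff hmap, Polynomial.map_mul, rootMultiplicity_mul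
      (by rwa [← Polynomial.map_mul])] at h
    exact (pow_dvd_pow _ (by omega)).trans (pow_rootMultiplicity_dvd _ α)

lemma exists_eq_C_mul_of_wronskian_eq_zero [CharZero F] {P Q : F[X]} (h : wronskian P Q = 0) :
    ∃ (g : F[X]) (u v : F), P = C u * g ∧ Q = C v * g := by
  classical
  rcases eq_or_ne (gcd P Q) 0 with hg | hg
  · obtain ⟨rfl, rfl⟩ := (gcd_eq_zero_iff P Q).1 hg
    exact ⟨0, 0, 0, by simp⟩
  obtain ⟨a, b, ha, hb, hab⟩ := extract_gcd P Q
  have hWab : gcd P Q ^ 2 * wronskian a b = 0 := by rw [← wronskian_mul_mul, ← ha, ← hb, h]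
  replace hWab := (mul_eq_zero.1 hWab).resolve_left (pow_ne_zero 2 hg)
  obtain ⟨hda, hdb⟩ := ((gcd_isUnit_iff a b).1 hab).wronskian_eq_zero_iff.1 hWab
  refine ⟨gcd P Q, a.coeff 0, b.coeff 0, ?_, ?_⟩
  · rwa [← eq_C_of_derivative_eq_zero hda, mul_comm]
  · rwa [← eq_C_of_derivative_eq_zero hdb, mul_comm]

variable [CharZero F] {P Q : F[X]} {s N : ℕ}

lemma wronskian_ne_zero_of_X_sub_C_pow_dvd_thuePoly (hα : IsIntegral F α)
    (hα' : α ∉ (algebraMap F L).range) (hPQ : P ≠ 0 ∨ Q ≠ 0) (hP : P.natDegree < N)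
    (hQ : Q.natDegree < N) (hN : N ≤ s * (minpoly F α).natDegree)
    (hdvd : (X - C α) ^ s ∣ thuePoly α P Q) : wronskian P Q ≠ 0 := by
  intro hW
  obtain ⟨g, u, v, rfl, rfl⟩ := exists_eq_C_mul_of_wronskian_eq_zero hW
  have hg0 : g ≠ 0 := by
    rintro rfl
    simp at hPQ
  have huv : u ≠ 0 ∨ v ≠ 0 := by simpa [hg0] using hPQ
  have hg : g.natDegree < N := by
    rcases huv with hu | hv
    · rwa [natDegree_C_mul hu] at hP
    · rwa [natDegree_C_mul hv] at hQ
  have hne : algebraMap F L u - α * algebraMap F L v ≠ 0 := by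
    intro h
    rcases eq_or_ne v 0 with rfl | hv
    · simp_all
    · refine hα' ⟨u / v, ?_⟩
      rw [map_div₀, div_eq_iff (by simpa using hv)]
      exact sub_eq_zero.1 h
  have hfactor : thuePoly α (C u * g) (C v * g)
      = C (algebraMap F L u - α * algebraMap F L v) * g.map (algebraMap F L) := by
    simp only [thuePoly, Polynomial.map_mul, map_C, C_sub, C_mul]
    ring
  rw [hfactor, (isUnit_C.2 hne.isUnit).dvd_mul_left] at hdvd
  have hle := natDegree_le_of_dvd
    (minpoly_pow_dvd_of_X_sub_C_pow_dvd_map (minpoly.irreducible hα).separable hdvd) hg0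
  rw [natDegree_pow] at hle
  omega

theorem exists_coeff_taylor_thuePoly_ne_zero (hα : IsIntegral F α)
    (hα' : α ∉ (algebraMap F L).range) (hPQ : P ≠ 0 ∨ Q ≠ 0) (hP : P.natDegree < N)
    (hQ : Q.natDegree < N) (hN : N ≤ s * (minpoly F α).natDegree)
    (hdvd : (X - C α) ^ s ∣ thuePoly α P Q) (x y : F) :
    ∃ k, k + (minpoly F α).natDegree * (s - 1) + 2 ≤ 2 * N ∧
      (taylor x (thuePoly y P Q)).coeff k ≠ 0 := by
  have hW := wronskian_ne_zero_of_X_sub_C_pow_dvd_thuePoly hα hα' hPQ hP hQ hN hdvd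
  have hirr := minpoly.irreducible hα
  by_contra! hvanish
  let r := 2 * N - 1 - (minpoly F α).natDegree * (s - 1)
  have hx : (X - C x) ^ (r - 1) ∣ wronskian P Q := by
    have h := pow_sub_one_dvd_wronskian
      (X_sub_C_pow_dvd_iff_coeff_taylor.2 fun k (hk : k < r) => hvanish k (by omega))
      (Q.map (algebraMap F F))
    rwa [wronskian_thuePoly, Algebra.algebraMap_self, Polynomial.map_id] at h
  have hmin : minpoly F α ^ (s - 1) ∣ wronskian P Q := by
    refine minpoly_pow_dvd_of_X_sub_C_pow_dvd_map hirr.separable ?_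
    rw [← wronskian_thuePoly α]
    exact pow_sub_one_dvd_wronskian hdvd _
  have hcoprime : IsCoprime ((X - C x) ^ (r - 1)) (minpoly F α ^ (s - 1)) := by
    refine IsCoprime.pow ((irreducible_X_sub_C x).coprime_iff_not_dvd.2 fun h => hα' ?_)
    have hroot := (irreducible_X_sub_C x).dvd_symm hirr h
    rw [minpoly.dvd_iff, aeval_sub, aeval_X, aeval_C, sub_eq_zero] at hroot
    exact ⟨x, hroot.symm⟩
  have hle := natDegree_le_of_dvd (hcoprime.mul_dvd hx hmin) hW
  have hlt := natDegree_wronskian_lt_add hW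
  rw [natDegree_mul (pow_ne_zero _ (X_sub_C_ne_zero _)) (pow_ne_zero _ hirr.ne_zero), natDegree_pow,
    natDegree_pow, natDegree_X_sub_C, mul_one, mul_comm (s - 1)] at hle
  omega

end Nonvanishing

section TaylorBounds

variable {𝕜 : Type*} [NormedField 𝕜] {p : 𝕜[X]} {N : ℕ}

lemma norm_coeff_taylor_le (hN : p.natDegree < N) {t : 𝕜} {k : ℕ} {B : ℝ}
    (hB : ∀ i < N, ‖p.coeff i * t ^ (i - k)‖ ≤ B) : ‖(taylor t p).coeff k‖ ≤ 4 ^ N * B := by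
  have hB0 : 0 ≤ B := (norm_nonneg _).trans (hB 0 (by omega))
  have hchoose (i : ℕ) (hi : i < N) : ‖(i.choose k : 𝕜)‖ ≤ 2 ^ N := by
    refine (Nat.norm_cast_le _).trans ?_
    rw [norm_one, mul_one]
    exact mod_cast (Nat.choose_le_two_pow i k).trans (Nat.pow_le_pow_right two_pos hi.le)
  calc ‖(taylor t p).coeff k‖
      ≤ ∑ i ∈ Finset.range N, ‖(i.choose k : 𝕜) * p.coeff i * t ^ (i - k)‖ := by
        rw [coeff_taylor_eq_sum_range hN]
        exact norm_sum_le _ _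
    _ ≤ ∑ _i ∈ Finset.range N, 2 ^ N * B := by
        refine Finset.sum_le_sum fun i hi => ?_
        rw [Finset.mem_range] at hi
        rw [mul_assoc, norm_mul]
        exact mul_le_mul (hchoose i hi) (hB i hi) (norm_nonneg _) (by positivity)
    _ = N * 2 ^ N * B := by rw [Finset.sum_const, Finset.card_range, nsmul_eq_mul, mul_assoc]
    _ ≤ 2 ^ N * 2 ^ N * B := by
        gcongr
        exact mod_cast N.lt_two_pow_self.le
    _ = 4 ^ N * B := by
        rw [← mul_pow]
        norm_num

lemma norm_coeff_taylor_le_of_norm_coeff_le (hN : p.natDegree < N) {B : ℝ}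
    (hB : ∀ i, ‖p.coeff i‖ ≤ B) (t : 𝕜) (k : ℕ) :
    ‖(taylor t p).coeff k‖ ≤ 4 ^ N * (B * (1 + ‖t‖) ^ N) := by
  have hB0 : 0 ≤ B := (norm_nonneg _).trans (hB 0)
  refine norm_coeff_taylor_le hN fun i hi => ?_
  rw [norm_mul, norm_pow]
  gcongr
  · exact hB i
  · calc ‖t‖ ^ (i - k) ≤ (1 + ‖t‖) ^ (i - k) := by gcongr; linarith
      _ ≤ (1 + ‖t‖) ^ N := pow_le_pow_right₀ (by linarith [norm_nonneg t]) (by omega)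

lemma norm_coeff_taylor_le_of_X_sub_C_pow_dvd (hN : p.natDegree < N) {B : ℝ}
    (hB : ∀ i, ‖p.coeff i‖ ≤ B) {α x : 𝕜} {s : ℕ} (hp : (X - C α) ^ s ∣ p) (hx : ‖x - α‖ ≤ 1)
    (k : ℕ) : ‖(taylor x p).coeff k‖ ≤ 16 ^ N * (B * (1 + ‖α‖) ^ N) * ‖x - α‖ ^ (s - k) := by
  have hB0 : 0 ≤ B := (norm_nonneg _).trans (hB 0)
  have hrecenter : taylor x p = taylor (x - α) (taylor α p) := by rw [taylor_taylor, sub_add_cancel]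
  have hterm (i : ℕ) : ‖(taylor α p).coeff i * (x - α) ^ (i - k)‖
      ≤ 4 ^ N * (B * (1 + ‖α‖) ^ N) * ‖x - α‖ ^ (s - k) := by
    rcases lt_or_ge i s with hi | hi
    · rw [X_sub_C_pow_dvd_iff_coeff_taylor.1 hp i hi, zero_mul, norm_zero]
      positivity
    · rw [norm_mul, norm_pow]
      exact mul_le_mul (norm_coeff_taylor_le_of_norm_coeff_le hN hB α i)
        (pow_le_pow_of_le_one (norm_nonneg _) hx (by omega)) (by positivity) (by positivity)
  calc ‖(taylor x p).coeff k‖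
      ≤ 4 ^ N * (4 ^ N * (B * (1 + ‖α‖) ^ N) * ‖x - α‖ ^ (s - k)) := by
        rw [hrecenter]
        exact norm_coeff_taylor_le (by rwa [natDegree_taylor]) fun i _ => hterm i
    _ = 16 ^ N * (B * (1 + ‖α‖) ^ N) * ‖x - α‖ ^ (s - k) := by
        rw [show (16 : ℝ) = 4 * 4 by norm_num, mul_pow]
        ring

theorem norm_coeff_taylor_thuePoly_le {R : Type*} [CommRing R] [Algebra R 𝕜] {P Q : R[X]}
    (hP : P.natDegree < N) (hQ : Q.natDegree < N) {H : ℝ}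
    (hPH : ∀ i, ‖algebraMap R 𝕜 (P.coeff i)‖ ≤ H) (hQH : ∀ i, ‖algebraMap R 𝕜 (Q.coeff i)‖ ≤ H)
    {α x : 𝕜} {s : ℕ} (hdvd : (X - C α) ^ s ∣ thuePoly α P Q) (hx : ‖x - α‖ ≤ 1) (y : 𝕜) (k : ℕ) :
    ‖(taylor x (thuePoly y P Q)).coeff k‖
      ≤ 16 ^ N * (2 + ‖α‖) ^ (N + 1) * H * (‖x - α‖ ^ (s - k) + ‖y - α‖) := by
  have hH : 0 ≤ H := (norm_nonneg _).trans (hPH 0)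
  have hcoeff (i : ℕ) : ‖(thuePoly α P Q).coeff i‖ ≤ H * (1 + ‖α‖) := by
    simp only [thuePoly, coeff_sub, coeff_C_mul, coeff_map]
    refine (norm_sub_le _ _).trans ?_
    rw [norm_mul, mul_add, mul_one, mul_comm H ‖α‖]
    gcongr
    exacts [hPH i, hQH i]
  have hα := norm_coeff_taylor_le_of_X_sub_C_pow_dvd (natDegree_thuePoly_lt hP hQ α) hcoeff hdvd
    hx k
  have hQx := norm_coeff_taylor_le_of_norm_coeff_le (p := Q.map (algebraMap R 𝕜))
    (natDegree_map_le.trans_lt hQ) (fun i => by rw [coeff_map]; exact hQH i) x k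
  have hx' : ‖x‖ ≤ 1 + ‖α‖ := by linarith [norm_le_norm_add_norm_sub α x, norm_sub_rev x α]
  have hsplit : thuePoly y P Q = thuePoly α P Q - C (y - α) * Q.map (algebraMap R 𝕜) := by
    rw [thuePoly, thuePoly, C_sub]
    ring
  have h₁ : (1 + ‖α‖) * (1 + ‖α‖) ^ N ≤ (2 + ‖α‖) ^ (N + 1) := by
    rw [← pow_succ']
    gcongr
    norm_num
  have h₂ : (1 + ‖x‖) ^ N ≤ (2 + ‖α‖) ^ (N + 1) :=
    (pow_le_pow_left₀ (by positivity) (by linarith) N).trans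
      (pow_le_pow_right₀ (by linarith [norm_nonneg α]) N.le_succ)
  calc ‖(taylor x (thuePoly y P Q)).coeff k‖
      ≤ ‖(taylor x (thuePoly α P Q)).coeff k‖
        + ‖y - α‖ * ‖(taylor x (Q.map (algebraMap R 𝕜))).coeff k‖ := by
        rw [hsplit, map_sub, coeff_sub, taylor_mul, taylor_C, coeff_C_mul, ← norm_mul]
        exact norm_sub_le _ _
    _ ≤ 16 ^ N * (H * (1 + ‖α‖) * (1 + ‖α‖) ^ N) * ‖x - α‖ ^ (s - k)
        + ‖y - α‖ * (4 ^ N * (H * (1 + ‖x‖) ^ N)) := by gcongr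
    _ = 16 ^ N * ((1 + ‖α‖) * (1 + ‖α‖) ^ N) * H * ‖x - α‖ ^ (s - k)
        + 4 ^ N * (1 + ‖x‖) ^ N * H * ‖y - α‖ := by ring
    _ ≤ 16 ^ N * (2 + ‖α‖) ^ (N + 1) * H * ‖x - α‖ ^ (s - k)
        + 16 ^ N * (2 + ‖α‖) ^ (N + 1) * H * ‖y - α‖ := by gcongr; norm_num
    _ = _ := (mul_add _ _ _).symm

end TaylorBounds

section Integrality

lemma map_hasseDeriv {R S : Type*} [Semiring R] [Semiring S] (φ : R →+* S) (k : ℕ) (p : R[X]) :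
    (hasseDeriv k p).map φ = hasseDeriv k (p.map φ) := by
  ext i
  simp [hasseDeriv_coeff]

lemma one_le_den_pow_mul_abs_coeff_taylor_thuePoly {P Q : ℤ[X]} {N : ℕ} (hP : P.natDegree < N)
    (hQ : Q.natDegree < N) {x y : ℚ} {k : ℕ} (hk : (taylor x (thuePoly y P Q)).coeff k ≠ 0) :
    1 ≤ (x.den : ℚ) ^ (N - k) * y.den * |(taylor x (thuePoly y P Q)).coeff k| := by
  have hx : (1 : ℚ) ≤ x.den := mod_cast x.den_pos
  have hy : (y.den : ℚ) ≠ 0 := mod_cast y.den_nz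
  let f : ℤ[X] := hasseDeriv k (C (y.den : ℤ) * P - C y.num * Q)
  have hf : f.natDegree ≤ N - k := by
    refine (natDegree_hasseDeriv_le _ _).trans (Nat.sub_le_sub_right ?_ k)
    refine (natDegree_sub_le _ _).trans (max_le ?_ ?_)
    exacts [(natDegree_C_mul_le _ _).trans hP.le, (natDegree_C_mul_le _ _).trans hQ.le]
  have hclear : (C (y.den : ℤ) * P - C y.num * Q).map (algebraMap ℤ ℚ)
      = C (y.den : ℚ) * thuePoly y P Q := by
    rw [thuePoly, Polynomial.map_sub, Polynomial.map_mul, Polynomial.map_mul, map_C, map_C, mul_sub,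
      ← mul_assoc, ← C_mul, Rat.den_mul_eq_num]
    simp
  have hfx : eval ((x.num : ℚ) / (x.den : ℤ)) (f.map (algebraMap ℤ ℚ))
      = y.den * (taylor x (thuePoly y P Q)).coeff k := by
    rw [Int.cast_natCast, Rat.num_div_den, map_hasseDeriv, hclear, ← taylor_coeff, taylor_mul,
      taylor_C, coeff_C_mul]
  have h := one_le_pow_mul_abs_eval_div (f := f) (K := ℚ)
    (Int.natCast_pos.2 x.den_pos) (by rw [hfx]; exact mul_ne_zero hy hk)
  rw [hfx, abs_mul, Nat.abs_cast, Int.cast_natCast, ← mul_assoc] at h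
  refine h.trans ?_
  gcongr

lemma thuePoly_map {R S T : Type*} [CommRing R] [CommRing S] [CommRing T] [Algebra R S]
    [Algebra S T] [Algebra R T] [IsScalarTower R S T] (α : T) (P Q : R[X]) :
    thuePoly α (P.map (algebraMap R S)) (Q.map (algebraMap R S)) = thuePoly α P Q := by
  simp only [thuePoly, Polynomial.map_map, ← IsScalarTower.algebraMap_eq]

lemma map_coeff_taylor_thuePoly {R S T : Type*} [CommRing R] [CommRing S] [CommRing T]
    [Algebra R S] [Algebra R T] (φ : S →ₐ[R] T) (x y : S) (P Q : R[X]) (k : ℕ) :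
    φ ((taylor x (thuePoly y P Q)).coeff k)
      = (taylor (φ x) (thuePoly (φ y) P Q)).coeff k := by
  rw [← map_thuePoly]
  exact (coeff_map (φ : S →+* T) k).symm.trans (congrArg (coeff · k) (map_taylor _ _ _))

theorem exists_X_sub_C_pow_dvd_thuePoly_of_isIntegral {L : Type*} [Field L] [CharZero L] {α : L}
    (hα : IsIntegral ℤ α) :
    ∃ A : ℝ, 1 ≤ A ∧ ∀ {s N E : ℕ}, 0 < s → s * (minpoly ℚ α).natDegree < 2 * N →
      s * (minpoly ℚ α).natDegree ≤ E * (2 * N - s * (minpoly ℚ α).natDegree) →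
      ∃ P Q : ℤ[X], (P ≠ 0 ∨ Q ≠ 0) ∧ P.natDegree < N ∧ Q.natDegree < N ∧
        (∀ i, |(P.coeff i : ℝ)| ≤ A ^ (N * E)) ∧ (∀ i, |(Q.coeff i : ℝ)| ≤ A ^ (N * E)) ∧
        (X - C α) ^ s ∣ thuePoly α P Q := by
  have hmin : (minpoly ℤ α).natDegree = (minpoly ℚ α).natDegree := by
    rw [minpoly.isIntegrallyClosed_eq_field_fractions' ℚ hα,
      natDegree_map_eq_of_injective (algebraMap ℤ ℚ).injective_int]
  have : Nonempty (Fin (Algebra.adjoin.powerBasis' hα).dim) := ⟨⟨0, minpoly.natDegree_pos hα⟩⟩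
  obtain ⟨A, hA, h⟩ := exists_X_sub_C_pow_dvd_thuePoly (Algebra.adjoin.powerBasis' hα).basis
    ⟨α, Algebra.self_mem_adjoin_singleton ℤ α⟩
  rw [← hmin]
  refine ⟨A, hA, fun {s N E} hs hlt hE => ?_⟩
  obtain ⟨P, Q, hPQ, hP, hQ, hPA, hQA, hdvd⟩ := h hs (by rwa [Fintype.card_fin])
    (by rwa [Fintype.card_fin])
  refine ⟨P, Q, hPQ, hP, hQ, hPA, hQA, ?_⟩
  have hmap := Polynomial.map_dvd ((Algebra.adjoin ℤ {α}).val : _ →+* L) hdvd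
  rw [map_thuePoly] at hmap
  simpa using hmap

theorem exists_one_le_den_pow_mul_norm_sub_add {α : ℂ} (hα : IsIntegral ℤ α)
    (hα' : α ∉ (algebraMap ℚ ℂ).range) :
    ∃ B : ℝ, 1 ≤ B ∧ ∀ {s N E : ℕ}, 0 < s → s * (minpoly ℚ α).natDegree < 2 * N →
      s * (minpoly ℚ α).natDegree ≤ E * (2 * N - s * (minpoly ℚ α).natDegree) →
      N ≤ s * (minpoly ℚ α).natDegree → ∀ {x : ℚ} (y : ℚ), ‖(x : ℂ) - α‖ ≤ 1 →
      ∃ k, k + (minpoly ℚ α).natDegree * (s - 1) + 2 ≤ 2 * N ∧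
        1 ≤ (x.den : ℝ) ^ (N - k) * y.den *
          (B ^ (N * E) * (‖(x : ℂ) - α‖ ^ (s - k) + ‖(y : ℂ) - α‖)) := by
  obtain ⟨A, hA, haux⟩ := exists_X_sub_C_pow_dvd_thuePoly_of_isIntegral hα
  refine ⟨16 * (2 + ‖α‖) ^ 2 * A, ?_, fun {s N E} hs hlt hE hN x y hx => ?_⟩
  · nlinarith [norm_nonneg α]
  obtain ⟨P, Q, hPQ, hP, hQ, hPA, hQA, hdvd⟩ := haux hs hlt hE
  obtain ⟨k, hk, hne⟩ := exists_coeff_taylor_thuePoly_ne_zero (P := P.map (algebraMap ℤ ℚ))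
    (Q := Q.map (algebraMap ℤ ℚ)) hα.tower_top hα'
    (hPQ.imp (Polynomial.map_ne_zero_iff (algebraMap ℤ ℚ).injective_int).2
      (Polynomial.map_ne_zero_iff (algebraMap ℤ ℚ).injective_int).2)
    (natDegree_map_le.trans_lt hP) (natDegree_map_le.trans_lt hQ) hN (by rwa [thuePoly_map]) x y
  rw [thuePoly_map] at hne
  refine ⟨k, hk, ?_⟩
  have hlower := one_le_den_pow_mul_abs_coeff_taylor_thuePoly hP hQ hne
  have hupper := norm_coeff_taylor_thuePoly_le (𝕜 := ℂ) hP hQ (fun i => by simpa using hPA i)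
    (fun i => by simpa using hQA i) hdvd hx y k
  have hcast : ‖(taylor (x : ℂ) (thuePoly (y : ℂ) P Q)).coeff k‖
      = |((taylor x (thuePoly y P Q)).coeff k : ℝ)| := by
    have h := map_coeff_taylor_thuePoly (IsScalarTower.toAlgHom ℤ ℚ ℂ) x y P Q k
    simp only [eq_ratCast] at h
    rw [← h, ← Complex.ofReal_ratCast, Complex.norm_real, Real.norm_eq_abs]
  have hNE : N ≤ N * E := Nat.le_mul_of_pos_right N <| Nat.pos_of_ne_zero <| by
    rintro rfl
    nlinarith
  calc (1 : ℝ) ≤ x.den ^ (N - k) * y.den * |((taylor x (thuePoly y P Q)).coeff k : ℝ)| := by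
        exact_mod_cast hlower
    _ ≤ x.den ^ (N - k) * y.den * (16 ^ N * (2 + ‖α‖) ^ (N + 1) * A ^ (N * E) *
          (‖(x : ℂ) - α‖ ^ (s - k) + ‖(y : ℂ) - α‖)) := by
        rw [← hcast]
        gcongr
    _ ≤ x.den ^ (N - k) * y.den * (16 ^ (N * E) * (2 + ‖α‖) ^ (2 * (N * E)) * A ^ (N * E) *
          (‖(x : ℂ) - α‖ ^ (s - k) + ‖(y : ℂ) - α‖)) := by
        gcongr
        · norm_num
        · linarith [norm_nonneg α]
        · omega
    _ = _ := by rw [pow_mul _ 2, ← mul_pow, ← mul_pow]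

end Integrality

section Approximation

lemma thue_exponent_le {n e l m k : ℕ} (hn : 2 ≤ n) (he : n + 2 < 2 * e) (hl : l + 5 = 4 * e)
    (hm : e + 3 ≤ m) (hk : k + 2 ≤ 2 * m + n) :
    (n * l + 1) * m - k + 4 * n * (m + 1) + m ≤ e * (2 * l * m - k) := by
  have hks : k ≤ 2 * l * m := by nlinarith
  have hkN : k ≤ (n * l + 1) * m := by nlinarith [Nat.mul_le_mul hn (Nat.le_refl (l * m))]
  zify [hks, hkN] at *
  have hl' : (l : ℤ) = 4 * e - 5 := by linarith
  obtain ⟨d, hd, hnd⟩ : ∃ d : ℤ, 0 ≤ d ∧ (n : ℤ) = 2 * e - 3 - d :=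
    ⟨2 * e - 3 - n, by omega, by ring⟩
  have he' : (3 : ℤ) ≤ e := by omega
  have hk' : ((e : ℤ) - 1) * k ≤ (e - 1) * (2 * m + n - 2) :=
    mul_le_mul_of_nonneg_left (by linarith) (by linarith)
  rw [hl', hnd]
  rw [hnd] at hk'
  nlinarith [mul_nonneg (sub_nonneg.2 hm) (by linarith : (0 : ℤ) ≤ 2 * e - 3),
    mul_nonneg (mul_nonneg hd (by linarith : (0 : ℤ) ≤ m)) (by linarith : (0 : ℤ) ≤ 4 * e - 1),
    mul_nonneg hd (by linarith : (0 : ℤ) ≤ e + 3)]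

lemma pow_mul_pow_add_le {X Y δ ε c : ℝ} {t e m M r : ℕ} (hX : 1 ≤ X) (hc : 0 ≤ c)
    (hXY : X ^ (t * m) ≤ Y) (hYX : Y ≤ X ^ (t * (m + 1))) (hδ₀ : 0 ≤ δ) (hδ : δ ≤ c / X ^ e)
    (hε : ε ≤ c / Y ^ e) (he : e ≠ 0) (hr : M + t * (m + 1) + m ≤ e * r)
    (hM : M + m ≤ t * m * (e - 1)) : X ^ m * (X ^ M * Y * (δ ^ r + ε)) ≤ c ^ r + c := by
  have hX₀ : 0 < X := by linarith
  have hY₀ : 0 < Y := (pow_pos hX₀ _).trans_le hXY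
  have hfst : X ^ (M + m) * Y * δ ^ r ≤ c ^ r := calc
    X ^ (M + m) * Y * δ ^ r ≤ X ^ (M + m) * X ^ (t * (m + 1)) * (c / X ^ e) ^ r := by gcongr
    _ = X ^ (M + t * (m + 1) + m) * (c ^ r / X ^ (e * r)) := by
      rw [div_pow, ← pow_mul]
      ring
    _ ≤ X ^ (e * r) * (c ^ r / X ^ (e * r)) := by gcongr
    _ = c ^ r := mul_div_cancel₀ _ (by positivity)
  have hsnd : X ^ (M + m) * Y * ε ≤ c := calc
    X ^ (M + m) * Y * ε ≤ X ^ (M + m) * Y * (c / Y ^ e) := by gcongr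
    _ ≤ X ^ (t * m * (e - 1)) * Y * (c / Y ^ e) := by gcongr
    _ ≤ Y ^ (e - 1) * Y * (c / Y ^ e) := by
      rw [pow_mul]
      gcongr
    _ = c := by rw [pow_sub_one_mul he, mul_div_cancel₀ _ (by positivity)]
  calc X ^ m * (X ^ M * Y * (δ ^ r + ε))
      = X ^ (M + m) * Y * δ ^ r + X ^ (M + m) * Y * ε := by ring
    _ ≤ c ^ r + c := add_le_add hfst hsnd

lemma exists_den_pow_le_of_norm_sub_le {α : ℂ} (hα : IsIntegral ℤ α)
    (hα' : α ∉ (algebraMap ℚ ℂ).range) {e : ℕ} (he : (minpoly ℚ α).natDegree + 2 < 2 * e)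
    {c : ℝ} (hc : 1 ≤ c) :
    ∃ A : ℝ, 0 ≤ A ∧ ∀ {m : ℕ} {x y : ℚ}, e + 3 ≤ m → c ≤ x.den →
      x.den ^ (4 * (minpoly ℚ α).natDegree * m) ≤ y.den →
      y.den ≤ x.den ^ (4 * (minpoly ℚ α).natDegree * (m + 1)) →
      ‖(x : ℂ) - α‖ ≤ c / x.den ^ e → ‖(y : ℂ) - α‖ ≤ c / y.den ^ e →
      (x.den : ℝ) ^ m ≤ 2 * A ^ m := by
  obtain ⟨B, hB, hlower⟩ := exists_one_le_den_pow_mul_norm_sub_add hα hα'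
  have hn := (minpoly.two_le_natDegree_iff hα.tower_top).2 hα'
  set n := (minpoly ℚ α).natDegree
  obtain ⟨l, hl⟩ : ∃ l, l + 5 = 4 * e := ⟨4 * e - 5, by omega⟩
  refine ⟨B ^ ((n * l + 1) * (n * l)) * c ^ (2 * l), by positivity,
    fun {m x y} hm hcx hXY hYX hx hy => ?_⟩
  have hlm : 0 < l * m := Nat.mul_pos (by omega) (by omega)
  have hsN : 2 * ((n * l + 1) * m) - 2 * l * m * n = 2 * m := by
    rw [Nat.sub_eq_iff_eq_add (by nlinarith)]
    ring
  obtain ⟨k, hk, hone⟩ := hlower (s := 2 * l * m) (N := (n * l + 1) * m) (E := n * l)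
    (by linarith) (by nlinarith) (by rw [hsN]; exact le_of_eq (by ring)) (by nlinarith)
    y (hx.trans (div_le_one_of_le₀ (hcx.trans (le_self_pow₀ (hc.trans hcx) (by omega)))
      (by positivity)))
  replace hk : k + 2 ≤ 2 * m + n := by
    rw [Nat.mul_sub_one] at hk
    have := Nat.sub_add_cancel (Nat.le_mul_of_pos_right n (by linarith : 0 < 2 * l * m))
    linarith
  have hNk : (n * l + 1) * m - k + m ≤ 4 * n * m * (e - 1) := calc
    (n * l + 1) * m - k + m ≤ (n * l + 1) * m + m := by gcongr; exact Nat.sub_le _ _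
    _ ≤ n * m * (l + 1) := by nlinarith
    _ = 4 * n * m * (e - 1) := by
      rw [show l + 1 = 4 * (e - 1) by omega]
      ring
  have hupper := pow_mul_pow_add_le (by linarith) (by linarith) (by exact_mod_cast hXY)
    (by exact_mod_cast hYX) (norm_nonneg _) hx hy (by omega)
    (thue_exponent_le hn he hl hm hk) hNk
  set r := 2 * l * m - k
  calc (x.den : ℝ) ^ m
      ≤ x.den ^ m * (x.den ^ ((n * l + 1) * m - k) * y.den *
          (B ^ ((n * l + 1) * m * (n * l)) * (‖(x : ℂ) - α‖ ^ r + ‖(y : ℂ) - α‖))) :=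
        le_mul_of_one_le_right (by positivity) hone
    _ = B ^ ((n * l + 1) * m * (n * l)) * (x.den ^ m * (x.den ^ ((n * l + 1) * m - k) * y.den *
          (‖(x : ℂ) - α‖ ^ r + ‖(y : ℂ) - α‖))) := by ring
    _ ≤ B ^ ((n * l + 1) * m * (n * l)) * (c ^ r + c) := by gcongr
    _ ≤ B ^ ((n * l + 1) * m * (n * l)) * (c ^ (2 * l * m) + c ^ (2 * l * m)) := by
      gcongr
      · exact Nat.sub_le _ _
      · exact le_self_pow₀ hc (by linarith)
    _ = 2 * (B ^ ((n * l + 1) * (n * l)) * c ^ (2 * l)) ^ m := by ring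

lemma exists_den_lt_pow_of_norm_sub_le {α : ℂ} (hα : IsIntegral ℤ α)
    (hα' : α ∉ (algebraMap ℚ ℂ).range) {e : ℕ} (he : (minpoly ℚ α).natDegree + 2 < 2 * e)
    (c : ℝ) :
    ∃ X₀ t : ℕ, ∀ x y : ℚ, X₀ < x.den → ‖(x : ℂ) - α‖ ≤ c / x.den ^ e →
      ‖(y : ℂ) - α‖ ≤ c / y.den ^ e → y.den < x.den ^ t := by
  wlog hc : 1 ≤ c generalizing c
  · obtain ⟨X₀, t, h⟩ := this 1 le_rfl
    have hweaken {z : ℚ} (hz : ‖(z : ℂ) - α‖ ≤ c / z.den ^ e) : ‖(z : ℂ) - α‖ ≤ 1 / z.den ^ e :=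
      hz.trans (by gcongr; exact (not_le.1 hc).le)
    exact ⟨X₀, t, fun x y hX hx hy => h x y hX (hweaken hx) (hweaken hy)⟩
  obtain ⟨A, hA₀, hA⟩ := exists_den_pow_le_of_norm_sub_le hα hα' he hc
  have hn := (minpoly.two_le_natDegree_iff hα.tower_top).2 hα'
  set n := (minpoly ℚ α).natDegree
  refine ⟨⌈c + 2 * A⌉₊, 4 * n * (e + 3), fun x y hX hx hy => ?_⟩
  have hcAX : c + 2 * A < x.den := Nat.lt_of_ceil_lt hX
  by_contra! hYX
  have hX1 : 1 < x.den ^ (4 * n) :=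
    Nat.one_lt_pow (by omega) (by exact_mod_cast (show (1 : ℝ) < x.den by linarith))
  set m := Nat.log (x.den ^ (4 * n)) y.den
  have hm : e + 3 ≤ m := Nat.le_log_of_pow_le hX1 (by rwa [← pow_mul])
  have hle : (x.den : ℝ) ^ m ≤ 2 * A ^ m := hA hm (by linarith)
    (by rw [pow_mul]; exact Nat.pow_log_le_self _ y.den_ne_zero)
    (by rw [pow_mul]; exact (Nat.lt_pow_succ_log_self hX1 _).le) hx hy
  refine hle.not_gt ?_
  calc 2 * A ^ m ≤ 2 ^ m * A ^ m := by
        gcongr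
        exact le_self_pow₀ one_le_two (by omega)
    _ = (2 * A) ^ m := (mul_pow _ _ _).symm
    _ < (x.den : ℝ) ^ m := pow_lt_pow_left₀ (by linarith) (by positivity) (by omega)

lemma finite_setOf_den_le_and_norm_sub_le (α : ℂ) (N : ℕ) (c : ℝ) :
    {x : ℚ | x.den ≤ N ∧ ‖(x : ℂ) - α‖ ≤ c}.Finite := by
  let K := ⌈(c + ‖α‖) * N⌉
  refine Set.Finite.of_injOn (f := fun x : ℚ => (x.num, x.den)) (t := Set.Icc (-K) K ×ˢ Set.Iic N)
    (fun x ⟨hxN, hx⟩ => ⟨?_, hxN⟩) (fun x _ y _ hxy => Rat.ext (congrArg Prod.fst hxy)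
      (congrArg Prod.snd hxy)) ((Set.finite_Icc _ _).prod (Set.finite_Iic _))
  have habs : |(x : ℝ)| ≤ c + ‖α‖ := by
    have := norm_le_norm_sub_add (x : ℂ) α
    rw [Complex.norm_ratCast] at this
    linarith
  have hnum : |(x.num : ℝ)| ≤ (c + ‖α‖) * N := calc
    |(x.num : ℝ)| = |(x : ℝ)| * x.den := by
      rw [← Nat.abs_cast, ← abs_mul]
      exact_mod_cast congrArg abs (congrArg (Rat.cast : ℚ → ℝ) x.mul_den_eq_num).symm
    _ ≤ (c + ‖α‖) * N := by gcongr; exact (abs_nonneg _).trans habs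
  exact abs_le.1 (by exact_mod_cast hnum.trans (Int.le_ceil _) : |x.num| ≤ K)

lemma finite_setOf_norm_sub_le_of_isIntegral {α : ℂ} (hα : IsIntegral ℤ α)
    (hα' : α ∉ (algebraMap ℚ ℂ).range) {e : ℕ} (he : (minpoly ℚ α).natDegree + 2 < 2 * e)
    (c : ℝ) : {x : ℚ | ‖(x : ℂ) - α‖ ≤ c / x.den ^ e}.Finite := by
  have hbdd {N : ℕ} (hN : ∀ x : ℚ, ‖(x : ℂ) - α‖ ≤ c / x.den ^ e → x.den ≤ N) :
      {x : ℚ | ‖(x : ℂ) - α‖ ≤ c / x.den ^ e}.Finite :=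
    (finite_setOf_den_le_and_norm_sub_le α N |c|).subset fun x hx =>
      ⟨hN x hx, hx.trans <| (div_le_div_of_nonneg_right (le_abs_self c) (by positivity)).trans <|
        div_le_self (abs_nonneg c) (one_le_pow₀ (by exact_mod_cast x.pos))⟩
  obtain ⟨X₀, t, hgap⟩ := exists_den_lt_pow_of_norm_sub_le hα hα' he c
  by_cases! hX : ∀ x : ℚ, ‖(x : ℂ) - α‖ ≤ c / x.den ^ e → x.den ≤ X₀
  · exact hbdd hX
  · obtain ⟨x, hx, hxX⟩ := hX
    exact hbdd fun y hy => (hgap x y hxX hx hy).le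

lemma finite_setOf_norm_sub_le_of_isAlgebraic {α : ℂ} (hα : IsAlgebraic ℚ α)
    (hα' : α ∉ (algebraMap ℚ ℂ).range) {e : ℕ} (he : (minpoly ℚ α).natDegree + 2 < 2 * e)
    (c : ℝ) : {x : ℚ | ‖(x : ℂ) - α‖ ≤ c / x.den ^ e}.Finite := by
  obtain ⟨d, hd, hdα⟩ := ((IsFractionRing.isAlgebraic_iff ℤ ℚ ℂ).2 hα).exists_integral_multiple
  rw [zsmul_eq_mul] at hdα
  have hd' : (d : ℚ) ≠ 0 := Int.cast_ne_zero.2 hd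
  have hrange : (d : ℂ) * α ∉ (algebraMap ℚ ℂ).range := by
    rintro ⟨q, hq⟩
    refine hα' ⟨q / d, ?_⟩
    rw [map_div₀, hq, map_intCast, mul_div_cancel_left₀ _ (Int.cast_ne_zero.2 hd)]
  have hdeg : (minpoly ℚ (d * α)).natDegree ≤ (minpoly ℚ α).natDegree := by
    rw [← natDegree_scaleRoots (minpoly ℚ α) d]
    refine natDegree_le_natDegree (minpoly.min ℚ _ ?_ ?_)
    · exact (monic_scaleRoots_iff _).2 (minpoly.monic hα.isIntegral)
    · simpa using scaleRoots_aeval_eq_zero (r := (d : ℚ)) (minpoly.aeval ℚ α)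
  refine Set.Finite.of_injOn (f := fun x : ℚ => (d : ℚ) * x) (fun x hx => ?_)
    (mul_right_injective₀ hd').injOn
    (finite_setOf_norm_sub_le_of_isIntegral hdα hrange (e := e) (by omega) (|(d : ℝ)| * |c|))
  have hden : ((d : ℚ) * x).den ≤ x.den :=
    Nat.le_of_dvd x.pos (by simpa using Rat.mul_den_dvd (d : ℚ) x)
  calc ‖(((d : ℚ) * x : ℚ) : ℂ) - d * α‖ = |(d : ℝ)| * ‖(x : ℂ) - α‖ := by
        rw [← Complex.norm_intCast, ← norm_mul]
        push_cast
        ring_nf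
    _ ≤ |(d : ℝ)| * (|c| / x.den ^ e) := by
        gcongr
        exact hx.trans (by gcongr; exact le_abs_self c)
    _ ≤ |(d : ℝ)| * |c| / ((d : ℚ) * x).den ^ e := by
        rw [mul_div_assoc]
        gcongr

end Approximation

section ThueEquation

lemma exists_mem_norm_sub_le_mul_norm_eval_nodal {K : Type*} [NormedField K] {s : Finset K}
    (hs : s.Nonempty) :
    ∃ c : ℝ, 0 ≤ c ∧ ∀ z : K, ∃ α ∈ s, ‖z - α‖ ≤ c * ‖(Lagrange.nodal s id).eval z‖ := by
  classical
  refine ⟨∑ i ∈ s, ‖Lagrange.nodalWeight s id i‖, by positivity, fun z => ?_⟩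
  obtain ⟨α, hα, hmin⟩ := s.exists_min_image (fun i => ‖z - i‖) hs
  refine ⟨α, hα, ?_⟩
  by_cases hz : z ∈ s
  · exact (hmin z hz).trans (by rw [sub_self, norm_zero]; positivity)
  have hne : ∀ i ∈ s, z ≠ id i := fun i hi => (ne_of_mem_of_not_mem hi hz).symm
  have hpos {i : K} (hi : i ∈ s) : 0 < ‖z - i‖ := norm_pos_iff.2 (sub_ne_zero.2 (hne i hi))
  have hlagrange := Lagrange.eval_interpolate_not_at_node 1 hne
  simp only [Lagrange.interpolate_one Function.injective_id.injOn hs, eval_one, Pi.one_apply,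
    mul_one, id] at hlagrange
  have hsum : ‖∑ i ∈ s, Lagrange.nodalWeight s id i * (z - i)⁻¹‖ ≤
      (∑ i ∈ s, ‖Lagrange.nodalWeight s id i‖) * ‖z - α‖⁻¹ := by
    rw [Finset.sum_mul]
    refine norm_sum_le_of_le _ fun i hi => ?_
    rw [norm_mul, norm_inv]
    gcongr
    exacts [hpos hα, hmin i hi]
  rw [← one_mul ‖z - α‖, ← le_div_iff₀ (hpos hα), div_eq_mul_inv, ← norm_one (α := K), hlagrange,
    norm_mul, mul_comm, mul_right_comm]
  gcongr

lemma exists_isRoot_norm_sub_le_mul_norm_eval {K : Type*} [NormedField K] {p : K[X]}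
    (hp : p.Splits) (hsep : p.Separable) (hdeg : p.natDegree ≠ 0) :
    ∃ c : ℝ, 0 ≤ c ∧ ∀ z : K, ∃ α, p.IsRoot α ∧ ‖z - α‖ ≤ c * ‖p.eval z‖ := by
  classical
  have hp₀ : p ≠ 0 := hsep.ne_zero
  have hlc : p.leadingCoeff ≠ 0 := leadingCoeff_ne_zero.2 hp₀
  have hnodal (z : K) :
      p.eval z = p.leadingCoeff * (Lagrange.nodal p.roots.toFinset id).eval z := by
    rw [hp.eval_eq_prod_roots, Lagrange.eval_nodal, Finset.prod,
      Multiset.toFinset_val, (nodup_roots hsep).dedup]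
    rfl
  have hroots : p.roots.toFinset.Nonempty := by
    obtain ⟨α, hα⟩ := hp.exists_eval_eq_zero (degree_ne_of_natDegree_ne hdeg)
    exact ⟨α, by simpa [hp₀] using hα⟩
  obtain ⟨c, hc, h⟩ := exists_mem_norm_sub_le_mul_norm_eval_nodal hroots
  refine ⟨c * ‖p.leadingCoeff‖⁻¹, by positivity, fun z => ?_⟩
  obtain ⟨α, hα, hzα⟩ := h z
  refine ⟨α, isRoot_of_mem_roots (Multiset.mem_toFinset.1 hα), hzα.trans_eq ?_⟩
  rw [hnodal, norm_mul, mul_assoc, inv_mul_cancel_left₀ (norm_ne_zero_iff.2 hlc)]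

lemma finite_setOf_abs_eval_le {f : ℚ[X]} (hf : Irreducible f) (hn : 3 ≤ f.natDegree) (c : ℝ) :
    {x : ℚ | |((f.eval x : ℚ) : ℝ)| ≤ c / x.den ^ f.natDegree}.Finite := by
  have heval (x : ℚ) : (f.map (algebraMap ℚ ℂ)).eval (x : ℂ) = (f.eval x : ℚ) :=
    eval_map_apply (algebraMap ℚ ℂ) x
  obtain ⟨C, hC, hroot⟩ := exists_isRoot_norm_sub_le_mul_norm_eval
    (IsAlgClosed.splits (f.map (algebraMap ℚ ℂ))) hf.separable.map (by simp; omega)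
  refine ((f.aroots ℂ).toFinset.finite_toSet.biUnion (t := fun α =>
    {x : ℚ | ‖(x : ℂ) - α‖ ≤ C * c / x.den ^ f.natDegree}) fun α hα => ?_).subset fun x hx => ?_
  · have hfα : aeval α f = 0 := by simpa [hf.ne_zero] using hα
    have hmin : (minpoly ℚ α).natDegree = f.natDegree := by
      rw [← minpoly.eq_of_irreducible hf hfα, natDegree_mul_C]
      simpa using hf.ne_zero
    have hα' : IsAlgebraic ℚ α := ⟨f, hf.ne_zero, hfα⟩
    refine finite_setOf_norm_sub_le_of_isAlgebraic hα' ?_ (by omega) _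
    rw [← minpoly.two_le_natDegree_iff hα'.isIntegral]
    omega
  · obtain ⟨α, hα, hxα⟩ := hroot x
    rw [heval, Complex.norm_ratCast] at hxα
    refine Set.mem_biUnion (x := α) (by simpa [hf.ne_zero] using hα) (hxα.trans ?_)
    rw [mul_div_assoc]
    exact mul_le_mul_of_nonneg_left hx hC

lemma finite_setOf_mul_pow_eq {R : Type*} [CommRing R] [IsDomain R] {c : R} (hc : c ≠ 0) {n : ℕ}
    (hn : n ≠ 0) (m : R) : {x : R | c * x ^ n = m}.Finite := by
  have hp : C c * X ^ n - C m ≠ 0 := fun h =>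
    hc (by simpa [coeff_C, hn] using congrArg (coeff · n) h)
  refine (finite_setOfPred_isRoot hp).subset fun x hx => ?_
  simpa [sub_eq_zero] using hx

lemma intCast_eval_homogenize {K : Type*} [Field K] {f : ℤ[X]} {n : ℕ} (hn : f.natDegree ≤ n)
    (x : Fin 2 → ℤ) (hx : (x 1 : K) ≠ 0) :
    ((MvPolynomial.eval x (f.homogenize n) : ℤ) : K) =
      (f.map (Int.castRingHom K)).eval (x 0 / x 1 : K) * x 1 ^ n := by
  rw [← eq_intCast (Int.castRingHom K), MvPolynomial.map_eval, ← homogenize_map,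
    eval_homogenize (natDegree_map_le.trans hn) _ hx]
  rfl

lemma eval_homogenize_of_eq_zero {R : Type*} [CommSemiring R] (f : R[X]) (n : ℕ) {x : Fin 2 → R}
    (hx : x 1 = 0) : MvPolynomial.eval x (f.homogenize n) = f.coeff n * x 0 ^ n := by
  rw [homogenize, map_sum, Finset.sum_eq_single (n, 0)]
  · simp [MvPolynomial.eval_monomial, Finsupp.prod_fintype]
  · rintro ⟨i, j⟩ hij hne
    have hj : j ≠ 0 := by
      rintro rfl
      simp_all
    simp [MvPolynomial.eval_monomial, Finsupp.prod_fintype, hx, hj]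
  · simp

lemma finite_setOf_eval_homogenize_eq_of_ne_zero {f : ℤ[X]}
    (hf : Irreducible (f.map (Int.castRingHom ℚ))) (hn : 3 ≤ f.natDegree) (m : ℤ) :
    {x : Fin 2 → ℤ | x 1 ≠ 0 ∧ MvPolynomial.eval x (f.homogenize f.natDegree) = m}.Finite := by
  have hdeg : (f.map (Int.castRingHom ℚ)).natDegree = f.natDegree :=
    natDegree_map_eq_of_injective Int.cast_injective f
  refine Set.Finite.of_finite_fibers (fun x => (x 0 / x 1 : ℚ))
    ((finite_setOf_abs_eval_le hf (hdeg ▸ hn) |(m : ℝ)|).subset ?_) ?_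
  · rintro _ ⟨x, ⟨hx, hxm⟩, rfl⟩
    have hx' : (x 1 : ℚ) ≠ 0 := Int.cast_ne_zero.2 hx
    have hxm' := intCast_eval_homogenize (f := f) le_rfl x hx'
    have hden : ((x 0 / x 1 : ℚ).den : ℝ) ≤ |(x 1 : ℝ)| := by
      have := Int.le_of_dvd (abs_pos.2 hx) ((dvd_abs _ _).2 (Rat.den_dvd (x 0) (x 1)))
      rw [Rat.divInt_eq_div] at this
      exact_mod_cast this
    rw [hxm, ← div_eq_iff (pow_ne_zero _ hx')] at hxm'
    rw [Set.mem_ofPred_eq, ← hxm', hdeg, Rat.cast_div, abs_div]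
    push_cast
    rw [abs_pow]
    gcongr
  · rintro q -
    have hq : (f.map (Int.castRingHom ℚ)).eval q ≠ 0 := fun hq => by
      have h1 : _ = 1 :=
        natDegree_eq_of_degree_eq_some (degree_eq_one_of_irreducible_of_root hf hq)
      omega
    refine Set.Finite.of_injOn (f := fun x : Fin 2 → ℤ => (x 1 : ℚ)) ?_ ?_
      (finite_setOf_mul_pow_eq hq (n := f.natDegree) (by omega) (m : ℚ))
    · rintro x ⟨⟨hx, hxm⟩, rfl⟩
      rw [Set.mem_ofPred_eq, ← hxm, intCast_eval_homogenize le_rfl x (Int.cast_ne_zero.2 hx)]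
    · rintro x ⟨-, hxq⟩ y ⟨⟨hy, -⟩, hyq⟩ hxy
      have h1 : x 1 = y 1 := Int.cast_injective hxy
      have hxy' : (x 0 / x 1 : ℚ) = y 0 / y 1 := hxq.trans hyq.symm
      rw [h1, div_left_inj' (Int.cast_ne_zero.2 hy)] at hxy'
      exact funext (Fin.forall_fin_two.2 ⟨Int.cast_injective hxy', h1⟩)

theorem finite_setOf_eval_homogenize_eq {f : ℤ[X]} (hf : Irreducible (f.map (Int.castRingHom ℚ)))
    (hn : 3 ≤ f.natDegree) (m : ℤ) :
    {x : Fin 2 → ℤ | MvPolynomial.eval x (f.homogenize f.natDegree) = m}.Finite := by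
  have hzero : {x : Fin 2 → ℤ | x 1 = 0 ∧
      MvPolynomial.eval x (f.homogenize f.natDegree) = m}.Finite := by
    have hlc : f.leadingCoeff ≠ 0 := by
      rw [leadingCoeff_ne_zero]
      rintro rfl
      simp at hn
    refine Set.Finite.of_injOn (f := fun x : Fin 2 → ℤ => x 0) ?_ ?_
      (finite_setOf_mul_pow_eq hlc (n := f.natDegree) (by omega) m)
    · rintro x ⟨hx, hxm⟩
      rwa [eval_homogenize_of_eq_zero f _ hx] at hxm
    · rintro x ⟨hx, -⟩ y ⟨hy, -⟩ hxy
      exact funext (Fin.forall_fin_two.2 ⟨hxy, hx.trans hy.symm⟩)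
  refine (hzero.union (finite_setOf_eval_homogenize_eq_of_ne_zero hf hn m)).subset fun x hx => ?_
  obtain h | h := eq_or_ne (x 1) 0
  exacts [Or.inl ⟨h, hx⟩, Or.inr ⟨h, hx⟩]

end ThueEquation

section QuadraticReduction

open scoped MatrixGroups

/-- The value at `(x, y)` of the binary quadratic form with coefficients `A`, `B`, `C`. -/
def binaryQuadratic {R : Type*} [Semiring R] (A B C x y : R) : R :=
  A * x ^ 2 + B * x * y + C * y ^ 2

lemma binaryQuadratic_parallelogram {R : Type*} [CommRing R] (A B C x y z w : R) :
    binaryQuadratic A B C (x + z) (y + w) + binaryQuadratic A B C (x - z) (y - w) =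
      2 * (binaryQuadratic A B C x y + binaryQuadratic A B C z w) := by
  simp only [binaryQuadratic]
  ring

lemma binaryQuadratic_mul_mul {R : Type*} [CommSemiring R] (A B C x y u : R) :
    binaryQuadratic A B C (x * u) (y * u) = binaryQuadratic A B C x y * u ^ 2 := by
  simp only [binaryQuadratic]
  ring

lemma binaryQuadratic_nonneg {A B C : ℝ} (hC : 0 < C) (hD : 0 ≤ 4 * A * C - B ^ 2) (x y : ℝ) :
    0 ≤ binaryQuadratic A B C x y := by
  have hsq : 4 * C * binaryQuadratic A B C x y =
      (2 * C * y + B * x) ^ 2 + (4 * A * C - B ^ 2) * x ^ 2 := by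
    simp only [binaryQuadratic]
    ring
  refine nonneg_of_mul_nonneg_right (a := 4 * C) ?_ (by positivity)
  rw [hsq]
  positivity

lemma exists_upperHalfPlane_binaryQuadratic_eq {A B C : ℝ} (hC : 0 < C)
    (hD : 0 < 4 * A * C - B ^ 2) :
    ∃ τ : UpperHalfPlane, (2 * C * τ.im) ^ 2 = 4 * A * C - B ^ 2 ∧
      ∀ x y : ℝ, binaryQuadratic A B C x y = C * Complex.normSq (x * τ + y) := by
  obtain ⟨s, hs, hsD⟩ : ∃ s : ℝ, 0 < s ∧ s ^ 2 = 4 * A * C - B ^ 2 :=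
    ⟨√(4 * A * C - B ^ 2), Real.sqrt_pos.2 hD, Real.sq_sqrt hD.le⟩
  refine ⟨⟨⟨B / (2 * C), s / (2 * C)⟩, by positivity⟩, ?_, fun x y => ?_⟩
  · rw [UpperHalfPlane.mk_im, mul_div_cancel₀ _ (by positivity), hsD]
  · simp only [binaryQuadratic, Complex.normSq_apply, Complex.add_re, Complex.add_im,
      Complex.mul_re, Complex.mul_im, Complex.ofReal_re, Complex.ofReal_im]
    field_simp
    linear_combination (-x ^ 2) * hsD

lemma normSq_le_of_mem_fd {τ : UpperHalfPlane} (hτ : τ ∈ ModularGroup.fd) :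
    Complex.normSq τ ≤ 4 / 3 * τ.im ^ 2 := by
  have him := ModularGroup.three_le_four_mul_im_sq_of_mem_fd hτ
  have hre : τ.re ^ 2 ≤ (1 / 2) ^ 2 := sq_le_sq' (abs_le.1 hτ.2).1 (abs_le.1 hτ.2).2
  rw [Complex.normSq_apply, UpperHalfPlane.coe_re, UpperHalfPlane.coe_im]
  linarith

lemma exists_normSq_mul_normSq_le (τ : UpperHalfPlane) :
    ∃ g : SL(2, ℤ), Complex.normSq (g 0 0 * τ + g 0 1) * Complex.normSq (g 1 0 * τ + g 1 1) ≤
      4 / 3 * τ.im ^ 2 := by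
  obtain ⟨g, hg⟩ := ModularGroup.exists_smul_mem_fd τ
  refine ⟨g, ?_⟩
  set z : ℂ := g 1 0 * τ + g 1 1 with hz
  have hdenom : UpperHalfPlane.denom g τ = z := ModularGroup.denom_apply g τ
  have hz₀ : z ≠ 0 := hdenom ▸ UpperHalfPlane.denom_ne_zero g τ
  have hnum : (g 0 0 * τ + g 0 1 : ℂ) = ↑(g • τ) * z := by
    rw [UpperHalfPlane.specialLinearGroup_apply]
    simp [hz₀, ← hz]
  have him : (g • τ).im * Complex.normSq z = τ.im := by
    rw [ModularGroup.im_smul_eq_div_normSq, hdenom,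
      div_mul_cancel₀ _ (Complex.normSq_pos.2 hz₀).ne']
  calc Complex.normSq (g 0 0 * τ + g 0 1) * Complex.normSq z
      = Complex.normSq ↑(g • τ) * Complex.normSq z ^ 2 := by rw [hnum, Complex.normSq_mul]; ring
    _ ≤ 4 / 3 * (g • τ).im ^ 2 * Complex.normSq z ^ 2 := by gcongr; exact normSq_le_of_mem_fd hg
    _ = 4 / 3 * τ.im ^ 2 := by rw [← him]; ring

lemma exists_binaryQuadratic_mul_le {A B C : ℝ} (hC : 0 < C) (hD : 0 < 4 * A * C - B ^ 2) :
    ∃ g : SL(2, ℤ), binaryQuadratic A B C (g 0 0) (g 0 1) *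
      binaryQuadratic A B C (g 1 0) (g 1 1) ≤ (4 * A * C - B ^ 2) / 3 := by
  obtain ⟨τ, hτ, hQ⟩ := exists_upperHalfPlane_binaryQuadratic_eq hC hD
  obtain ⟨g, hg⟩ := exists_normSq_mul_normSq_le τ
  refine ⟨g, ?_⟩
  calc binaryQuadratic A B C (g 0 0) (g 0 1) * binaryQuadratic A B C (g 1 0) (g 1 1)
      = C ^ 2 * (Complex.normSq (g 0 0 * τ + g 0 1) * Complex.normSq (g 1 0 * τ + g 1 1)) := by
        simp only [hQ, Complex.ofReal_intCast]
        ring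
    _ ≤ C ^ 2 * (4 / 3 * τ.im ^ 2) := by gcongr
    _ = (4 * A * C - B ^ 2) / 3 := by rw [← hτ]; ring

lemma exists_binaryQuadratic_le {A B C : ℝ} (hD : 0 < 4 * A * C - B ^ 2)
    (hone : ∀ x y : ℤ, ¬(x = 0 ∧ y = 0) → 1 ≤ binaryQuadratic A B C (x : ℝ) y) :
    ∃ g : SL(2, ℤ), ∀ u v : ℤ, binaryQuadratic A B C
      ((g 0 0 * u + g 1 0 * v : ℤ) : ℝ) ((g 0 1 * u + g 1 1 * v : ℤ) : ℝ) ≤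
        2 * (4 * A * C - B ^ 2) / 3 * (u ^ 2 + v ^ 2) := by
  have hC : 1 ≤ C := by simpa [binaryQuadratic] using hone 0 1
  obtain ⟨g, hg⟩ := exists_binaryQuadratic_mul_le (one_pos.trans_le hC) hD
  have hdet := g.det_coe
  rw [Matrix.det_fin_two] at hdet
  have h₀ := hone (g 0 0) (g 0 1) fun h => by simp [h] at hdet
  have h₁ := hone (g 1 0) (g 1 1) fun h => by simp [h] at hdet
  refine ⟨g, fun u v => ?_⟩
  have hpar := binaryQuadratic_parallelogram A B C (g 0 0 * u : ℝ) (g 0 1 * u) (g 1 0 * v)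
    (g 1 1 * v)
  have hsub := binaryQuadratic_nonneg (one_pos.trans_le hC) hD.le
    (g 0 0 * u - g 1 0 * v) (g 0 1 * u - g 1 1 * v)
  rw [binaryQuadratic_mul_mul, binaryQuadratic_mul_mul] at hpar
  push_cast
  calc _ ≤ 2 * (binaryQuadratic A B C (g 0 0) (g 0 1) * u ^ 2 +
        binaryQuadratic A B C (g 1 0) (g 1 1) * v ^ 2) := by linarith
    _ ≤ 2 * ((4 * A * C - B ^ 2) / 3 * u ^ 2 + (4 * A * C - B ^ 2) / 3 * v ^ 2) := by
      gcongr
      · exact (le_mul_of_one_le_right (by positivity) h₁).trans hg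
      · exact (le_mul_of_one_le_left (by positivity) h₀).trans hg
    _ = _ := by ring

end QuadraticReduction

section BinaryCubicForms

open scoped MatrixGroups

section Basic

variable {R : Type*} [CommRing R]

/-- The value at `(x, y)` of the binary cubic form whose dehomogenization at `y = 1` is `P`. -/
def cubicForm (P : Cubic R) (x y : R) : R :=
  P.a * x ^ 3 + P.b * x ^ 2 * y + P.c * x * y ^ 2 + P.d * y ^ 3

/-- The Hessian covariant of a binary cubic form, normalized (up to the factor `-1/4`) so that its
leading coefficient is `b ^ 2 - 3 * a * c`. -/
def hessianForm (P : Cubic R) (x y : R) : R :=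
  binaryQuadratic (P.b ^ 2 - 3 * P.a * P.c) (P.b * P.c - 9 * P.a * P.d)
    (P.c ^ 2 - 3 * P.b * P.d) x y

/-- The left action of `2 × 2` matrices on binary cubic forms by linear substitution: the value of
the new form at a row vector `v` is the value of `P` at `v * g`. -/
def cubicSubst (P : Cubic R) (g : Matrix (Fin 2) (Fin 2) R) : Cubic R where
  a := cubicForm P (g 0 0) (g 0 1)
  b := 3 * P.a * g 0 0 ^ 2 * g 1 0 + P.b * (g 0 0 ^ 2 * g 1 1 + 2 * g 0 0 * g 0 1 * g 1 0) +
    P.c * (2 * g 0 0 * g 0 1 * g 1 1 + g 0 1 ^ 2 * g 1 0) + 3 * P.d * g 0 1 ^ 2 * g 1 1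
  c := 3 * P.a * g 0 0 * g 1 0 ^ 2 + P.b * (g 0 1 * g 1 0 ^ 2 + 2 * g 0 0 * g 1 0 * g 1 1) +
    P.c * (2 * g 0 1 * g 1 0 * g 1 1 + g 0 0 * g 1 1 ^ 2) + 3 * P.d * g 0 1 * g 1 1 ^ 2
  d := cubicForm P (g 1 0) (g 1 1)

/-- A binary cubic form is anisotropic if it has no zeros except the origin. -/
def IsAnisotropicCubic (P : Cubic R) : Prop :=
  ∀ x y : R, cubicForm P x y = 0 → x = 0 ∧ y = 0

lemma cubicForm_cubicSubst (P : Cubic R) (g : Matrix (Fin 2) (Fin 2) R) (x y : R) :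
    cubicForm (cubicSubst P g) x y =
      cubicForm P (g 0 0 * x + g 1 0 * y) (g 0 1 * x + g 1 1 * y) := by
  simp only [cubicForm, cubicSubst]
  ring

lemma hessianForm_cubicSubst (P : Cubic R) (g : Matrix (Fin 2) (Fin 2) R) (x y : R) :
    hessianForm (cubicSubst P g) x y =
      g.det ^ 2 * hessianForm P (g 0 0 * x + g 1 0 * y) (g 0 1 * x + g 1 1 * y) := by
  simp only [hessianForm, binaryQuadratic, cubicForm, cubicSubst, Matrix.det_fin_two]
  ring

lemma exists_forms_cubicSubst_eq (P : Cubic R) (g : SL(2, R)) (x y : R) :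
    ∃ u v, cubicForm (cubicSubst P g) u v = cubicForm P x y ∧
      hessianForm (cubicSubst P g) u v = hessianForm P x y := by
  have hdet := g.det_coe
  rw [Matrix.det_fin_two] at hdet
  have hx : g 0 0 * (g 1 1 * x - g 1 0 * y) + g 1 0 * (g 0 0 * y - g 0 1 * x) = x := by
    linear_combination x * hdet
  have hy : g 0 1 * (g 1 1 * x - g 1 0 * y) + g 1 1 * (g 0 0 * y - g 0 1 * x) = y := by
    linear_combination y * hdet
  refine ⟨g 1 1 * x - g 1 0 * y, g 0 0 * y - g 0 1 * x, ?_, ?_⟩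
  · rw [cubicForm_cubicSubst, hx, hy]
  · rw [hessianForm_cubicSubst, hx, hy, g.det_coe, one_pow, one_mul]

lemma IsAnisotropicCubic.subst {P : Cubic R} (hP : IsAnisotropicCubic P) (g : SL(2, R)) :
    IsAnisotropicCubic (cubicSubst P g) := by
  intro x y hxy
  rw [cubicForm_cubicSubst] at hxy
  obtain ⟨h₁, h₂⟩ := hP _ _ hxy
  have hdet := g.det_coe
  rw [Matrix.det_fin_two] at hdet
  constructor
  · linear_combination g 1 1 * h₁ - g 1 0 * h₂ - x * hdet
  · linear_combination g 0 0 * h₂ - g 0 1 * h₁ - y * hdet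

lemma eval_homogenize_toPoly (P : Cubic R) (x : Fin 2 → R) :
    MvPolynomial.eval x (P.toPoly.homogenize 3) = cubicForm P (x 0) (x 1) := by
  simp [Cubic.toPoly, cubicForm, homogenize_X_pow, homogenize_X, mul_assoc]

end Basic

section RealForms

lemma exists_isRoot_toPoly {P : Cubic ℝ} (ha : P.a ≠ 0) : ∃ t, P.toPoly.IsRoot t := by
  by_contra! h
  have hdeg := Cubic.natDegree_of_a_ne_zero ha
  have := (irreducible_of_degree_le_three_of_not_isRoot (by simp [hdeg]) h).natDegree_le_two
  omega

lemma exists_eq_linear_mul_quadratic (P : Cubic ℝ) :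
    ∃ l m A B C : ℝ, P = ⟨l * A, l * B + m * A, l * C + m * B, m * C⟩ := by
  obtain ha | ha := eq_or_ne P.a 0
  · exact ⟨0, 1, P.b, P.c, P.d, by ext <;> simp [ha]⟩
  obtain ⟨t, ht⟩ := exists_isRoot_toPoly ha
  have ht' : P.a * t ^ 3 + P.b * t ^ 2 + P.c * t + P.d = 0 := by
    simpa [Cubic.toPoly] using ht
  refine ⟨1, -t, P.a, P.b + P.a * t, P.c + t * (P.b + P.a * t), ?_⟩
  ext
  · ring
  · ring
  · ring
  · linear_combination ht'

lemma abs_mul_sq_mul_sub_sq_le (δ L W : ℝ) :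
    |δ| * L ^ 2 * (W ^ 2 - δ * L ^ 2) ^ 2 ≤ (|δ| * L ^ 2 + W ^ 2) ^ 3 := by
  have habs : |W ^ 2 - δ * L ^ 2| ≤ |δ| * L ^ 2 + W ^ 2 := by
    refine (abs_sub _ _).trans_eq ?_
    rw [abs_mul, abs_sq, abs_sq, add_comm]
  calc |δ| * L ^ 2 * (W ^ 2 - δ * L ^ 2) ^ 2
      = |δ| * L ^ 2 * |W ^ 2 - δ * L ^ 2| ^ 2 := by rw [sq_abs]
    _ ≤ (|δ| * L ^ 2 + W ^ 2) * (|δ| * L ^ 2 + W ^ 2) ^ 2 := by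
      gcongr
      exact le_add_of_nonneg_right (sq_nonneg W)
    _ = (|δ| * L ^ 2 + W ^ 2) ^ 3 := by ring

lemma exists_binaryQuadratic_covariant (P : Cubic ℝ) :
    ∃ A B C : ℝ, 4 * A * C - B ^ 2 = 16 * |P.discr| ∧
      ∀ x y, 16 * |P.discr| * cubicForm P x y ^ 2 ≤ binaryQuadratic A B C x y ^ 3 := by
  obtain ⟨l, m, A, B, C, rfl⟩ := exists_eq_linear_mul_quadratic P
  set δ := B ^ 2 - 4 * A * C with hδ
  set u := l * B - 2 * m * A with hu
  set v := 2 * l * C - m * B with hv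
  set r := A * m ^ 2 - B * l * m + C * l ^ 2 with hr
  have hdiscr : |(⟨l * A, l * B + m * A, l * C + m * B, m * C⟩ : Cubic ℝ).discr| = |δ| * r ^ 2 := by
    rw [← abs_sq r, ← abs_mul]
    congr 1
    simp only [Cubic.discr, hδ, hr]
    ring
  rw [hdiscr]
  refine ⟨|δ| * l ^ 2 + u ^ 2, 2 * (|δ| * l * m + u * v), |δ| * m ^ 2 + v ^ 2, ?_, fun x y => ?_⟩
  · simp only [hu, hv, hr]
    ring
  · have hcubic : 4 * r * cubicForm ⟨l * A, l * B + m * A, l * C + m * B, m * C⟩ x y =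
        (l * x + m * y) * ((u * x + v * y) ^ 2 - δ * (l * x + m * y) ^ 2) := by
      simp only [cubicForm, hδ, hu, hv, hr]
      ring
    calc _ = |δ| * (4 * r * cubicForm ⟨l * A, l * B + m * A, l * C + m * B, m * C⟩ x y) ^ 2 := by
          ring
      _ = |δ| * (l * x + m * y) ^ 2 * ((u * x + v * y) ^ 2 - δ * (l * x + m * y) ^ 2) ^ 2 := by
          rw [hcubic]
          ring
      _ ≤ _ := abs_mul_sq_mul_sub_sq_le _ _ _
      _ = _ := by
          simp only [binaryQuadratic]
          ring

end RealForms

section Reduction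

variable {P : Cubic ℤ}

lemma IsAnisotropicCubic.one_le_binaryQuadratic (hP : IsAnisotropicCubic P) {A B C : ℝ} {x y : ℤ}
    (hQ : (↑(cubicForm P x y) : ℝ) ^ 2 ≤ binaryQuadratic A B C (x : ℝ) y ^ 3)
    (hxy : ¬(x = 0 ∧ y = 0)) : 1 ≤ binaryQuadratic A B C (x : ℝ) y := by
  have hF : 1 ≤ cubicForm P x y ^ 2 := Int.add_one_le_of_lt (sq_pos_of_ne_zero (mt (hP x y) hxy))
  rw [← Odd.pow_le_pow (n := 3) (by decide), one_pow]
  exact hQ.trans' (mod_cast hF)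

lemma IsAnisotropicCubic.exists_abs_cubicForm_cubicSubst_le (hP : IsAnisotropicCubic P)
    (hD : P.discr ≠ 0) :
    ∃ g : SL(2, ℤ), ∀ u v : ℤ,
      |cubicForm (cubicSubst P g) u v| ≤ (11 * |P.discr| * (u ^ 2 + v ^ 2)) ^ 3 := by
  obtain ⟨A, B, C, hdisc, hcov⟩ := exists_binaryQuadratic_covariant (P.map (Int.castRingHom ℝ))
  have hDmap : (P.map (Int.castRingHom ℝ)).discr = P.discr := by simp [Cubic.discr, Cubic.map]
  have hD₁ : (1 : ℝ) ≤ |(P.discr : ℝ)| := mod_cast Int.one_le_abs hD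
  have hQ (x y : ℤ) : (↑(cubicForm P x y) : ℝ) ^ 2 ≤ binaryQuadratic A B C (x : ℝ) y ^ 3 := by
    have h := hcov x y
    have hF : cubicForm (P.map (Int.castRingHom ℝ)) x y = ↑(cubicForm P x y) := by
      simp [cubicForm, Cubic.map]
    rw [hDmap, hF] at h
    exact (le_mul_of_one_le_left (sq_nonneg _) (by linarith)).trans h
  rw [hDmap] at hdisc
  obtain ⟨g, hg⟩ := exists_binaryQuadratic_le (by linarith)
    fun x y => hP.one_le_binaryQuadratic (hQ x y)
  refine ⟨g, fun u v => ?_⟩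
  have hsq : (↑(cubicForm (cubicSubst P g) u v) : ℝ) ^ 2 ≤
      (11 * |(P.discr : ℝ)| * (u ^ 2 + v ^ 2)) ^ 3 := by
    rw [cubicForm_cubicSubst]
    refine (hQ _ _).trans ((Odd.pow_le_pow (by decide)).2 ((hg u v).trans ?_))
    rw [hdisc]
    gcongr
    linarith
  exact (sq_abs (cubicForm _ u v) ▸ Int.le_self_sq _).trans (mod_cast hsq)

lemma finite_setOf_forall_abs_cubicForm_le (N : ℤ → ℤ → ℤ) :
    {P : Cubic ℤ | ∀ u v, |cubicForm P u v| ≤ N u v}.Finite := by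
  have hbox (u v : ℤ) : (Set.Icc (-N u v) (N u v)).Finite := Set.finite_Icc _ _
  refine Set.Finite.of_injOn
    (f := fun P => (cubicForm P 1 0, cubicForm P 0 1, cubicForm P 1 1, cubicForm P 1 (-1))) ?_ ?_
    ((hbox 1 0).prod ((hbox 0 1).prod ((hbox 1 1).prod (hbox 1 (-1)))))
  · exact fun P hP =>
      ⟨abs_le.1 (hP 1 0), abs_le.1 (hP 0 1), abs_le.1 (hP 1 1), abs_le.1 (hP 1 (-1))⟩
  · rintro P - Q - hPQ
    simp only [cubicForm, Prod.mk.injEq] at hPQ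
    ext <;> linarith

end Reduction

section Representations

variable {P : Cubic ℤ}

lemma IsAnisotropicCubic.a_ne_zero (hP : IsAnisotropicCubic P) : P.a ≠ 0 := fun ha =>
  one_ne_zero (hP 1 0 (by simp [cubicForm, ha])).1

lemma IsAnisotropicCubic.irreducible (hP : IsAnisotropicCubic P) :
    Irreducible (P.toPoly.map (Int.castRingHom ℚ)) := by
  have hdeg : P.toPoly.natDegree = 3 := Cubic.natDegree_of_a_ne_zero hP.a_ne_zero
  refine irreducible_of_degree_le_three_of_not_isRoot ?_ fun q hq => ?_
  · rw [natDegree_map_eq_of_injective Int.cast_injective, hdeg]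
    decide
  · have hden : ((![q.num, q.den] 1 : ℤ) : ℚ) ≠ 0 := by simp
    have heval := intCast_eval_homogenize hdeg.le ![q.num, q.den] hden
    rw [eval_homogenize_toPoly] at heval
    have hzero : cubicForm P q.num q.den = 0 := by
      simpa [Rat.num_div_den, hq.eq_zero] using heval
    simpa using (hP _ _ hzero).2

lemma IsAnisotropicCubic.finite_setOf_cubicForm_eq (hP : IsAnisotropicCubic P) (m : ℤ) :
    {x : Fin 2 → ℤ | cubicForm P (x 0) (x 1) = m}.Finite := by
  have hdeg : P.toPoly.natDegree = 3 := Cubic.natDegree_of_a_ne_zero hP.a_ne_zero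
  simpa only [hdeg, eval_homogenize_toPoly] using
    finite_setOf_eval_homogenize_eq hP.irreducible hdeg.ge m

theorem finite_setOf_hessianForm_of_cubicForm_eq {D : ℤ} (hD : D ≠ 0) (m : ℤ) :
    {h | ∃ (P : Cubic ℤ) (x y : ℤ), P.discr = D ∧ IsAnisotropicCubic P ∧ cubicForm P x y = m ∧
      hessianForm P x y = h}.Finite := by
  have hreduced : {P : Cubic ℤ | IsAnisotropicCubic P ∧
      ∀ u v, |cubicForm P u v| ≤ (11 * |D| * (u ^ 2 + v ^ 2)) ^ 3}.Finite :=
    (finite_setOf_forall_abs_cubicForm_le _).subset fun _ hP => hP.2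
  refine (hreduced.biUnion fun P hP => (hP.1.finite_setOf_cubicForm_eq m).image
    fun x => hessianForm P (x 0) (x 1)).subset ?_
  rintro _ ⟨P, x, y, rfl, hP, hm, rfl⟩
  obtain ⟨g, hg⟩ := hP.exists_abs_cubicForm_cubicSubst_le hD
  obtain ⟨u, v, huv, hhess⟩ := exists_forms_cubicSubst_eq P g x y
  exact Set.mem_biUnion (x := cubicSubst P g) ⟨hP.subst g, hg⟩
    ⟨![u, v], huv.trans hm, hhess⟩

end Representations

end BinaryCubicForms

section DiscriminantEquation

/-- Mordell's binary cubic form `x³ - g₂ x y² - 2 g₃ y³`: its discriminant is four times that of the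
curve `y² = 4x³ - g₂ x - g₃`, it represents `1` at `(1, 0)`, and its Hessian there is `3 g₂`. -/
def mordellCubic (g₂ g₃ : ℤ) : Cubic ℤ :=
  ⟨1, 0, -g₂, -2 * g₃⟩

lemma discr_mordellCubic (g₂ g₃ : ℤ) :
    (mordellCubic g₂ g₃).discr = 4 * (g₂ ^ 3 - 27 * g₃ ^ 2) := by
  simp only [Cubic.discr, mordellCubic]
  ring

lemma exists_isRoot_of_not_isAnisotropicCubic {P : Cubic ℤ} (ha : P.a = 1)
    (hP : ¬IsAnisotropicCubic P) : ∃ r, P.toPoly.IsRoot r := by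
  simp only [IsAnisotropicCubic, not_forall] at hP
  obtain ⟨x, y, hxy, hne⟩ := hP
  have hy : y ≠ 0 := by
    rintro rfl
    exact hne ⟨by simpa [cubicForm, ha] using hxy, rfl⟩
  have hy' : ((![x, y] 1 : ℤ) : ℚ) ≠ 0 := Int.cast_ne_zero.2 hy
  have hdeg : P.toPoly.natDegree = 3 := Cubic.natDegree_of_a_ne_zero (ha ▸ one_ne_zero)
  have hroot : aeval (x / y : ℚ) P.toPoly = 0 := by
    have h := intCast_eval_homogenize hdeg.le ![x, y] hy'
    rw [eval_homogenize_toPoly] at h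
    simpa [hxy, hy, eval_map, aeval_def] using h
  obtain ⟨r, hr⟩ := isInteger_of_is_root_of_monic (Cubic.monic_of_a_eq_one ha) hroot
  rw [← hr, aeval_algebraMap_apply, map_eq_zero_iff _ Int.cast_injective] at hroot
  exact ⟨r, hroot⟩

lemma abs_le_of_isRoot_mordellCubic {g₂ g₃ r : ℤ} (hr : (mordellCubic g₂ g₃).toPoly.IsRoot r)
    (hD : (mordellCubic g₂ g₃).discr ≠ 0) : |g₂| ≤ |(mordellCubic g₂ g₃).discr| := by
  have hr' : r ^ 3 - g₂ * r - 2 * g₃ = 0 := by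
    have h := hr.eq_zero
    simp only [mordellCubic, Cubic.toPoly, eval_add, eval_mul, eval_C, eval_pow, eval_X] at h
    linear_combination h
  have hfactor : (3 * r ^ 2 - g₂) ^ 2 * (4 * g₂ - 3 * r ^ 2) = (mordellCubic g₂ g₃).discr := by
    rw [discr_mordellCubic]
    linear_combination (-27) * (r ^ 3 - g₂ * r + 2 * g₃) * hr'
  have hle {k : ℤ} (hk : k ∣ (mordellCubic g₂ g₃).discr) : |k| ≤ |(mordellCubic g₂ g₃).discr| :=
    Int.le_of_dvd (abs_pos.2 hD) ((abs_dvd_abs _ _).2 hk)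
  have h₁ := hle (hfactor ▸ (dvd_pow_self _ two_ne_zero).mul_right _)
  have h₂ := hle (hfactor ▸ dvd_mul_left _ _)
  have hsum := abs_add_le (3 * r ^ 2 - g₂) (4 * g₂ - 3 * r ^ 2)
  rw [show 3 * r ^ 2 - g₂ + (4 * g₂ - 3 * r ^ 2) = 3 * g₂ by ring, abs_mul, abs_of_pos three_pos]
    at hsum
  linarith [abs_nonneg g₂]

lemma finite_setOf_exists_discriminant_eq {D : ℤ} (hD : D ≠ 0) :
    {g₂ : ℤ | ∃ g₃ : ℤ, g₂ ^ 3 - 27 * g₃ ^ 2 = D}.Finite := by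
  have hD' : 4 * D ≠ 0 := mul_ne_zero four_ne_zero hD
  have hinj : Function.Injective fun g : ℤ => 3 * g := mul_right_injective₀ three_ne_zero
  refine ((Set.finite_Icc (-|4 * D|) |4 * D|).union
    ((finite_setOf_hessianForm_of_cubicForm_eq hD' 1).preimage hinj.injOn)).subset ?_
  rintro g₂ ⟨g₃, rfl⟩
  rw [← discr_mordellCubic] at hD' ⊢
  by_cases hP : IsAnisotropicCubic (mordellCubic g₂ g₃)
  · refine Or.inr ⟨mordellCubic g₂ g₃, 1, 0, rfl, hP, ?_, ?_⟩ <;>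
      simp [cubicForm, hessianForm, binaryQuadratic, mordellCubic]
  · obtain ⟨r, hr⟩ := exists_isRoot_of_not_isAnisotropicCubic rfl hP
    exact Or.inl (abs_le.1 (abs_le_of_isRoot_mordellCubic hr hD'))

end DiscriminantEquation

/-- For every nonzero integer `Δ₀`, the set of integer pairs `(g₂, g₃)` with
`g₂³ − 27 g₃² = Δ₀` is finite. -/
theorem finite_fibers_of_discriminant (Δ₀ : ℤ) (hΔ₀ : Δ₀ ≠ 0) :
    {p : ℤ × ℤ | p.1 ^ 3 - 27 * p.2 ^ 2 = Δ₀}.Finite := by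
  refine Set.Finite.of_finite_fibers Prod.fst
    ((finite_setOf_exists_discriminant_eq hΔ₀).subset ?_) fun g₂ _ => ?_
  · rintro _ ⟨⟨g₂, g₃⟩, h, rfl⟩
    exact ⟨g₃, h⟩
  · have hfiber : {g₃ : ℤ | 27 * g₃ ^ 2 = g₂ ^ 3 - Δ₀}.Finite :=
      finite_setOf_mul_pow_eq (by norm_num) two_ne_zero _
    refine ((Set.finite_singleton g₂).prod hfiber).subset ?_
    rintro ⟨_, g₃⟩ ⟨h, rfl⟩
    exact ⟨rfl, eq_sub_of_add_eq' (sub_eq_iff_eq_add.1 h).symm⟩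
end

section
/- Roth's theorem: let α be a real number that is algebraic over ℚ and irrational, and let ρ > 1 be a real number. Then the set of pairs of integers (p, q) with q ≥ 1 such that q^ρ · |q·α − p| ≤ 1 is finite. -/
/-!
Suppose `α` had good approximations `x₁, x₂, …` of arbitrarily large denominator, and choose `m` of
them whose denominators grow very fast. The pigeonhole principle gives a nonzero integer polynomial
`P` in `m` variables, with small coefficients, whose index at `(α, …, α)` is nearly `m / 2`: this
is possible because, by a large deviation estimate, few exponents have relative weight well below
`m / 2`. Roth's lemma, proved by induction on `m` with generalized Wronskians, says that `P` has
small index at `(x₁, …, x_m)`. So some Hasse derivative of `P` of small order does not vanish there;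
its value is a rational number with controlled denominator, hence not too small, while its index at
`(α, …, α)`, still nearly `m / 2`, makes it smaller than that once the exponent exceeds `2`.
-/

namespace Roth

open MvPolynomial

section HasseDeriv

variable {σ R A : Type*} [CommRing R] [CommRing A] [Algebra R A]

/-- The polynomial `P(X + a)`, whose coefficients are the Taylor coefficients of `P` at `a`. -/
noncomputable def translate (a : σ → A) : MvPolynomial σ R →ₐ[R] MvPolynomial σ A :=
  aeval fun i ↦ X i + C (a i)

/-- The Hasse derivative `D_I = (1 / I!) ∂^I`, defined in every characteristic as the coefficient
of `Y ^ I` in `P(X + Y)`. -/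
noncomputable def hasseDeriv (I : σ →₀ ℕ) : MvPolynomial σ R →ₗ[R] MvPolynomial σ R :=
  (lcoeff (MvPolynomial σ R) I).restrictScalars R ∘ₗ (translate X).toLinearMap

theorem coeff_translate (a : σ → A) (I : σ →₀ ℕ) (P : MvPolynomial σ R) :
    coeff I (translate a P) = aeval a (hasseDeriv I P) := by
  have hcomp : translate a = (mapAlgHom (aeval a)).comp (translate (R := R) X) := by
    ext i : 1; simp [translate]
  rw [hcomp]
  exact coeff_map _ _ _

theorem translate_hasseDeriv (a : σ → A) (I : σ →₀ ℕ) (P : MvPolynomial σ R) :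
    translate a (hasseDeriv I P) = hasseDeriv I (translate a P) := by
  have hcomp : translate (fun i ↦ X i + C (a i)) =
      ((translate (X : σ → MvPolynomial σ A)).restrictScalars R).comp (translate (R := R) a) := by
    ext i : 1; simp [translate, add_assoc]
  rw [translate, ← coeff_translate, hcomp]
  rfl

theorem aeval_eq_sum_translate [Fintype σ] (a b : σ → A) (P : MvPolynomial σ R) :
    aeval b P =
      ∑ f ∈ (translate a P).support, coeff f (translate a P) * ∏ i, (b i - a i) ^ f i := by
  have hcomp : aeval b = ((aeval (b - a)).restrictScalars R).comp (translate (R := R) a) := by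
    ext i : 1; simp [translate]
  rw [hcomp]
  exact eval_eq' (b - a) (translate a P)

variable [Fintype σ]

/-- The multi-index binomial coefficient `∏ i, (e i choose I i)`. -/
def multiChoose (e I : σ →₀ ℕ) : ℕ := ∏ i, (e i).choose (I i)

theorem multiChoose_eq_zero {e I : σ →₀ ℕ} (h : ¬ I ≤ e) : multiChoose e I = 0 := by
  obtain ⟨i, hi⟩ := not_forall.1 h
  exact Finset.prod_eq_zero (Finset.mem_univ i) (Nat.choose_eq_zero_of_lt (not_le.1 hi))

theorem multiChoose_le_two_pow {e : σ →₀ ℕ} {r : σ → ℕ} (h : ∀ i, e i ≤ r i) (I : σ →₀ ℕ) :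
    multiChoose e I ≤ 2 ^ ∑ i, r i := by
  rw [← Finset.prod_pow_eq_pow_sum]
  exact Finset.prod_le_prod' fun i _ ↦
    (Nat.choose_le_two_pow _ _).trans (Nat.pow_le_pow_right two_pos (h i))

theorem hasseDeriv_monomial (I e : σ →₀ ℕ) (c : R) :
    hasseDeriv I (monomial e c) = monomial (e - I) (multiChoose e I * c) := by
  classical
  have hexp : translate (X : σ → MvPolynomial σ R) (monomial e c) =
      ∑ J ∈ Fintype.piFinset fun i ↦ Finset.range (e i + 1),
        monomial (Finsupp.equivFunOnFinite.symm J)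
          (C c * ∏ i, (X i ^ (e i - J i) * ((e i).choose (J i) : MvPolynomial σ R))) := by
    rw [translate, aeval_monomial, Finsupp.prod_fintype _ _ (by simp)]
    simp only [add_pow, Finset.prod_univ_sum, Finset.mul_sum]
    refine Finset.sum_congr rfl fun J _ ↦ ?_
    rw [monomial_eq (s := Finsupp.equivFunOnFinite.symm J),
      Finsupp.prod_fintype _ _ (by simp)]
    simp [Finset.prod_mul_distrib, algebraMap_eq]
    ring
  have hcoe : ∀ J : σ → ℕ, Finsupp.equivFunOnFinite.symm J = I ↔ J = I := fun J ↦ by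
    rw [Equiv.symm_apply_eq]; rfl
  change coeff I (translate X (monomial e c)) = _
  rw [hexp, coeff_sum]
  simp only [coeff_monomial, hcoe, Finset.sum_ite_eq', Fintype.mem_piFinset, Finset.mem_range]
  split_ifs with h
  · rw [monomial_eq, Finsupp.prod_fintype _ _ (by simp)]
    simp [Finset.prod_mul_distrib, multiChoose]
    ring
  · have hI : ¬ I ≤ e := fun hI ↦ h fun i ↦ Nat.lt_succ_of_le (hI i)
    simp [multiChoose_eq_zero hI]

theorem coeff_hasseDeriv (I f : σ →₀ ℕ) (P : MvPolynomial σ R) :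
    coeff f (hasseDeriv I P) = multiChoose (f + I) I * coeff (f + I) P := by
  classical
  induction P using MvPolynomial.induction_on' with
  | add p q hp hq => rw [map_add, coeff_add, coeff_add, hp, hq, mul_add]
  | monomial e c =>
    rw [hasseDeriv_monomial, coeff_monomial, coeff_monomial]
    by_cases hI : I ≤ e
    · simp only [tsub_eq_iff_eq_add_of_le hI, mul_ite, mul_zero]
      split_ifs with h
      · rw [h]
      · rfl
    · have : e ≠ f + I := fun h ↦ hI (h ▸ le_add_self)
      simp [multiChoose_eq_zero hI, this]

omit [Fintype σ] in
theorem degreeOf_hasseDeriv_le [Finite σ] (i : σ) (I : σ →₀ ℕ) (P : MvPolynomial σ R) :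
    degreeOf i (hasseDeriv I P) ≤ degreeOf i P := by
  cases nonempty_fintype σ
  rw [degreeOf_le_iff]
  intro f hf
  rw [mem_support_iff, coeff_hasseDeriv] at hf
  exact (Nat.le_add_right _ _).trans
    (monomial_le_degreeOf i (mem_support_iff.2 (right_ne_zero_of_mul hf)))

end HasseDeriv

section Index

variable {σ R A : Type*} [CommRing R] [CommRing A] [Algebra R A]

/-- The weight `∑ i, f i / r i` of an exponent `f` relative to the degree bounds `r`. -/
noncomputable def relWeight (r : σ → ℕ) : (σ →₀ ℕ) →+ ℝ :=
  Finsupp.weight fun i ↦ (r i : ℝ)⁻¹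

theorem relWeight_apply [Fintype σ] (r : σ → ℕ) (f : σ →₀ ℕ) :
    relWeight r f = ∑ i, (f i : ℝ) / r i := by
  simp [relWeight, Finsupp.weight_eq_sum, div_eq_mul_inv]

theorem relWeight_nonneg (r : σ → ℕ) (f : σ →₀ ℕ) : 0 ≤ relWeight r f := by
  rw [relWeight, Finsupp.weight_apply]
  exact Finset.sum_nonneg fun i _ ↦ by positivity

/-- The ideal of polynomials whose index at the point `a`, relative to the degree bounds `r`, is at
least `θ`: every monomial of `P(X + a)` has relative weight at least `θ`. -/
def indexIdeal (R : Type*) [CommRing R] [Algebra R A] (a : σ → A) (r : σ → ℕ) (θ : ℝ) :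
    Ideal (MvPolynomial σ R) where
  carrier := {P | ∀ f, coeff f (translate a P) ≠ 0 → θ ≤ relWeight r f}
  zero_mem' f hf := by simp at hf
  add_mem' {P Q} hP hQ f hf := by
    rw [map_add, coeff_add] at hf
    by_cases h : coeff f (translate a P) = 0
    · exact hQ f (by simpa [h] using hf)
    · exact hP f h
  smul_mem' P Q hQ f hf := by
    classical
    rw [smul_eq_mul, map_mul, coeff_mul] at hf
    obtain ⟨⟨u, v⟩, huv, hne⟩ := Finset.exists_ne_zero_of_sum_ne_zero hf
    rw [← Finset.HasAntidiagonal.mem_antidiagonal.1 huv, map_add]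
    exact (hQ v (right_ne_zero_of_mul hne)).trans (le_add_of_nonneg_left (relWeight_nonneg r u))

variable {a : σ → A} {r : σ → ℕ} {θ θ' : ℝ} {P Q : MvPolynomial σ R}

theorem mem_indexIdeal :
    P ∈ indexIdeal R a r θ ↔ ∀ f, coeff f (translate a P) ≠ 0 → θ ≤ relWeight r f := Iff.rfl

theorem indexIdeal_antitone (R : Type*) [CommRing R] [Algebra R A] (a : σ → A) (r : σ → ℕ) :
    Antitone (indexIdeal R a r) := fun _ _ hθ _ hP f hf ↦ hθ.trans (hP f hf)

theorem indexIdeal_of_nonpos (hθ : θ ≤ 0) (P : MvPolynomial σ R) : P ∈ indexIdeal R a r θ :=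
  fun f _ ↦ hθ.trans (relWeight_nonneg r f)

theorem mul_mem_indexIdeal (hP : P ∈ indexIdeal R a r θ) (hQ : Q ∈ indexIdeal R a r θ') :
    P * Q ∈ indexIdeal R a r (θ + θ') := by
  classical
  intro f hf
  rw [map_mul, coeff_mul] at hf
  obtain ⟨⟨u, v⟩, huv, hne⟩ := Finset.exists_ne_zero_of_sum_ne_zero hf
  rw [← Finset.HasAntidiagonal.mem_antidiagonal.1 huv, map_add]
  exact add_le_add (hP u (left_ne_zero_of_mul hne)) (hQ v (right_ne_zero_of_mul hne))

theorem prod_mem_indexIdeal {ι : Type*} {s : Finset ι} {θ : ι → ℝ} {P : ι → MvPolynomial σ R}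
    (h : ∀ i ∈ s, P i ∈ indexIdeal R a r (θ i)) :
    ∏ i ∈ s, P i ∈ indexIdeal R a r (∑ i ∈ s, θ i) := by
  classical
  induction s using Finset.induction_on with
  | empty => exact indexIdeal_of_nonpos le_rfl _
  | insert i s hi ih =>
    rw [Finset.sum_insert hi, Finset.prod_insert hi]
    exact mul_mem_indexIdeal (h i (s.mem_insert_self i))
      (ih fun j hj ↦ h j (Finset.mem_insert_of_mem hj))

theorem det_mem_indexIdeal {ι : Type*} [Fintype ι] [DecidableEq ι] {θ : ι → ℝ}
    {M : Matrix ι ι (MvPolynomial σ R)} (h : ∀ i j, M i j ∈ indexIdeal R a r (θ j)) :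
    M.det ∈ indexIdeal R a r (∑ j, θ j) := by
  rw [Matrix.det_apply']
  exact sum_mem fun τ _ ↦ Ideal.mul_mem_left _ _ (prod_mem_indexIdeal fun j _ ↦ h (τ j) j)

theorem hasseDeriv_mem_indexIdeal [Finite σ] (hP : P ∈ indexIdeal R a r θ) (I : σ →₀ ℕ) :
    hasseDeriv I P ∈ indexIdeal R a r (θ - relWeight r I) := by
  cases nonempty_fintype σ
  intro f hf
  rw [translate_hasseDeriv, coeff_hasseDeriv] at hf
  rw [sub_le_iff_le_add, ← map_add]
  exact hP _ (right_ne_zero_of_mul hf)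

end Index

section L1Norm

variable {σ R : Type*}

/-- The sum of the norms of the coefficients of a polynomial. -/
noncomputable def l1Norm [NormedCommRing R] (P : MvPolynomial σ R) : ℝ :=
  ∑ e ∈ P.support, ‖coeff e P‖

variable [NormedCommRing R]

theorem l1Norm_nonneg (P : MvPolynomial σ R) : 0 ≤ l1Norm P :=
  Finset.sum_nonneg fun _ _ ↦ norm_nonneg _

theorem l1Norm_eq_sum {P : MvPolynomial σ R} {s : Finset (σ →₀ ℕ)} (h : P.support ⊆ s) :
    l1Norm P = ∑ e ∈ s, ‖coeff e P‖ :=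
  Finset.sum_subset h fun e _ he ↦ by rw [notMem_support_iff.1 he, norm_zero]

theorem norm_coeff_le_l1Norm (P : MvPolynomial σ R) (e : σ →₀ ℕ) : ‖coeff e P‖ ≤ l1Norm P := by
  classical
  rw [l1Norm_eq_sum (P.support.subset_insert e)]
  exact Finset.single_le_sum (f := fun e ↦ ‖coeff e P‖) (fun _ _ ↦ norm_nonneg _)
    (P.support.mem_insert_self e)

theorem l1Norm_add_le (P Q : MvPolynomial σ R) : l1Norm (P + Q) ≤ l1Norm P + l1Norm Q := by
  classical
  rw [l1Norm_eq_sum (support_add (p := P) (q := Q)),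
    l1Norm_eq_sum (P := P) Finset.subset_union_left,
    l1Norm_eq_sum (P := Q) Finset.subset_union_right, ← Finset.sum_add_distrib]
  exact Finset.sum_le_sum fun e _ ↦ by rw [coeff_add]; exact norm_add_le _ _

theorem l1Norm_sum_le {ι : Type*} (s : Finset ι) (P : ι → MvPolynomial σ R) :
    l1Norm (∑ i ∈ s, P i) ≤ ∑ i ∈ s, l1Norm (P i) :=
  Finset.le_sum_of_subadditive l1Norm (by simp [l1Norm]) l1Norm_add_le s P

theorem l1Norm_monomial (e : σ →₀ ℕ) (c : R) : l1Norm (monomial e c) = ‖c‖ := by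
  classical
  rw [l1Norm_eq_sum (support_monomial_subset (s := e) (a := c))]
  simp

theorem l1Norm_C (c : R) : l1Norm (C c : MvPolynomial σ R) = ‖c‖ := l1Norm_monomial 0 c

theorem l1Norm_mul_le (P Q : MvPolynomial σ R) : l1Norm (P * Q) ≤ l1Norm P * l1Norm Q := by
  have hmul : P * Q =
      ∑ e ∈ P.support, ∑ f ∈ Q.support, monomial (e + f) (coeff e P * coeff f Q) := by
    conv_lhs => rw [P.as_sum, Q.as_sum, Finset.sum_mul_sum]
    simp only [monomial_mul]
  rw [hmul]
  refine (l1Norm_sum_le _ _).trans ?_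
  rw [l1Norm, l1Norm, Finset.sum_mul_sum]
  refine Finset.sum_le_sum fun e _ ↦ (l1Norm_sum_le _ _).trans (Finset.sum_le_sum fun f _ ↦ ?_)
  rw [l1Norm_monomial]
  exact norm_mul_le _ _

section NormOneClass

variable [NormOneClass R]

theorem l1Norm_one : l1Norm (1 : MvPolynomial σ R) = 1 := (l1Norm_C 1).trans norm_one

theorem l1Norm_X (i : σ) : l1Norm (X i : MvPolynomial σ R) = 1 :=
  (l1Norm_monomial _ 1).trans norm_one

theorem l1Norm_prod_le {ι : Type*} (s : Finset ι) (P : ι → MvPolynomial σ R) :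
    l1Norm (∏ i ∈ s, P i) ≤ ∏ i ∈ s, l1Norm (P i) := by
  classical
  induction s using Finset.induction_on with
  | empty => simp [l1Norm_one]
  | insert i s hi ih =>
    rw [Finset.prod_insert hi, Finset.prod_insert hi]
    exact (l1Norm_mul_le _ _).trans (mul_le_mul_of_nonneg_left ih (l1Norm_nonneg _))

theorem l1Norm_pow_le (P : MvPolynomial σ R) (k : ℕ) : l1Norm (P ^ k) ≤ l1Norm P ^ k := by
  simpa using l1Norm_prod_le (Finset.range k) fun _ ↦ P

theorem l1Norm_det_le {ι : Type*} [Fintype ι] [DecidableEq ι]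
    {M : Matrix ι ι (MvPolynomial σ R)} {B : ℝ} (h : ∀ i j, l1Norm (M i j) ≤ B) :
    l1Norm M.det ≤ (Fintype.card ι).factorial * B ^ Fintype.card ι := by
  have hterm (τ : Equiv.Perm ι) : l1Norm (((Equiv.Perm.sign τ : ℤ) : MvPolynomial σ R) *
      ∏ i, M (τ i) i) ≤ B ^ Fintype.card ι := by
    have hsign : l1Norm ((Equiv.Perm.sign τ : ℤ) : MvPolynomial σ R) = 1 := by
      rw [← map_intCast (C : R →+* _), l1Norm_C]
      rcases Int.units_eq_one_or (Equiv.Perm.sign τ) with h | h <;> simp [h]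
    calc _ ≤ 1 * ∏ i, l1Norm (M (τ i) i) := by
            rw [← hsign]
            exact (l1Norm_mul_le _ _).trans
              (mul_le_mul_of_nonneg_left (l1Norm_prod_le _ _) (l1Norm_nonneg _))
      _ ≤ B ^ Fintype.card ι := by
            rw [one_mul, ← Finset.card_univ, ← Finset.prod_const]
            exact Finset.prod_le_prod (fun _ _ ↦ l1Norm_nonneg _) fun i _ ↦ h _ _
  rw [Matrix.det_apply']
  refine (l1Norm_sum_le _ _).trans ((Finset.sum_le_sum fun τ _ ↦ hterm τ).trans ?_)
  simp [Fintype.card_perm]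

end NormOneClass

theorem l1Norm_hasseDeriv_le [Fintype σ] {P : MvPolynomial σ ℤ} {r : σ → ℕ}
    (h : ∀ i, degreeOf i P ≤ r i) (I : σ →₀ ℕ) :
    l1Norm (hasseDeriv I P) ≤ 2 ^ (∑ i, r i) * l1Norm P := by
  conv_lhs => rw [P.as_sum, map_sum]
  refine (l1Norm_sum_le _ _).trans ?_
  rw [l1Norm, Finset.mul_sum]
  refine Finset.sum_le_sum fun e he ↦ ?_
  rw [hasseDeriv_monomial, l1Norm_monomial, norm_mul, Int.norm_natCast]
  gcongr
  exact_mod_cast multiChoose_le_two_pow (fun i ↦ (monomial_le_degreeOf i he).trans (h i)) I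

theorem l1Norm_translate_le [Fintype σ] {P : MvPolynomial σ ℤ} {r : σ → ℕ} {B : ℝ} {a : σ → ℝ}
    (hB : ∀ i, 1 + |a i| ≤ B) (hr : ∀ i, degreeOf i P ≤ r i) :
    l1Norm (translate a P) ≤ B ^ (∑ i, r i) * l1Norm P := by
  conv_lhs => rw [P.as_sum, map_sum]
  refine (l1Norm_sum_le _ _).trans ?_
  rw [l1Norm, Finset.mul_sum]
  refine Finset.sum_le_sum fun e he ↦ ?_
  rw [translate, aeval_monomial, Finsupp.prod_fintype _ _ (by simp), eq_intCast,
    ← map_intCast (C : ℝ →+* _), mul_comm, ← Finset.prod_pow_eq_pow_sum]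
  refine (l1Norm_mul_le _ _).trans ?_
  rw [l1Norm_C, Int.norm_cast_real]
  refine mul_le_mul_of_nonneg_right ((l1Norm_prod_le _ _).trans
    (Finset.prod_le_prod (fun _ _ ↦ l1Norm_nonneg _) fun i _ ↦ ?_)) (norm_nonneg _)
  have hXC : l1Norm (X i + C (a i)) ≤ B := by
    refine (l1Norm_add_le _ _).trans ?_
    rw [l1Norm_X, l1Norm_C]
    exact hB i
  calc l1Norm ((X i + C (a i)) ^ e i) ≤ B ^ e i :=
        (l1Norm_pow_le _ _).trans (pow_le_pow_left₀ (l1Norm_nonneg _) hXC _)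
    _ ≤ B ^ r i := pow_le_pow_right₀ (by linarith [hB i, abs_nonneg (a i)])
        ((monomial_le_degreeOf i he).trans (hr i))

theorem one_le_l1Norm {P : MvPolynomial σ ℤ} (hP : P ≠ 0) : 1 ≤ l1Norm P := by
  obtain ⟨e, he⟩ := ne_zero_iff.1 hP
  refine le_trans ?_ (norm_coeff_le_l1Norm P e)
  rw [Int.norm_eq_abs]
  exact_mod_cast Int.one_le_abs he

end L1Norm

theorem degreeOf_det_le {σ ι R : Type*} [CommRing R] [Fintype ι] [DecidableEq ι]
    {M : Matrix ι ι (MvPolynomial σ R)} {i : σ} {d : ℕ} (hd : ∀ j k, degreeOf i (M j k) ≤ d) :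
    degreeOf i M.det ≤ Fintype.card ι * d := by
  rw [Matrix.det_apply']
  refine (degreeOf_sum_le _ _ _).trans (Finset.sup_le fun τ _ ↦ ?_)
  rw [← map_intCast (C : R →+* _), ← smul_eq_mul (Fintype.card ι), ← Finset.card_univ]
  exact (degreeOf_C_mul_le _ _ _).trans ((degreeOf_prod_le _ _ _).trans
    (Finset.sum_le_card_nsmul _ _ _ fun j _ ↦ hd _ _))

section Wronskian

theorem coeff_prod_sum {R ι : Type*} [CommSemiring R] (s : Finset ι) (f : ι → Polynomial R)
    (d : ι → ℕ) (h : ∀ i ∈ s, (f i).natDegree ≤ d i) :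
    (∏ i ∈ s, f i).coeff (∑ i ∈ s, d i) = ∏ i ∈ s, (f i).coeff (d i) := by
  classical
  induction s using Finset.induction_on with
  | empty => simp
  | insert i s hi ih =>
    have hs : ∀ j ∈ s, (f j).natDegree ≤ d j := fun j hj ↦ h j (Finset.mem_insert_of_mem hj)
    rw [Finset.sum_insert hi, Finset.prod_insert hi, Finset.prod_insert hi, ← ih hs]
    exact Polynomial.coeff_mul_add_eq_of_natDegree_le (h i (s.mem_insert_self i))
      ((Polynomial.natDegree_prod_le _ _).trans (Finset.sum_le_sum hs))

theorem natDegree_sub_smul_lt {R : Type*} [CommRing R] {p q : Polynomial R} {c : R}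
    (hpq : p.natDegree = q.natDegree) (hc : p.leadingCoeff = c * q.leadingCoeff)
    (hne : p - c • q ≠ 0) : (p - c • q).natDegree < p.natDegree := by
  refine lt_of_le_of_ne ?_ fun heq ↦ hne (Polynomial.leadingCoeff_eq_zero.1 ?_)
  · exact (Polynomial.natDegree_sub_le _ _).trans
      (max_le le_rfl ((Polynomial.natDegree_smul_le c q).trans hpq.ge))
  · rw [Polynomial.leadingCoeff, heq, Polynomial.coeff_sub, Polynomial.coeff_smul, smul_eq_mul]
    nth_rw 2 [hpq]
    exact sub_eq_zero.2 hc

theorem linearIndependent_update_sub_smul {ι R M : Type*} [DecidableEq ι] [Ring R] [AddCommGroup M]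
    [Module R M] {v : ι → M} (hv : LinearIndependent R v) {a b : ι} (hab : a ≠ b) (c : R) :
    LinearIndependent R (Function.update v a (v a - c • v b)) := by
  have hupdate : Function.update v a (v a - c • v b) =
      v + fun j ↦ (Pi.single a (-c) : ι → R) j • v b := by
    funext j
    rcases eq_or_ne j a with rfl | hj
    · simp [sub_eq_add_neg]
    · simp [hj]
  rw [hupdate]
  exact (linearIndependent_add_smul_iff (Pi.single_eq_of_ne hab.symm _)).2 hv

theorem coeff_X_pow_mul_hasseDeriv {R : Type*} [CommRing R] (i m : ℕ) (p : Polynomial R) :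
    (Polynomial.X ^ i * Polynomial.hasseDeriv i p).coeff m = m.choose i * p.coeff m := by
  rw [Polynomial.coeff_X_pow_mul', Polynomial.hasseDeriv_coeff]
  split_ifs with h
  · rw [Nat.sub_add_cancel h]
  · rw [Nat.choose_eq_zero_of_lt (not_le.1 h), Nat.cast_zero, zero_mul]

variable {k : ℕ} {R : Type*} [CommRing R]

/-- The Wronskian of univariate polynomials, formed with Hasse derivatives instead of
iterated ones; its nonvanishing detects linear independence in characteristic zero. -/
noncomputable def wronskian (ψ : Fin k → Polynomial R) : Polynomial R :=
  (Matrix.of fun i j : Fin k ↦ Polynomial.hasseDeriv i (ψ j)).det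

theorem wronskian_update_sub_smul (ψ : Fin k → Polynomial R) {a b : Fin k} (hab : a ≠ b) (c : R) :
    wronskian (Function.update ψ a (ψ a - c • ψ b)) = wronskian ψ := by
  refine Eq.trans ?_ (Matrix.det_updateCol_add_smul_self _ hab (Polynomial.C (-c)))
  rw [wronskian]
  congr 1
  ext1 i j
  rcases eq_or_ne j a with rfl | hj
  · simp [← Polynomial.smul_eq_C_mul, sub_eq_add_neg]
  · simp [hj]

variable {K : Type*} [Field K] [CharZero K]

theorem det_choose_ne_zero {d : Fin k → ℕ} (hd : Function.Injective d) :
    (Matrix.of fun i j : Fin k ↦ ((d j).choose i : K)).det ≠ 0 := by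
  have hfactor : (Matrix.of fun j i : Fin k ↦
        ((descPochhammer K i).eval ((d j : ℕ) : K))) =
      Matrix.of fun j i : Fin k ↦ (((i : ℕ).factorial : K)) *
        (Matrix.of fun i j : Fin k ↦ ((d j).choose i : K)).transpose j i := by
    ext j i
    simp [descPochhammer_eval_eq_descFactorial, Nat.descFactorial_eq_factorial_mul_choose]
  have hdet := Matrix.det_eval_matrixOfPolynomials_eq_det_vandermonde (fun j ↦ ((d j : ℕ) : K))
    (fun i ↦ descPochhammer K i) (fun i ↦ (descPochhammer_natDegree K i))
    (fun i ↦ monic_descPochhammer K i)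
  rw [hfactor, Matrix.det_mul_row, Matrix.det_transpose] at hdet
  refine right_ne_zero_of_mul (hdet ▸ Matrix.det_vandermonde_ne_zero_iff.2 ?_)
  exact Nat.cast_injective.comp hd

theorem wronskian_ne_zero_of_natDegree_injective {ψ : Fin k → Polynomial K} (h0 : ∀ j, ψ j ≠ 0)
    (hinj : Function.Injective fun j ↦ (ψ j).natDegree) : wronskian ψ ≠ 0 := by
  set d := fun j ↦ (ψ j).natDegree
  set M : Matrix (Fin k) (Fin k) (Polynomial K) :=
    Matrix.of fun i j ↦ Polynomial.X ^ (i : ℕ) * Polynomial.hasseDeriv i (ψ j)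
  have hdeg (i j : Fin k) : (M i j).natDegree ≤ d j :=
    Polynomial.natDegree_le_iff_coeff_eq_zero.2 fun m hm ↦ by
      change (Polynomial.X ^ (i : ℕ) * Polynomial.hasseDeriv i (ψ j)).coeff m = 0
      rw [coeff_X_pow_mul_hasseDeriv, Polynomial.coeff_eq_zero_of_natDegree_lt hm,
        mul_zero]
  have hcoeff : M.det.coeff (∑ j, d j) =
      (∏ j, (ψ j).leadingCoeff) * (Matrix.of fun i j : Fin k ↦ ((d j).choose i : K)).det := by
    simp only [Matrix.det_apply', Polynomial.finsetSum_coeff, ← Polynomial.C_eq_intCast,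
      Polynomial.coeff_C_mul, Finset.mul_sum]
    refine Finset.sum_congr rfl fun τ _ ↦ ?_
    rw [coeff_prod_sum _ _ _ fun j _ ↦ hdeg (τ j) j]
    simp only [M, Matrix.of_apply, coeff_X_pow_mul_hasseDeriv, Finset.prod_mul_distrib]
    simp only [d, Polynomial.leadingCoeff]
    ring
  have hM : M.det = (∏ i : Fin k, Polynomial.X ^ (i : ℕ)) * wronskian ψ := Matrix.det_mul_column _ _
  refine right_ne_zero_of_mul (a := ∏ i : Fin k, Polynomial.X ^ (i : ℕ)) (hM ▸ fun hzero ↦ ?_)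
  rw [hzero, Polynomial.coeff_zero, eq_comm, mul_eq_zero, Finset.prod_eq_zero_iff] at hcoeff
  rcases hcoeff with ⟨j, -, hj⟩ | hdet
  · exact h0 j (Polynomial.leadingCoeff_eq_zero.1 hj)
  · exact det_choose_ne_zero hinj hdet

theorem wronskian_ne_zero {ψ : Fin k → Polynomial K} (hψ : LinearIndependent K ψ) :
    wronskian ψ ≠ 0 := by
  induction hN : ∑ j, (ψ j).natDegree using Nat.strong_induction_on generalizing ψ with
  | _ N ih =>
  by_cases hinj : Function.Injective fun j ↦ (ψ j).natDegree
  · exact wronskian_ne_zero_of_natDegree_injective hψ.ne_zero hinj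
  obtain ⟨a, b, hdeg, hab⟩ := Function.not_injective_iff.1 hinj
  set c := (ψ a).leadingCoeff / (ψ b).leadingCoeff
  have hc : (ψ a).leadingCoeff = c * (ψ b).leadingCoeff :=
    (div_mul_cancel₀ _ (Polynomial.leadingCoeff_ne_zero.2 (hψ.ne_zero b))).symm
  have hψ' := linearIndependent_update_sub_smul hψ hab c
  have hlt : (ψ a - c • ψ b).natDegree < (ψ a).natDegree :=
    natDegree_sub_smul_lt hdeg hc (by simpa using hψ'.ne_zero a)
  rw [← wronskian_update_sub_smul ψ hab c]
  refine ih _ ?_ hψ' rfl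
  rw [← hN]
  refine Finset.sum_lt_sum (fun j _ ↦ ?_) ⟨a, Finset.mem_univ a, by simpa using hlt⟩
  rcases eq_or_ne j a with rfl | hj
  · simpa using hlt.le
  · simp [hj]

end Wronskian

theorem coeff_aeval_X_add_C_X {R : Type*} [CommRing R] (i : ℕ) (p : Polynomial R) :
    (Polynomial.aeval (Polynomial.X + Polynomial.C Polynomial.X : Polynomial (Polynomial R))
      p).coeff i = Polynomial.hasseDeriv i p := by
  have htaylor : Polynomial.aeval (Polynomial.X + Polynomial.C Polynomial.X) p =
      Polynomial.taylor (Polynomial.X : Polynomial R) (p.map Polynomial.C) := by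
    rw [Polynomial.taylor_apply, Polynomial.comp, Polynomial.eval₂_map]
    rfl
  have hmap : Polynomial.hasseDeriv i (p.map Polynomial.C) =
      (Polynomial.hasseDeriv i p).map Polynomial.C := by
    ext1 n
    simp only [Polynomial.hasseDeriv_coeff, Polynomial.coeff_map, map_mul, map_natCast]
  rw [htaylor, Polynomial.taylor_coeff, hmap, Polynomial.eval_map, Polynomial.eval₂_C_X]

theorem exists_hasseDeriv_aeval_eq_sum {σ R : Type*} [Finite σ] [CommRing R]
    (g : σ → Polynomial R) (i : ℕ) :
    ∃ (T : Finset (σ →₀ ℕ)) (c : (σ →₀ ℕ) → Polynomial R), (∀ I ∈ T, I.degree ≤ i) ∧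
      ∀ P : MvPolynomial σ R,
        Polynomial.hasseDeriv i (aeval g P) = ∑ I ∈ T, c I * aeval g (hasseDeriv I P) := by
  classical
  cases nonempty_fintype σ
  let τ : Polynomial R →ₐ[R] Polynomial (Polynomial R) :=
    Polynomial.aeval (Polynomial.X + Polynomial.C Polynomial.X)
  have hdvd (h : σ) : Polynomial.X ∣ τ (g h) - Polynomial.C (g h) := by
    rw [Polynomial.X_dvd_iff, Polynomial.coeff_sub, coeff_aeval_X_add_C_X,
      Polynomial.hasseDeriv_zero', Polynomial.coeff_C_zero, sub_self]
  choose u hu using hdvd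
  have hprod (f : σ →₀ ℕ) : ∏ h, (τ (g h) - Polynomial.C (g h)) ^ f h =
      Polynomial.X ^ f.degree * ∏ h, u h ^ f h := by
    simp only [hu, mul_pow, Finset.prod_mul_distrib, Finset.prod_pow_eq_pow_sum,
      Finsupp.degree_eq_sum]
  set T := (Finsupp.finite_of_degree_le (σ := σ) i).toFinset
  refine ⟨T, fun f ↦ (∏ h, (τ (g h) - Polynomial.C (g h)) ^ f h).coeff i,
    fun I hI ↦ by simpa [T] using hI, fun P ↦ ?_⟩
  let a : σ → Polynomial (Polynomial R) := fun h ↦ Polynomial.C (g h)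
  have hcoeff (f : σ →₀ ℕ) :
      coeff f (translate a P) = Polynomial.C (aeval g (hasseDeriv f P)) := by
    rw [coeff_translate]
    exact (comp_aeval_apply g (Polynomial.CAlgHom (R := R)) _).symm
  have hexpand : τ (aeval g P) = ∑ f ∈ (translate a P).support ∪ T,
      coeff f (translate a P) * ∏ h, (τ (g h) - Polynomial.C (g h)) ^ f h := by
    rw [comp_aeval_apply, aeval_eq_sum_translate a]
    exact Finset.sum_subset Finset.subset_union_left fun f _ hf ↦ by
      rw [notMem_support_iff.1 hf, zero_mul]
  rw [← coeff_aeval_X_add_C_X, hexpand, Polynomial.finsetSum_coeff]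
  refine (Finset.sum_subset Finset.subset_union_right fun f _ hf ↦ ?_).symm.trans
    (Finset.sum_congr rfl fun f _ ↦ by rw [hcoeff, Polynomial.coeff_C_mul, mul_comm])
  have hlt : i < f.degree := by simpa [T] using hf
  rw [hcoeff, Polynomial.coeff_C_mul, hprod, Polynomial.coeff_X_pow_mul', if_neg hlt.not_ge,
    mul_zero]

theorem exists_det_ne_zero_of_row_eq_sum {n R ι : Type*} [CommRing R] [Fintype n] [DecidableEq n]
    {M : Matrix n n R} (hM : M.det ≠ 0) {T : n → Finset ι} {c : n → ι → R} {v : ι → n → R}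
    (hrow : ∀ i j, M i j = ∑ s ∈ T i, c i s * v s j) :
    ∃ s : n → ι, (∀ i, s i ∈ T i) ∧ (Matrix.of fun i ↦ v (s i)).det ≠ 0 := by
  classical
  have hexpand : M.det =
      ∑ s ∈ Fintype.piFinset T, (∏ i, c i (s i)) * (Matrix.of fun i ↦ v (s i)).det := by
    have hM' : M = Matrix.of fun i ↦ ∑ s ∈ T i, c i s • v s := by
      ext i j
      simp [hrow i j, Finset.sum_apply]
    rw [hM']
    refine (Matrix.detRowAlternating.toMultilinearMap.map_sum_finset _ T).trans
      (Finset.sum_congr rfl fun s _ ↦ ?_)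
    exact Matrix.detRowAlternating.toMultilinearMap.map_smul_univ _ _
  obtain ⟨s, hs, hne⟩ := Finset.exists_ne_zero_of_sum_ne_zero (hexpand ▸ hM)
  exact ⟨s, Fintype.mem_piFinset.1 hs, right_ne_zero_of_mul hne⟩

theorem exists_weight_injOn {σ : Type*} (E : Finset (σ →₀ ℕ)) :
    ∃ w : σ → ℕ, Set.InjOn (Finsupp.weight w) (E : Set (σ →₀ ℕ)) := by
  classical
  let L : (σ →₀ ℕ) →+ MvPolynomial σ ℤ := Finsupp.weight X
  have hL : Function.Injective L := fun e f hef ↦ by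
    ext h
    have hcoeff (u : σ →₀ ℕ) : coeff (Finsupp.single h 1) (L u) = u h := by
      simp only [L, Finsupp.weight_apply, Finsupp.sum, coeff_sum, coeff_smul, coeff_X,
        Finsupp.single_left_inj one_ne_zero]
      simpa using fun hu ↦ by simp [hu]
    exact_mod_cast (hcoeff e).symm.trans ((congrArg _ hef).trans (hcoeff f))
  have hprod : ∏ p ∈ E.offDiag, (L p.1 - L p.2) ≠ 0 := Finset.prod_ne_zero_iff.2 fun p hp ↦
    sub_ne_zero.2 (hL.ne (Finset.mem_offDiag.1 hp).2.2)
  obtain ⟨x, hx, hne⟩ : ∃ x ∈ Set.pi Set.univ fun _ : σ ↦ Set.range ((↑) : ℕ → ℤ),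
      eval x (∏ p ∈ E.offDiag, (L p.1 - L p.2)) ≠ 0 := by
    by_contra! hzero
    exact hprod (funext_set _ (fun _ ↦ Set.infinite_range_of_injective Nat.cast_injective)
      fun x hx ↦ by rw [hzero x hx, map_zero])
  choose w hw using fun h ↦ hx h trivial
  have heval (u : σ →₀ ℕ) : eval x (L u) = (Finsupp.weight w u : ℕ) := by
    simp [L, Finsupp.weight_apply, Finsupp.sum, ← hw]
  refine ⟨w, fun e he f hf hef ↦ by_contra fun hne' ↦ ?_⟩
  rw [map_prod, Finset.prod_ne_zero_iff] at hne
  refine hne (e, f) (Finset.mem_offDiag.2 ⟨he, hf, hne'⟩) ?_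
  rw [map_sub, heval, heval, hef, sub_self]

theorem aeval_X_pow_monomial {σ R : Type*} [CommSemiring R] (w : σ → ℕ) (e : σ →₀ ℕ) (c : R) :
    aeval (fun h ↦ (Polynomial.X : Polynomial R) ^ w h) (monomial e c) =
      Polynomial.monomial (Finsupp.weight w e) c := by
  rw [aeval_monomial, ← Polynomial.C_mul_X_pow_eq_monomial, Finsupp.weight_apply, Finsupp.prod,
    Finsupp.sum, ← Finset.prod_pow_eq_pow_sum]
  simp only [← pow_mul, smul_eq_mul, mul_comm, Polynomial.algebraMap_eq]

theorem eq_zero_of_aeval_X_pow_eq_zero {σ R : Type*} [CommSemiring R] {w : σ → ℕ}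
    {P : MvPolynomial σ R} (hw : Set.InjOn (Finsupp.weight w) (P.support : Set (σ →₀ ℕ)))
    (hP : aeval (fun h ↦ (Polynomial.X : Polynomial R) ^ w h) P = 0) : P = 0 := by
  classical
  by_contra hne
  obtain ⟨e, he⟩ := ne_zero_iff.1 hne
  have hcoeff := congrArg (Polynomial.coeff · (Finsupp.weight w e)) hP
  rw [P.as_sum, map_sum] at hcoeff
  simp only [aeval_X_pow_monomial, Polynomial.finsetSum_coeff, Polynomial.coeff_monomial,
    Polynomial.coeff_zero] at hcoeff
  rw [Finset.sum_eq_single e (fun f hf hfe ↦ if_neg fun h ↦ hfe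
    (hw hf (mem_support_iff.2 he) h)) (fun h ↦ absurd (mem_support_iff.2 he) h), if_pos rfl]
    at hcoeff
  exact he hcoeff

theorem exists_det_hasseDeriv_ne_zero {σ K : Type*} [Finite σ] [Field K] [CharZero K] {k : ℕ}
    {φ : Fin k → MvPolynomial σ K} (hφ : LinearIndependent K φ) :
    ∃ I : Fin k → σ →₀ ℕ, (∀ i, (I i).degree < k) ∧
      (Matrix.of fun i j ↦ hasseDeriv (I i) (φ j)).det ≠ 0 := by
  classical
  obtain ⟨w, hw⟩ := exists_weight_injOn (Finset.univ.biUnion fun j ↦ (φ j).support)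
  let κ : MvPolynomial σ K →ₐ[K] Polynomial K := aeval fun h ↦ Polynomial.X ^ w h
  have hκ : LinearIndependent K fun j ↦ κ (φ j) := by
    rw [Fintype.linearIndependent_iff] at hφ ⊢
    refine fun g hg ↦ hφ g (eq_zero_of_aeval_X_pow_eq_zero (hw.mono ?_) (by simpa [κ] using hg))
    exact Finset.coe_subset.2 (support_sum.trans (Finset.biUnion_mono fun j _ ↦ support_smul))
  choose T c hT hc using exists_hasseDeriv_aeval_eq_sum fun h ↦ (Polynomial.X : Polynomial K) ^ w h
  obtain ⟨I, hI, hdet⟩ := exists_det_ne_zero_of_row_eq_sum (wronskian_ne_zero hκ)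
    (v := fun I j ↦ κ (hasseDeriv I (φ j))) fun i j ↦ hc i (φ j)
  refine ⟨I, fun i ↦ (hT i _ (hI i)).trans_lt i.2, fun hzero ↦ hdet ?_⟩
  exact (AlgHom.map_det κ (Matrix.of fun i j ↦ hasseDeriv (I i) (φ j))).symm.trans
    (by rw [hzero, map_zero])

section Bilinear

variable {K M N Q : Type*} [Field K] [AddCommGroup M] [Module K M] [AddCommGroup N] [Module K N]
  [AddCommGroup Q] [Module K Q] (B : M →ₗ[K] N →ₗ[K] Q)

theorem exists_sum_eq_of_not_linearIndependent {k : ℕ} {m : Fin (k + 1) → M}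
    (hm : ¬ LinearIndependent K m) (n : Fin (k + 1) → N) :
    ∃ (m' : Fin k → M) (n' : Fin k → N), ∑ l, B (m l) (n l) = ∑ l, B (m' l) (n' l) := by
  obtain ⟨g, hg, i, hi⟩ := Fintype.not_linearIndependent_iff.1 hm
  refine ⟨fun l ↦ m (i.succAbove l),
    fun l ↦ n (i.succAbove l) - (g (i.succAbove l) / g i) • n i, ?_⟩
  have hmi : m i = -∑ l, (g (i.succAbove l) / g i) • m (i.succAbove l) := by
    rw [Fin.sum_univ_succAbove _ i, add_eq_zero_iff_eq_neg] at hg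
    rw [← inv_smul_smul₀ hi (m i), hg, smul_neg, Finset.smul_sum]
    simp only [smul_smul, div_eq_inv_mul]
  rw [Fin.sum_univ_succAbove _ i, hmi]
  simp only [map_neg, map_sum, LinearMap.neg_apply, LinearMap.sum_apply, map_sub, map_smul,
    LinearMap.smul_apply, Finset.sum_sub_distrib]
  abel

theorem exists_linearIndependent_sum_eq {k : ℕ} (m : Fin k → M) (n : Fin k → N) :
    ∃ k' ≤ k, ∃ (m' : Fin k' → M) (n' : Fin k' → N), LinearIndependent K m' ∧
      LinearIndependent K n' ∧ ∑ l, B (m l) (n l) = ∑ l, B (m' l) (n' l) := by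
  induction k with
  | zero => exact ⟨0, le_rfl, m, n, linearIndependent_empty_type, linearIndependent_empty_type, rfl⟩
  | succ k ih =>
    by_cases hm : LinearIndependent K m
    · by_cases hn : LinearIndependent K n
      · exact ⟨k + 1, le_rfl, m, n, hm, hn, rfl⟩
      obtain ⟨n', m', h⟩ := exists_sum_eq_of_not_linearIndependent B.flip hn m
      obtain ⟨k', hk', m'', n'', hm'', hn'', h''⟩ := ih m' n'
      exact ⟨k', hk'.trans k.le_succ, m'', n'', hm'', hn'', h.trans h''⟩
    · obtain ⟨m', n', h⟩ := exists_sum_eq_of_not_linearIndependent B hm n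
      obtain ⟨k', hk', m'', n'', hm'', hn'', h''⟩ := ih m' n'
      exact ⟨k', hk'.trans k.le_succ, m'', n'', hm'', hn'', h.trans h''⟩

end Bilinear

section SplitVariable

variable {n : ℕ} {R A : Type*} [CommRing R] [CommRing A] [Algebra R A]

/-- The product `V(X₀) * U(X₁, …, Xₙ)` of polynomials in separate variables, the
shape of the generalized Wronskians in the induction on the number of variables. -/
noncomputable def tensor :
    Polynomial R →ₗ[R] MvPolynomial (Fin n) R →ₗ[R] MvPolynomial (Fin (n + 1)) R :=
  (LinearMap.mul R _).compl₁₂ (Polynomial.aeval (X 0)).toLinearMap (rename Fin.succ).toLinearMap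

theorem tensor_apply (V : Polynomial R) (U : MvPolynomial (Fin n) R) :
    tensor V U = Polynomial.aeval (X 0) V * rename Fin.succ U := rfl

theorem finSuccEquiv_tensor (V : Polynomial R) (U : MvPolynomial (Fin n) R) :
    finSuccEquiv R n (tensor V U) = V.map C * Polynomial.C U := by
  have hV : finSuccEquiv R n (Polynomial.aeval (X 0) V) = V.map C := by
    rw [← Polynomial.aeval_algHom_apply, finSuccEquiv_X_zero, ← Polynomial.eval₂_C_X (p := V.map C),
      Polynomial.eval₂_map]
    rfl
  have hU : finSuccEquiv R n (rename Fin.succ U) = Polynomial.C U := by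
    have hcomp : (finSuccEquiv R n).toAlgHom.comp (rename Fin.succ) =
        (Polynomial.CAlgHom (R := MvPolynomial (Fin n) R)).restrictScalars R := by
      ext i : 1; simp [finSuccEquiv_X_succ]
    exact DFunLike.congr_fun hcomp U
  rw [tensor_apply, map_mul, hV, hU]

theorem coeff_tensor (V : Polynomial R) (U : MvPolynomial (Fin n) R) (i : ℕ) (m : Fin n →₀ ℕ) :
    coeff (m.cons i) (tensor V U) = V.coeff i * coeff m U := by
  rw [← finSuccEquiv_coeff_coeff, finSuccEquiv_tensor, Polynomial.coeff_mul_C, Polynomial.coeff_map,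
    coeff_C_mul]

theorem tensor_ne_zero [IsDomain R] {V : Polynomial R} {U : MvPolynomial (Fin n) R} (hV : V ≠ 0)
    (hU : U ≠ 0) : tensor V U ≠ 0 := by
  obtain ⟨m, hm⟩ := ne_zero_iff.1 hU
  refine ne_zero_iff.2 ⟨m.cons V.natDegree, ?_⟩
  rw [coeff_tensor]
  exact mul_ne_zero (Polynomial.leadingCoeff_ne_zero.2 hV) hm

theorem ext_cons {P Q : MvPolynomial (Fin (n + 1)) R}
    (h : ∀ i m, coeff (Finsupp.cons i m) P = coeff (Finsupp.cons i m) Q) : P = Q :=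
  MvPolynomial.ext _ _ fun f ↦ f.cons_tail ▸ h _ _

theorem multiChoose_cons (i j : ℕ) (f g : Fin n →₀ ℕ) :
    multiChoose (f.cons i) (g.cons j) = i.choose j * multiChoose f g := by
  simp [multiChoose, Fin.prod_univ_succ]

theorem hasseDeriv_tensor (V : Polynomial R) (U : MvPolynomial (Fin n) R) (j : ℕ)
    (I : Fin n →₀ ℕ) :
    hasseDeriv (I.cons j) (tensor V U) = tensor (Polynomial.hasseDeriv j V) (hasseDeriv I U) := by
  refine ext_cons fun i m ↦ ?_
  have hadd : m.cons i + I.cons j = (m + I).cons (i + j) := by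
    ext h
    cases h using Fin.cases <;> simp
  rw [coeff_hasseDeriv, hadd, coeff_tensor, coeff_tensor, coeff_hasseDeriv,
    Polynomial.hasseDeriv_coeff, multiChoose_cons]
  push_cast
  ring

theorem translate_tensor (a : Fin (n + 1) → A) (V : Polynomial R) (U : MvPolynomial (Fin n) R) :
    translate a (tensor V U) =
      tensor (Polynomial.aeval (Polynomial.X + Polynomial.C (a 0)) V)
        (translate (fun h ↦ a h.succ) U) := by
  rw [tensor_apply, tensor_apply, map_mul]
  congr 1
  · have hcomp : (translate a).comp (Polynomial.aeval (R := R) (X 0)) =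
        ((Polynomial.aeval (R := A) (X 0)).restrictScalars R).comp
          (Polynomial.aeval (Polynomial.X + Polynomial.C (a 0))) := by
      ext1; simp [translate, algebraMap_eq]
    exact DFunLike.congr_fun hcomp V
  · have hcomp : (translate a).comp (rename (R := R) Fin.succ) =
        ((rename (R := A) Fin.succ).restrictScalars R).comp (translate fun h ↦ a h.succ) := by
      ext i : 1; simp [translate]
    exact DFunLike.congr_fun hcomp U

variable {K : Type*} [Field K]

theorem exists_eq_sum_tensor {P : MvPolynomial (Fin (n + 1)) K} (hP : P ≠ 0) :
    ∃ k : ℕ, 0 < k ∧ k ≤ degreeOf 0 P + 1 ∧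
      ∃ (ψ : Fin k → Polynomial K) (φ : Fin k → MvPolynomial (Fin n) K),
        LinearIndependent K ψ ∧ LinearIndependent K φ ∧ P = ∑ l, tensor (ψ l) (φ l) := by
  have hsum : P = ∑ i : Fin (degreeOf 0 P + 1),
      tensor (Polynomial.X ^ (i : ℕ)) ((finSuccEquiv K n P).coeff i) := by
    refine (finSuccEquiv K n).injective ?_
    have hrange := (finSuccEquiv K n P).as_sum_range_C_mul_X_pow
    rw [natDegree_finSuccEquiv, ← Fin.sum_univ_eq_sum_range fun i ↦
      Polynomial.C ((finSuccEquiv K n P).coeff i) * Polynomial.X ^ i] at hrange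
    rw [map_sum]
    refine hrange.trans (Finset.sum_congr rfl fun i _ ↦ ?_)
    rw [finSuccEquiv_tensor, Polynomial.map_pow, Polynomial.map_X, mul_comm]
  obtain ⟨k, hk, ψ, φ, hψ, hφ, h⟩ := exists_linearIndependent_sum_eq (tensor (R := K) (n := n))
    (fun i : Fin (degreeOf 0 P + 1) ↦ Polynomial.X ^ (i : ℕ))
    fun i ↦ (finSuccEquiv K n P).coeff i
  refine ⟨k, Nat.pos_of_ne_zero ?_, hk, ψ, φ, hψ, hφ, hsum.trans h⟩
  rintro rfl
  exact hP (hsum.trans (h.trans (Fin.sum_univ_zero _)))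

theorem det_sum_tensor {k : ℕ} (V : Matrix (Fin k) (Fin k) (Polynomial R))
    (U : Matrix (Fin k) (Fin k) (MvPolynomial (Fin n) R)) :
    (Matrix.of fun i j ↦ ∑ l, tensor (V j l) (U i l)).det = tensor V.det U.det := by
  rw [tensor_apply, AlgHom.map_det, AlgHom.map_det, mul_comm, ← Matrix.det_transpose
    ((Polynomial.aeval _).mapMatrix V), ← Matrix.det_mul]
  congr 1
  ext1 i j
  simp only [Matrix.of_apply, Matrix.mul_apply, AlgHom.mapMatrix_apply, Matrix.map_apply,
    Matrix.transpose_apply, tensor_apply, mul_comm]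

/-- The generalized Wronskian of the coefficients of `P`, given by the derivatives `∂₀ʲ ∂^(I i) P`
with `j < k` in the first variable and the operators `I i` in the remaining ones. -/
noncomputable def genWronskian {k : ℕ} (I : Fin k → Fin n →₀ ℕ) (P : MvPolynomial (Fin (n + 1)) R) :
    MvPolynomial (Fin (n + 1)) R :=
  (Matrix.of fun i j : Fin k ↦ hasseDeriv ((I i).cons (j : ℕ)) P).det

theorem exists_genWronskian_eq_tensor [CharZero K] {P : MvPolynomial (Fin (n + 1)) K}
    (hP : P ≠ 0) :
    ∃ k : ℕ, 0 < k ∧ k ≤ degreeOf 0 P + 1 ∧ ∃ I : Fin k → Fin n →₀ ℕ, (∀ i, (I i).degree < k) ∧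
      ∃ (V : Polynomial K) (U : MvPolynomial (Fin n) K), V ≠ 0 ∧ U ≠ 0 ∧
        genWronskian I P = tensor V U := by
  obtain ⟨k, hk0, hk, ψ, φ, hψ, hφ, hsum⟩ := exists_eq_sum_tensor hP
  obtain ⟨I, hI, hU⟩ := exists_det_hasseDeriv_ne_zero hφ
  refine ⟨k, hk0, hk, I, hI, _, _, wronskian_ne_zero hψ, hU, ?_⟩
  rw [genWronskian, wronskian, ← det_sum_tensor]
  congr 1
  ext1 i j
  simp only [Matrix.of_apply, ← hasseDeriv_tensor, ← map_sum, ← hsum]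

theorem exists_smul_eq_tensor {f : R →+* K} (hf : Function.Injective f)
    {W : MvPolynomial (Fin (n + 1)) R} (hW0 : W ≠ 0) {V : Polynomial K} {U : MvPolynomial (Fin n) K}
    (hW : map f W = tensor V U) :
    ∃ c : R, c ≠ 0 ∧ ∃ (V' : Polynomial R) (m : Fin n →₀ ℕ) (i : ℕ),
      (∀ j, V'.coeff j = coeff (m.cons j) W) ∧
      c • W = tensor V' ((finSuccEquiv R n W).coeff i) := by
  have hcoeff (i : ℕ) (m : Fin n →₀ ℕ) : f (coeff (m.cons i) W) = V.coeff i * coeff m U := by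
    rw [← coeff_tensor, ← hW, coeff_map]
  obtain ⟨e, he⟩ := ne_zero_iff.1 hW0
  rw [← e.cons_tail] at he
  set m := e.tail
  set i := e 0
  obtain ⟨V', hV'⟩ := (Polynomial.mem_lifts _).1 ((Polynomial.lifts_iff_coeff_lifts _).2 fun j ↦
    ⟨coeff (m.cons j) W, (hcoeff j m).trans (Polynomial.coeff_mul_C V j (coeff m U)).symm⟩)
  have hV'coeff (j : ℕ) : V'.coeff j = coeff (m.cons j) W := hf <| by
    rw [← Polynomial.coeff_map, hV', Polynomial.coeff_mul_C, hcoeff]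
  refine ⟨coeff (m.cons i) W, he, V', m, i, hV'coeff, ext_cons fun j e' ↦ hf ?_⟩
  rw [coeff_smul, coeff_tensor, finSuccEquiv_coeff_coeff, hV'coeff, smul_eq_mul, map_mul, map_mul]
  simp only [hcoeff]
  ring

theorem map_hasseDeriv {σ S : Type*} [Finite σ] [CommRing S] (f : R →+* S) (I : σ →₀ ℕ)
    (P : MvPolynomial σ R) : map f (hasseDeriv I P) = hasseDeriv I (map f P) := by
  cases nonempty_fintype σ
  ext e
  rw [coeff_map, coeff_hasseDeriv, coeff_hasseDeriv, coeff_map, map_mul, map_natCast]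

theorem map_genWronskian {S : Type*} [CommRing S] (f : R →+* S) {k : ℕ}
    (I : Fin k → Fin n →₀ ℕ) (P : MvPolynomial (Fin (n + 1)) R) :
    map f (genWronskian I P) = genWronskian I (map f P) := by
  rw [genWronskian, RingHom.map_det]
  congr 1
  ext1 i j
  exact map_hasseDeriv f _ P

theorem exists_genWronskian_smul_eq_tensor {P : MvPolynomial (Fin (n + 1)) ℤ} (hP : P ≠ 0) :
    ∃ k : ℕ, 0 < k ∧ k ≤ degreeOf 0 P + 1 ∧ ∃ I : Fin k → Fin n →₀ ℕ, (∀ i, (I i).degree < k) ∧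
      genWronskian I P ≠ 0 ∧ ∃ c : ℤ, c ≠ 0 ∧ ∃ (V : Polynomial ℤ) (m : Fin n →₀ ℕ) (i : ℕ),
        (∀ j, V.coeff j = coeff (m.cons j) (genWronskian I P)) ∧
        c • genWronskian I P = tensor V ((finSuccEquiv ℤ n (genWronskian I P)).coeff i) := by
  set f := Int.castRingHom ℚ
  have hf : Function.Injective f := Int.cast_injective
  have hP' : map f P ≠ 0 := (map_ne_zero_iff _ (map_injective f hf)).2 hP
  obtain ⟨k, hk0, hk, I, hI, V, U, hV, hU, htensor⟩ := exists_genWronskian_eq_tensor hP'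
  classical rw [degreeOf_def, degrees_map_of_injective _ hf, ← degreeOf_def] at hk
  rw [← map_genWronskian] at htensor
  have hne : genWronskian I P ≠ 0 := fun h0 ↦
    tensor_ne_zero hV hU (by rw [← htensor, h0, map_zero])
  exact ⟨k, hk0, hk, I, hI, hne, exists_smul_eq_tensor hf hne htensor⟩

end SplitVariable

section Order

theorem isPrimitive_C_den_mul_X_sub_C_num (x : ℚ) :
    (Polynomial.C (x.den : ℤ) * Polynomial.X - Polynomial.C x.num).IsPrimitive := by
  refine Polynomial.isPrimitive_iff_isUnit_of_C_dvd.2 fun r hr ↦ ?_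
  rw [Polynomial.C_dvd_iff_dvd_coeff] at hr
  have hnum : r ∣ x.num := by simpa using hr 0
  have hden : r ∣ (x.den : ℤ) := by
    simpa only [Polynomial.coeff_sub, Polynomial.coeff_C_mul, Polynomial.coeff_X_one, mul_one,
      Polynomial.coeff_C_succ, sub_zero] using hr 1
  exact x.isCoprime_num_den.isUnit_of_dvd' hnum hden

theorem den_pow_dvd_leadingCoeff {x : ℚ} {l : ℕ} {V : Polynomial ℤ}
    (h : (Polynomial.X - Polynomial.C x) ^ l ∣ V.map (Int.castRingHom ℚ)) :
    (x.den : ℤ) ^ l ∣ V.leadingCoeff := by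
  have hden : (x.den : ℤ) ≠ 0 := by exact_mod_cast x.den_nz
  set L : Polynomial ℤ := Polynomial.C (x.den : ℤ) * Polynomial.X - Polynomial.C x.num with hL
  have hmap : L.map (Int.castRingHom ℚ) =
      Polynomial.C (x.den : ℚ) * (Polynomial.X - Polynomial.C x) := by
    rw [mul_sub, ← Polynomial.C_mul, mul_comm (x.den : ℚ) x, Rat.mul_den_eq_num]
    simp [hL]
  have hprim : (L ^ l).IsPrimitive := by
    induction l with
    | zero => exact Polynomial.isPrimitive_one
    | succ l ih =>
      exact (ih ((pow_dvd_pow _ l.le_succ).trans h)).mul (isPrimitive_C_den_mul_X_sub_C_num x)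
  have hdvd : L ^ l ∣ V := by
    rw [Polynomial.IsPrimitive.Int.dvd_iff_map_cast_dvd_map_cast _ _ hprim, Polynomial.map_pow,
      hmap, mul_pow, ← Polynomial.C_pow, Polynomial.C_mul_dvd (by positivity)]
    exact h
  have hlead : L.leadingCoeff = x.den := by
    rw [hL, sub_eq_add_neg, ← Polynomial.C_neg, Polynomial.leadingCoeff_linear hden]
  obtain ⟨q, rfl⟩ := hdvd
  exact ⟨q.leadingCoeff, by rw [Polynomial.leadingCoeff_mul, Polynomial.leadingCoeff_pow, hlead]⟩

theorem exists_coeff_ne_zero_den_pow_dvd_leadingCoeff {V : Polynomial ℤ} (hV : V ≠ 0) (x : ℚ) :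
    ∃ l : ℕ, (Polynomial.aeval (Polynomial.X + Polynomial.C x) V).coeff l ≠ 0 ∧
      (x.den : ℤ) ^ l ∣ V.leadingCoeff := by
  set V' := V.map (Int.castRingHom ℚ) with hV'
  have hcomp : Polynomial.aeval (Polynomial.X + Polynomial.C x) V = Polynomial.taylor x V' := by
    rw [Polynomial.taylor_apply, Polynomial.comp, hV', Polynomial.eval₂_map]
    exact congrArg (fun f ↦ Polynomial.eval₂ f _ V) (RingHom.ext_int _ _)
  refine ⟨V'.rootMultiplicity x, ?_,
    den_pow_dvd_leadingCoeff (Polynomial.pow_rootMultiplicity_dvd _ x)⟩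
  have hne : Polynomial.taylor x V' ≠ 0 := (Polynomial.taylor_eq_zero x V').not.2
    ((Polynomial.map_ne_zero_iff Int.cast_injective).2 hV)
  rw [hcomp, Polynomial.rootMultiplicity_eq_natTrailingDegree, ← Polynomial.taylor_apply]
  exact Polynomial.coeff_natTrailingDegree_ne_zero.2 hne

end Order

section RothLemma

theorem relWeight_cons {n : ℕ} (r : Fin (n + 1) → ℕ) (j : ℕ) (I : Fin n →₀ ℕ) :
    relWeight r (I.cons j) = j / r 0 + relWeight (fun h ↦ r h.succ) I := by
  simp [relWeight_apply, Fin.sum_univ_succ]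

theorem relWeight_le_degree_mul {σ : Type*} [Finite σ] {r : σ → ℕ} {c : ℝ}
    (hc : ∀ i, (r i : ℝ)⁻¹ ≤ c) (I : σ →₀ ℕ) : relWeight r I ≤ I.degree * c := by
  cases nonempty_fintype σ
  rw [relWeight_apply, Finsupp.degree_eq_sum, Nat.cast_sum, Finset.sum_mul]
  exact Finset.sum_le_sum fun i _ ↦ mul_le_mul_of_nonneg_left (hc i) (Nat.cast_nonneg _)

theorem relWeight_mul {σ : Type*} [Finite σ] (k : ℕ) (r : σ → ℕ) (I : σ →₀ ℕ) :
    relWeight (fun h ↦ k * r h) I = relWeight r I / k := by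
  cases nonempty_fintype σ
  simp only [relWeight_apply, Finset.sum_div, Nat.cast_mul, div_div, mul_comm]

theorem mul_sq_div_eight_le_sum_max {k r : ℕ} {c : ℝ} (hk : k ≤ r + 1) (hr : 0 < r) (hc0 : 0 ≤ c)
    (hc1 : c ≤ 1) : k * (c ^ 2 / 8) ≤ ∑ j : Fin k, max 0 (c - (j : ℕ) / (r : ℝ)) := by
  rw [Fin.sum_univ_eq_sum_range (fun j ↦ max 0 (c - (j : ℝ) / (r : ℝ))) k]
  have hr' : (1 : ℝ) ≤ r := by exact_mod_cast hr
  have hk' : (k : ℝ) ≤ r + 1 := by exact_mod_cast hk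
  set s := min k (⌊c * r / 2⌋₊ + 1) with hs
  have hs_ge : (k : ℝ) * c / 4 ≤ s := by
    rw [hs, Nat.cast_min, le_min_iff]
    constructor
    · nlinarith [Nat.cast_nonneg (α := ℝ) k]
    · have := Nat.lt_floor_add_one (c * r / 2)
      push_cast
      nlinarith
  have hterm (j : ℕ) (hj : j ∈ Finset.range s) : c / 2 ≤ max 0 (c - (j : ℝ) / (r : ℝ)) := by
    have hj' : j ≤ ⌊c * r / 2⌋₊ :=
      Nat.le_of_lt_succ ((Finset.mem_range.1 hj).trans_le (min_le_right _ _))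
    have hjr : (j : ℝ) / r ≤ c / 2 := by
      rw [div_le_iff₀ (by linarith)]
      linarith [(Nat.le_floor_iff (by positivity)).1 hj']
    exact le_max_of_le_right (by linarith)
  calc (k : ℝ) * (c ^ 2 / 8) ≤ s * (c / 2) := by nlinarith
    _ = ∑ j ∈ Finset.range s, c / 2 := by simp
    _ ≤ ∑ j ∈ Finset.range s, max 0 (c - (j : ℝ) / (r : ℝ)) := Finset.sum_le_sum hterm
    _ ≤ _ := Finset.sum_le_sum_of_subset_of_nonneg
        (Finset.range_subset_range.2 (min_le_left _ _)) fun _ _ _ ↦ le_max_left _ _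

theorem genWronskian_mem_indexIdeal {n k : ℕ} {R A : Type*} [CommRing R] [CommRing A] [Algebra R A]
    {a : Fin (n + 1) → A} {r : Fin (n + 1) → ℕ} {P : MvPolynomial (Fin (n + 1)) R} {θ δ : ℝ}
    (hP : P ∈ indexIdeal R a r θ) {I : Fin k → Fin n →₀ ℕ}
    (hI : ∀ i, relWeight (fun h ↦ r h.succ) (I i) ≤ δ) :
    genWronskian I P ∈ indexIdeal R a r (∑ j : Fin k, max 0 (θ - δ - (j : ℕ) / (r 0 : ℝ))) := by
  refine det_mem_indexIdeal (θ := fun j : Fin k ↦ max 0 (θ - δ - (j : ℕ) / (r 0 : ℝ)))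
    fun i j ↦ ?_
  rcases max_choice 0 (θ - δ - ((j : ℕ) : ℝ) / (r 0 : ℝ)) with h | h
  · exact indexIdeal_of_nonpos h.le _
  · rw [h]
    refine indexIdeal_antitone R a r ?_ (hasseDeriv_mem_indexIdeal hP _)
    rw [relWeight_cons]
    linarith [hI i]

theorem degreeOf_genWronskian_le {n k : ℕ} {R : Type*} [CommRing R] (I : Fin k → Fin n →₀ ℕ)
    (P : MvPolynomial (Fin (n + 1)) R) (h : Fin (n + 1)) :
    degreeOf h (genWronskian I P) ≤ k * degreeOf h P := by
  rw [genWronskian]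
  simpa only [Fintype.card_fin] using degreeOf_det_le
    (M := Matrix.of fun i j : Fin k ↦ hasseDeriv ((I i).cons (j : ℕ)) P)
    fun i j ↦ degreeOf_hasseDeriv_le h _ P

theorem log_l1Norm_genWronskian_le {n k : ℕ} {r : Fin (n + 1) → ℕ}
    {P : MvPolynomial (Fin (n + 1)) ℤ} {I : Fin k → Fin n →₀ ℕ} (hW : genWronskian I P ≠ 0)
    (hd : ∀ h, degreeOf h P ≤ r h) (hP : P ≠ 0) (hk0 : 0 < k) (hk : k ≤ r 0 + 1) :
    Real.log (l1Norm (genWronskian I P)) ≤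
      2 * k * (Real.log (l1Norm P) + ∑ h, (r h : ℝ)) := by
  have hdet := l1Norm_det_le
    (M := Matrix.of fun i j : Fin k ↦ hasseDeriv ((I i).cons (j : ℕ)) P)
    fun i j ↦ l1Norm_hasseDeriv_le hd _
  have hPpos : 0 < l1Norm P := one_pos.trans_le (one_le_l1Norm hP)
  have hle : l1Norm (genWronskian I P) ≤ (k : ℝ) ^ k * (2 ^ (∑ h, r h) * l1Norm P) ^ k := by
    rw [Fintype.card_fin] at hdet
    refine hdet.trans ?_
    gcongr
    exact_mod_cast k.factorial_le_pow
  have hlog := Real.log_le_log (one_pos.trans_le (one_le_l1Norm hW)) hle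
  rw [Real.log_mul (by positivity) (by positivity), Real.log_pow, Real.log_pow,
    Real.log_mul (by positivity) (by positivity), Real.log_pow, Nat.cast_sum] at hlog
  have hsum : (r 0 : ℝ) ≤ ∑ h, (r h : ℝ) :=
    Finset.single_le_sum (f := fun h ↦ (r h : ℝ)) (fun _ _ ↦ Nat.cast_nonneg _) (Finset.mem_univ 0)
  have hk' : (k : ℝ) ≤ r 0 + 1 := by exact_mod_cast hk
  have hlogk : Real.log k ≤ k - 1 := Real.log_le_sub_one_of_pos (by positivity)
  have hlog2 : (∑ h, (r h : ℝ)) * Real.log 2 ≤ ∑ h, (r h : ℝ) :=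
    mul_le_of_le_one_right (by positivity) (by linarith [Real.log_two_lt_d9])
  have hlogP := Real.log_nonneg (one_le_l1Norm hP)
  calc _ ≤ k * (Real.log k + ((∑ h, (r h : ℝ)) * Real.log 2 + Real.log (l1Norm P))) := by
        linarith
    _ ≤ k * (2 * (Real.log (l1Norm P) + ∑ h, (r h : ℝ))) := by
        gcongr
        linarith
    _ = _ := by ring

theorem l1Norm_coeff_finSuccEquiv_le {n : ℕ} {R : Type*} [NormedCommRing R]
    (P : MvPolynomial (Fin (n + 1)) R) (i : ℕ) :
    l1Norm ((finSuccEquiv R n P).coeff i) ≤ l1Norm P := by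
  classical
  have hinj : Function.Injective (Finsupp.cons i : (Fin n →₀ ℕ) → _) := fun _ _ h ↦
    (Finsupp.cons_injective2 h).2
  simp only [l1Norm, finSuccEquiv_coeff_coeff]
  rw [← Finset.sum_image (f := fun e ↦ ‖coeff e P‖) hinj.injOn]
  refine Finset.sum_le_sum_of_subset_of_nonneg (fun e he ↦ ?_) fun _ _ _ ↦ norm_nonneg _
  obtain ⟨m, hm, rfl⟩ := Finset.mem_image.1 he
  rwa [mem_support_iff, ← finSuccEquiv_coeff_coeff, ← mem_support_iff]

/-- The hypotheses of Roth's lemma with parameter `δ`: `P` is a nonzero polynomial whose degree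
bounds `r` grow fast from each variable to the next, and whose size is small compared with the
heights `(a h).den ^ r h`. -/
structure IsRothAdmissible {m : ℕ} (δ : ℝ) (r : Fin m → ℕ) (a : Fin m → ℚ)
    (P : MvPolynomial (Fin m) ℤ) : Prop where
  pos : ∀ h, 0 < r h
  ne_zero : P ≠ 0
  degreeOf_le : ∀ h, degreeOf h P ≤ r h
  le_mul : ∀ i j, i < j → (r i : ℝ) ≤ δ * r j
  log_l1Norm_add_le : ∀ h,
    Real.log (l1Norm P) + ∑ i, (r i : ℝ) ≤ δ * (r h * Real.log (a h).den)

namespace IsRothAdmissible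

variable {m : ℕ} {δ : ℝ} {r : Fin (m + 1) → ℕ} {a : Fin (m + 1) → ℚ}
  {P : MvPolynomial (Fin (m + 1)) ℤ} {k : ℕ} {I : Fin k → Fin m →₀ ℕ}

theorem coeff_genWronskian (h : IsRothAdmissible δ r a P) (hδ : 0 ≤ δ) (hk0 : 0 < k)
    (hk : k ≤ r 0 + 1) (hW : genWronskian I P ≠ 0) {i : ℕ}
    (hne : (finSuccEquiv ℤ m (genWronskian I P)).coeff i ≠ 0) :
    IsRothAdmissible (3 * δ) (fun h ↦ k * r h.succ) (fun h ↦ a h.succ)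
      ((finSuccEquiv ℤ m (genWronskian I P)).coeff i) where
  pos j := Nat.mul_pos hk0 (h.pos _)
  ne_zero := hne
  degreeOf_le j := (degreeOf_coeff_finSuccEquiv _ j i).trans <|
    (degreeOf_genWronskian_le I P _).trans (Nat.mul_le_mul_left k (h.degreeOf_le _))
  le_mul i j hij := by
    have hle := h.le_mul i.succ j.succ (Fin.succ_lt_succ_iff.2 hij)
    push_cast
    have hk' : (0 : ℝ) ≤ k * (δ * r j.succ) := by positivity
    nlinarith
  log_l1Norm_add_le j := by
    have hlog := (Real.log_le_log (one_pos.trans_le (one_le_l1Norm hne))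
      (l1Norm_coeff_finSuccEquiv_le _ i)).trans
        (log_l1Norm_genWronskian_le hW h.degreeOf_le h.ne_zero hk0 hk)
    have hsum : ∑ h : Fin m, (r h.succ : ℝ) ≤ Real.log (l1Norm P) + ∑ h, (r h : ℝ) := by
      rw [Fin.sum_univ_succ]
      linarith [Real.log_nonneg (one_le_l1Norm h.ne_zero), Nat.cast_nonneg (α := ℝ) (r 0)]
    have hle := h.log_l1Norm_add_le j.succ
    push_cast
    rw [← Finset.mul_sum]
    calc _ ≤ k * (3 * (Real.log (l1Norm P) + ∑ h, (r h : ℝ))) := by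
          linarith [mul_le_mul_of_nonneg_left hsum (Nat.cast_nonneg k)]
      _ ≤ k * (3 * (δ * (r j.succ * Real.log (a j.succ).den))) := by gcongr
      _ = _ := by ring

theorem exists_coeff_ne_zero_div_le (h : IsRothAdmissible δ r a P) (hδ : 0 < δ) (hk0 : 0 < k)
    (hk : k ≤ r 0 + 1) (hW : genWronskian I P ≠ 0) {V : Polynomial ℤ} (hV : V ≠ 0)
    (hVW : |(V.leadingCoeff : ℝ)| ≤ l1Norm (genWronskian I P)) :
    ∃ l : ℕ, (Polynomial.aeval (Polynomial.X + Polynomial.C (a 0)) V).coeff l ≠ 0 ∧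
      (l : ℝ) / r 0 ≤ 2 * k * δ := by
  obtain ⟨l, hl, hdvd⟩ := exists_coeff_ne_zero_den_pow_dvd_leadingCoeff hV (a 0)
  refine ⟨l, hl, ?_⟩
  have hr0 : (0 : ℝ) < r 0 := Nat.cast_pos.2 (h.pos 0)
  have hpow : ((a 0).den : ℝ) ^ l ≤ l1Norm (genWronskian I P) := by
    refine le_trans ?_ hVW
    exact_mod_cast Int.le_of_dvd (abs_pos.2 (Polynomial.leadingCoeff_ne_zero.2 hV))
      ((dvd_abs _ _).2 hdvd)
  have hlog := Real.log_le_log (by have := (a 0).den_pos; positivity) hpow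
  rw [Real.log_pow] at hlog
  have hpos : 0 < Real.log (l1Norm P) + ∑ h, (r h : ℝ) := by
    have hsum : 0 ≤ ∑ h : Fin m, (r h.succ : ℝ) := by positivity
    rw [Fin.sum_univ_succ]
    linarith [Real.log_nonneg (one_le_l1Norm h.ne_zero)]
  have hden : 0 < Real.log (a 0).den := pos_of_mul_pos_right
    (pos_of_mul_pos_right (hpos.trans_le (h.log_l1Norm_add_le 0)) hδ.le) hr0.le
  rw [div_le_iff₀ hr0]
  refine le_of_mul_le_mul_right ?_ hden
  calc (l : ℝ) * Real.log (a 0).den ≤ 2 * k * (Real.log (l1Norm P) + ∑ h, (r h : ℝ)) :=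
        hlog.trans (log_l1Norm_genWronskian_le hW h.degreeOf_le h.ne_zero hk0 hk)
    _ ≤ 2 * k * (δ * (r 0 * Real.log (a 0).den)) := by
        gcongr
        exact h.log_l1Norm_add_le 0
    _ = _ := by ring

theorem mono {m : ℕ} {δ δ' : ℝ} {r : Fin m → ℕ} {a : Fin m → ℚ} {P : MvPolynomial (Fin m) ℤ}
    (h : IsRothAdmissible δ r a P) (hδ : δ ≤ δ') : IsRothAdmissible δ' r a P where
  pos := h.pos
  ne_zero := h.ne_zero
  degreeOf_le := h.degreeOf_le
  le_mul i j hij := (h.le_mul i j hij).trans (by gcongr)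
  log_l1Norm_add_le j := (h.log_l1Norm_add_le j).trans <| mul_le_mul_of_nonneg_right hδ <|
    mul_nonneg (Nat.cast_nonneg _) (Real.log_natCast_nonneg _)

theorem relWeight_succ_le (h : IsRothAdmissible δ r a P) (hδ : 0 ≤ δ) {J : Fin m →₀ ℕ}
    (hJ : J.degree ≤ r 0) : relWeight (fun h ↦ r h.succ) J ≤ δ := by
  have hr0 : (0 : ℝ) < r 0 := Nat.cast_pos.2 (h.pos 0)
  have hinv (j : Fin m) : (r j.succ : ℝ)⁻¹ ≤ δ / r 0 := by
    rw [inv_le_iff_one_le_mul₀ (Nat.cast_pos.2 (h.pos _)), div_mul_eq_mul_div, le_div_iff₀ hr0,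
      one_mul]
    exact h.le_mul 0 j.succ j.succ_pos
  calc relWeight (fun h ↦ r h.succ) J ≤ J.degree * (δ / r 0) := relWeight_le_degree_mul hinv J
    _ ≤ r 0 * (δ / r 0) := by gcongr
    _ = δ := mul_div_cancel₀ _ hr0.ne'

theorem notMem_indexIdeal (h : IsRothAdmissible δ r a P) {ε : ℝ} (hε : 0 < ε) (hε1 : ε ≤ 1)
    (hδ : 0 < δ) (hδε : δ ≤ ε ^ 2 / 400)
    (ih : ∀ (r' : Fin m → ℕ) (a' : Fin m → ℚ) (P' : MvPolynomial (Fin m) ℤ),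
      IsRothAdmissible (3 * δ) r' a' P' → P' ∉ indexIdeal ℤ a' r' (ε ^ 2 / 100)) :
    P ∉ indexIdeal ℤ a r ε := by
  intro hmem
  obtain ⟨k, hk0, hk, I, hI, hW, c, hc, V, m', i, hV, htensor⟩ :=
    exists_genWronskian_smul_eq_tensor h.ne_zero
  replace hk : k ≤ r 0 + 1 := hk.trans (Nat.succ_le_succ (h.degreeOf_le 0))
  have hne : tensor V ((finSuccEquiv ℤ m (genWronskian I P)).coeff i) ≠ 0 :=
    htensor ▸ smul_ne_zero hc hW
  have hV0 : V ≠ 0 := by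
    rintro rfl
    simp at hne
  have hU0 : (finSuccEquiv ℤ m (genWronskian I P)).coeff i ≠ 0 := fun h0 ↦
    hne (by rw [h0, map_zero])
  obtain ⟨l, hl, hlr⟩ := h.exists_coeff_ne_zero_div_le hδ hk0 hk hW hV0
    (by rw [Polynomial.leadingCoeff, hV]; exact norm_coeff_le_l1Norm (genWronskian I P) _)
  obtain ⟨J, hJ, hJr⟩ : ∃ J, coeff J (translate (fun h ↦ a h.succ)
      ((finSuccEquiv ℤ m (genWronskian I P)).coeff i)) ≠ 0 ∧
        relWeight (fun h ↦ k * r h.succ) J < ε ^ 2 / 100 := by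
    have hnot := ih _ _ _ (h.coeff_genWronskian hδ.le hk0 hk hW hU0)
    simpa only [mem_indexIdeal, not_forall, not_le, exists_prop] using hnot
  have hcoeff : coeff (J.cons l) (translate a (genWronskian I P)) ≠ 0 := fun h0 ↦ by
    have h1 := congrArg (fun Q ↦ coeff (J.cons l) (translate a Q)) htensor
    simp only [map_smul, coeff_smul, h0, smul_zero, translate_tensor, coeff_tensor] at h1
    exact mul_ne_zero hl hJ h1.symm
  have hIr (i) : relWeight (fun h ↦ r h.succ) (I i) ≤ δ :=
    h.relWeight_succ_le hδ.le (Nat.le_of_lt_succ ((hI i).trans_le hk))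
  have hlow := mul_sq_div_eight_le_sum_max hk (h.pos 0) (c := ε - δ) (by nlinarith) (by linarith)
  have hweight := genWronskian_mem_indexIdeal hmem hIr _ hcoeff
  rw [relWeight_mul, div_lt_iff₀ (by positivity)] at hJr
  rw [relWeight_cons] at hweight
  have hk' : (0 : ℝ) < k := Nat.cast_pos.2 hk0
  have hfinal : (ε - δ) ^ 2 / 8 < 2 * δ + ε ^ 2 / 100 := by
    refine lt_of_mul_lt_mul_left ?_ hk'.le
    linarith
  nlinarith

end IsRothAdmissible

theorem roth_lemma (m : ℕ) {ε : ℝ} (hε : 0 < ε) :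
    ∃ δ > 0, ∀ (r : Fin m → ℕ) (a : Fin m → ℚ) (P : MvPolynomial (Fin m) ℤ),
      IsRothAdmissible δ r a P → P ∉ indexIdeal ℤ a r ε := by
  induction m generalizing ε with
  | zero =>
    refine ⟨1, one_pos, fun r a P h hmem ↦ ?_⟩
    obtain ⟨c, rfl⟩ := C_surjective (Fin 0) P
    have hc : c ≠ 0 := fun hc ↦ h.ne_zero (by rw [hc, C_0])
    refine hε.not_ge ?_
    rw [← map_zero (relWeight r)]
    refine mem_indexIdeal.1 hmem 0 ?_
    rw [translate, aeval_C, IsScalarTower.algebraMap_apply ℤ ℚ, algebraMap_eq, coeff_zero_C]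
    exact Int.cast_ne_zero.2 hc
  | succ m ih =>
    set e := min ε 1
    have he0 : 0 < e := lt_min hε one_pos
    obtain ⟨δ, hδ, hroth⟩ := ih (ε := e ^ 2 / 100) (by positivity)
    refine ⟨min (δ / 3) (e ^ 2 / 400), by positivity, fun r a P h hmem ↦ ?_⟩
    refine h.notMem_indexIdeal he0 (min_le_right _ _) (by positivity) (min_le_right _ _)
      (fun r' a' P' h' ↦ hroth r' a' P' (h'.mono ?_))
      (indexIdeal_antitone ℤ a r (min_le_left _ _) hmem)
    linarith [min_le_left (δ / 3) (e ^ 2 / 400)]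

end RothLemma

section PowerRepresentation

theorem natDegree_X_mul_sub_C_mul_lt {R : Type*} [CommRing R] {p q : Polynomial R} (hp : p.Monic)
    (hq : q.natDegree < p.natDegree) :
    (Polynomial.X * q - Polynomial.C (q.coeff (p.natDegree - 1)) * p).natDegree < p.natDegree := by
  refine Nat.lt_of_le_pred (Nat.zero_lt_of_lt hq)
    (Polynomial.natDegree_le_iff_coeff_eq_zero.2 fun j hj ↦ ?_)
  obtain ⟨j, rfl⟩ := Nat.exists_eq_succ_of_ne_zero (Nat.ne_zero_of_lt hj)
  rw [Nat.succ_eq_add_one, Polynomial.coeff_sub, Polynomial.coeff_X_mul, Polynomial.coeff_C_mul]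
  rcases (Nat.le_of_pred_lt hj).eq_or_lt with hj | hj
  · have hlead : p.coeff (j + 1) = 1 := by
      rw [← Nat.succ_eq_add_one, ← hj, hp.coeff_natDegree]
    rw [hlead, hj, Nat.succ_sub_one, mul_one, sub_self]
  · rw [Polynomial.coeff_eq_zero_of_natDegree_lt hj, mul_zero, sub_zero]
    exact Polynomial.coeff_eq_zero_of_natDegree_lt (by omega)

theorem exists_aeval_eq_pow {A : Type*} [CommRing A] [Nontrivial A] {β : A} (hβ : IsIntegral ℤ β) :
    ∃ H : ℝ, 1 ≤ H ∧ ∀ n : ℕ, ∃ q : Polynomial ℤ, q.natDegree < (minpoly ℤ β).natDegree ∧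
      (∀ j, |(q.coeff j : ℝ)| ≤ H ^ n) ∧ Polynomial.aeval β q = β ^ n := by
  set p := minpoly ℤ β
  have hd : 0 < p.natDegree := minpoly.natDegree_pos hβ
  obtain ⟨M, hM⟩ : ∃ M : ℝ, ∀ j, |(p.coeff j : ℝ)| ≤ M := by
    refine ⟨∑ j ∈ p.support, |(p.coeff j : ℝ)|, fun j ↦ ?_⟩
    by_cases hj : j ∈ p.support
    · exact Finset.single_le_sum (f := fun j ↦ |(p.coeff j : ℝ)|) (fun _ _ ↦ abs_nonneg _) hj
    · rw [Polynomial.notMem_support_iff.1 hj, Int.cast_zero, abs_zero]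
      positivity
  have hM0 : 0 ≤ M := (abs_nonneg _).trans (hM 0)
  refine ⟨1 + M, by linarith, fun n ↦ ?_⟩
  induction n with
  | zero =>
    refine ⟨1, by simpa using hd, fun j ↦ ?_, by simp⟩
    rw [Polynomial.coeff_one]
    split_ifs <;> simp
  | succ n ih =>
    obtain ⟨q, hqd, hqc, hq⟩ := ih
    refine ⟨Polynomial.X * q - Polynomial.C (q.coeff (p.natDegree - 1)) * p,
      natDegree_X_mul_sub_C_mul_lt (minpoly.monic hβ) hqd, fun j ↦ ?_, ?_⟩
    · have hX : |((Polynomial.X * q).coeff j : ℝ)| ≤ (1 + M) ^ n := by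
        cases j with
        | zero => simpa using by positivity
        | succ j => simpa using hqc j
      rw [Polynomial.coeff_sub, Polynomial.coeff_C_mul, Int.cast_sub, Int.cast_mul]
      calc _ ≤ (1 + M) ^ n + (1 + M) ^ n * M := (abs_sub _ _).trans <| add_le_add hX <| by
            rw [abs_mul]
            exact mul_le_mul (hqc _) (hM j) (abs_nonneg _) (by positivity)
        _ = (1 + M) ^ (n + 1) := by ring
    · rw [map_sub, map_mul, map_mul, minpoly.aeval, Polynomial.aeval_X, hq, mul_zero, sub_zero,
        pow_succ']

theorem exists_pow_mul_pow_eq_sum {A : Type*} [CommRing A] [Nontrivial A] {α : A}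
    (hα : IsAlgebraic ℤ α) :
    ∃ (a : ℤ) (β : A) (d : ℕ) (H : ℝ), a ≠ 0 ∧ 1 ≤ H ∧ ∀ N n : ℕ, n ≤ N →
      ∃ c : Fin d → ℤ, (∀ j, |(c j : ℝ)| ≤ H ^ N) ∧
        a ^ N * α ^ n = ∑ j, (c j : A) * β ^ (j : ℕ) := by
  obtain ⟨a, ha, hβ⟩ := hα.exists_integral_multiple
  obtain ⟨H, hH, hpow⟩ := exists_aeval_eq_pow hβ
  have ha1 : (1 : ℝ) ≤ |(a : ℝ)| := by exact_mod_cast Int.one_le_abs ha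
  refine ⟨a, a • α, (minpoly ℤ (a • α)).natDegree, |(a : ℝ)| * H, ha,
    one_le_mul_of_one_le_of_one_le ha1 hH, fun N n hn ↦ ?_⟩
  obtain ⟨q, hqd, hqc, hq⟩ := hpow n
  refine ⟨fun j ↦ a ^ (N - n) * q.coeff j, fun j ↦ ?_, ?_⟩
  · rw [Int.cast_mul, Int.cast_pow, abs_mul, abs_pow, mul_pow]
    gcongr
    · exact N.sub_le n
    · exact (hqc j).trans (pow_le_pow_right₀ hH hn)
  · rw [Polynomial.aeval_eq_sum_range' hqd, Finset.sum_range] at hq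
    calc (a : A) ^ N * α ^ n = a ^ (N - n) * (a • α) ^ n := by
          rw [zsmul_eq_mul, mul_pow, ← mul_assoc, ← pow_add, Nat.sub_add_cancel hn]
      _ = _ := by
          rw [← hq, Finset.mul_sum]
          refine Finset.sum_congr rfl fun j _ ↦ ?_
          simp only [zsmul_eq_mul]
          push_cast
          ring

end PowerRepresentation

section Siegel

attribute [local instance] Matrix.seminormedAddCommGroup in
theorem exists_ne_zero_mulVec_eq_zero {ι κ : Type*} [Fintype ι] [Fintype κ] [Nonempty ι]
    (M : Matrix κ ι ℤ) {B : ℝ} (hB : 1 ≤ B) (hM : ∀ k i, |(M k i : ℝ)| ≤ B)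
    (hcard : 2 * Fintype.card κ ≤ Fintype.card ι) :
    ∃ t : ι → ℤ, t ≠ 0 ∧ M.mulVec t = 0 ∧ ∀ i, |(t i : ℝ)| ≤ Fintype.card ι * B := by
  have hι : (1 : ℝ) ≤ Fintype.card ι := by exact_mod_cast Fintype.card_pos (α := ι)
  rcases isEmpty_or_nonempty κ with hκ | hκ
  · refine ⟨1, one_ne_zero, Subsingleton.elim _ _, fun i ↦ ?_⟩
    rw [Pi.one_apply, Int.cast_one, abs_one]
    exact one_le_mul_of_one_le_of_one_le hι hB
  have hκ0 : 0 < Fintype.card κ := Fintype.card_pos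
  obtain ⟨t, ht0, ht, hnorm⟩ := Int.Matrix.exists_ne_zero_int_vec_norm_le M (by omega) hκ0
  refine ⟨t, ht0, ht, fun i ↦ (norm_le_pi_norm t i).trans (hnorm.trans ?_)⟩
  have hκ0' : (0 : ℝ) < Fintype.card κ := by exact_mod_cast hκ0
  have hcard' : 2 * (Fintype.card κ : ℝ) ≤ Fintype.card ι := by exact_mod_cast hcard
  have hMB : max 1 ‖M‖ ≤ B := max_le hB ((Matrix.norm_le_iff (zero_le_one.trans hB)).2 hM)
  calc _ ≤ ((Fintype.card ι : ℝ) * max 1 ‖M‖) ^ (1 : ℝ) := by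
        refine Real.rpow_le_rpow_of_exponent_le
          (one_le_mul_of_one_le_of_one_le hι (le_max_left _ _)) ?_
        rw [div_le_one (by linarith)]
        linarith
    _ ≤ _ := by
        rw [Real.rpow_one]
        gcongr

theorem exists_ne_zero_sum_mul_pow_eq_zero {A : Type*} [CommRing A] [IsDomain A] [CharZero A]
    {α : A} (hα : IsAlgebraic ℤ α) :
    ∃ (d : ℕ) (H : ℝ), 1 ≤ H ∧ ∀ {ι κ : Type*} [Fintype ι] [Fintype κ] [Nonempty ι]
      (c : κ → ι → ℕ) (n : κ → ι → ℕ) (N : ℕ) (B : ℝ), 1 ≤ B → (∀ k i, (c k i : ℝ) ≤ B) →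
      (∀ k i, n k i ≤ N) → 2 * (Fintype.card κ * d) ≤ Fintype.card ι →
      ∃ t : ι → ℤ, t ≠ 0 ∧ (∀ k, ∑ i, (c k i * t i : A) * α ^ n k i = 0) ∧
        ∀ i, |(t i : ℝ)| ≤ Fintype.card ι * (B * H ^ N) := by
  obtain ⟨a, β, d, H, ha, hH, hrep⟩ := exists_pow_mul_pow_eq_sum hα
  refine ⟨d, H, hH, fun {ι κ} _ _ _ c n N B hB hc hn hcard ↦ ?_⟩
  choose b hb hαb using fun k i ↦ hrep N (n k i) (hn k i)
  obtain ⟨t, ht0, ht, hbound⟩ := exists_ne_zero_mulVec_eq_zero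
    (Matrix.of fun (kj : κ × Fin d) i ↦ c kj.1 i * b kj.1 i kj.2) (B := B * H ^ N)
    (one_le_mul_of_one_le_of_one_le hB (one_le_pow₀ hH))
    (fun kj i ↦ by
      rw [Matrix.of_apply, Int.cast_mul, abs_mul, Int.cast_natCast, Nat.abs_cast]
      exact mul_le_mul (hc _ _) (hb _ _ _) (abs_nonneg _) (by linarith))
    (by rwa [Fintype.card_prod, Fintype.card_fin])
  refine ⟨t, ht0, fun k ↦ ?_, hbound⟩
  have ha' : (a : A) ^ N ≠ 0 := pow_ne_zero _ (Int.cast_ne_zero.2 ha)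
  refine (mul_eq_zero_iff_left ha').1 ?_
  calc (a : A) ^ N * ∑ i, (c k i * t i : A) * α ^ n k i
      = ∑ i, ∑ j, (c k i * b k i j * t i : ℤ) * β ^ (j : ℕ) := by
        rw [Finset.mul_sum]
        refine Finset.sum_congr rfl fun i _ ↦ ?_
        rw [mul_left_comm, hαb, Finset.mul_sum]
        refine Finset.sum_congr rfl fun j _ ↦ ?_
        push_cast
        ring
    _ = ∑ j, ((∑ i, c k i * b k i j * t i : ℤ) : A) * β ^ (j : ℕ) := by
        rw [Finset.sum_comm]
        simp only [Int.cast_sum, Finset.sum_mul]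
    _ = 0 := by
        refine Finset.sum_eq_zero fun j _ ↦ ?_
        have hkj : ∑ i, c k i * b k i j * t i = 0 := congrFun ht (k, j)
        rw [hkj, Int.cast_zero, zero_mul]

end Siegel

section Counting

variable {σ : Type*} [Fintype σ] [DecidableEq σ]

theorem sum_exp_mul_half_sub_div_le {r : ℕ} (hr : 0 < r) (t : ℝ) :
    ∑ i ∈ Finset.range (r + 1), Real.exp (t * (1 / 2 - (i : ℝ) / r)) ≤
      (r + 1) * Real.exp (t ^ 2 / 8) := by
  have hr' : (0 : ℝ) < r := Nat.cast_pos.2 hr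
  have hpair (i : ℕ) (hi : i ∈ Finset.range (r + 1)) :
      Real.exp (t * (1 / 2 - (i : ℝ) / r)) + Real.exp (t * (1 / 2 - ((r - i : ℕ) : ℝ) / r)) ≤
        2 * Real.exp (t ^ 2 / 8) := by
    have hir : i ≤ r := Nat.le_of_lt_succ (Finset.mem_range.1 hi)
    have hneg : t * (1 / 2 - ((r - i : ℕ) : ℝ) / r) = -(t * (1 / 2 - (i : ℝ) / r)) := by
      rw [Nat.cast_sub hir]
      field_simp
      ring
    have hi1 : (i : ℝ) / r ≤ 1 := (div_le_one hr').2 (Nat.cast_le.2 hir)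
    have hi0 : 0 ≤ (i : ℝ) / r := by positivity
    have hsq : (t * (1 / 2 - (i : ℝ) / r)) ^ 2 / 2 ≤ t ^ 2 / 8 := by
      have : (1 / 2 - (i : ℝ) / r) ^ 2 ≤ 1 / 4 := by nlinarith
      rw [mul_pow]
      nlinarith [sq_nonneg t]
    have hcosh := (Real.cosh_le_exp_half_sq _).trans (Real.exp_le_exp.2 hsq)
    rw [Real.cosh_eq] at hcosh
    rw [hneg]
    linarith
  have hsum := Finset.sum_le_sum hpair
  rw [Finset.sum_add_distrib, Finset.sum_flip (fun i ↦ Real.exp (t * (1 / 2 - (i : ℝ) / r))),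
    Finset.sum_const, Finset.card_range, nsmul_eq_mul] at hsum
  push_cast at hsum
  linarith

/-- The exponents of the monomials of degree at most `r i` in each variable `i`. -/
noncomputable def exponentBox (r : σ → ℕ) : Finset (σ →₀ ℕ) :=
  (Fintype.piFinset fun i ↦ Finset.range (r i + 1)).map Finsupp.equivFunOnFinite.symm.toEmbedding

theorem mem_exponentBox {r : σ → ℕ} {e : σ →₀ ℕ} : e ∈ exponentBox r ↔ ∀ i, e i ≤ r i := by
  simp [exponentBox, Finset.mem_map_equiv]

theorem card_exponentBox (r : σ → ℕ) : (exponentBox r).card = ∏ i, (r i + 1) := by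
  simp [exponentBox]

theorem card_exponentBox_le (r : σ → ℕ) : (exponentBox r).card ≤ 2 ^ ∑ i, r i := by
  rw [card_exponentBox, ← Finset.prod_pow_eq_pow_sum]
  exact Finset.prod_le_prod' fun i _ ↦ Nat.lt_two_pow_self

theorem card_filter_relWeight_le {r : σ → ℕ} (hr : ∀ i, 0 < r i) {ε : ℝ} (hε : 0 ≤ ε) :
    (((exponentBox r).filter (relWeight r · < Fintype.card σ * (1 / 2 - ε))).card : ℝ) ≤
      (exponentBox r).card * Real.exp (-(2 * ε ^ 2 * Fintype.card σ)) := by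
  set θ : ℝ := Fintype.card σ * (1 / 2 - ε) with hθ
  have hexp (I : σ →₀ ℕ) : Real.exp (4 * ε * (θ - relWeight r I)) =
      Real.exp (-(4 * ε ^ 2 * Fintype.card σ)) *
        ∏ i, Real.exp (4 * ε * (1 / 2 - (I i : ℝ) / r i)) := by
    rw [← Real.exp_sum, ← Real.exp_add, ← Finset.mul_sum, Finset.sum_sub_distrib, relWeight_apply,
      Finset.sum_const, Finset.card_univ, nsmul_eq_mul, hθ]
    ring_nf
  calc _ = ∑ I ∈ exponentBox r with relWeight r I < θ, (1 : ℝ) := by simp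
    _ ≤ ∑ I ∈ exponentBox r with relWeight r I < θ, Real.exp (4 * ε * (θ - relWeight r I)) := by
        refine Finset.sum_le_sum fun I hI ↦ Real.one_le_exp ?_
        have := (Finset.mem_filter.1 hI).2
        exact mul_nonneg (by positivity) (by linarith)
    _ ≤ ∑ I ∈ exponentBox r, Real.exp (4 * ε * (θ - relWeight r I)) :=
        Finset.sum_le_sum_of_subset_of_nonneg (Finset.filter_subset _ _) fun _ _ _ ↦ by positivity
    _ = Real.exp (-(4 * ε ^ 2 * Fintype.card σ)) *
        ∏ i, ∑ j ∈ Finset.range (r i + 1), Real.exp (4 * ε * (1 / 2 - (j : ℝ) / r i)) := by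
        simp only [hexp]
        rw [← Finset.mul_sum, Finset.prod_univ_sum, exponentBox, Finset.sum_map]
        rfl
    _ ≤ Real.exp (-(4 * ε ^ 2 * Fintype.card σ)) *
        ∏ i, ((r i + 1 : ℝ) * Real.exp ((4 * ε) ^ 2 / 8)) := by
        gcongr with i
        exact sum_exp_mul_half_sub_div_le (hr i) (4 * ε)
    _ = _ := by
        rw [Finset.prod_mul_distrib, Finset.prod_const, ← Real.exp_nat_mul, card_exponentBox,
          Finset.card_univ, mul_left_comm, ← Real.exp_add]
        push_cast
        ring_nf

end Counting

section AuxiliaryPolynomial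

theorem aeval_hasseDeriv_monomial {σ A : Type*} [Fintype σ] [CommRing A] (α : A) (f e : σ →₀ ℕ)
    (c : ℤ) : aeval (fun _ ↦ α) (hasseDeriv f (monomial e c)) =
      (multiChoose e f * c : A) * α ^ (e - f).degree := by
  rw [hasseDeriv_monomial, aeval_monomial, Finsupp.prod_fintype _ _ (by simp),
    Finset.prod_pow_eq_pow_sum, Finsupp.degree_eq_sum]
  simp

section BoxPolynomial

variable {σ A : Type*} [Fintype σ] [DecidableEq σ] [CommRing A] {α : A} {r : σ → ℕ} {θ : ℝ}
  {t : exponentBox r → ℤ}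

theorem degreeOf_sum_monomial_le (i : σ) :
    degreeOf i (∑ e : exponentBox r, monomial e.1 (t e)) ≤ r i := by
  refine (degreeOf_sum_le i _ _).trans (Finset.sup_le fun e _ ↦ degreeOf_le_iff.2 fun f hf ↦ ?_)
  rw [Finset.mem_singleton.1 (support_monomial_subset hf)]
  exact mem_exponentBox.1 e.2 i

theorem l1Norm_sum_monomial_le {B : ℝ} (hB : 0 ≤ B) (ht : ∀ e, |(t e : ℝ)| ≤ B) :
    l1Norm (∑ e : exponentBox r, monomial e.1 (t e)) ≤ 2 ^ (∑ i, r i) * B := by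
  calc _ ≤ ∑ e : exponentBox r, |(t e : ℝ)| := by
        refine (l1Norm_sum_le _ _).trans_eq (Finset.sum_congr rfl fun e _ ↦ ?_)
        rw [l1Norm_monomial, Int.norm_eq_abs]
    _ ≤ ∑ _e : exponentBox r, B := Finset.sum_le_sum fun e _ ↦ ht e
    _ = (exponentBox r).card * B := by simp
    _ ≤ 2 ^ (∑ i, r i) * B :=
        mul_le_mul_of_nonneg_right (by exact_mod_cast card_exponentBox_le r) hB

theorem sum_monomial_mem_indexIdeal
    (ht : ∀ f ∈ exponentBox r, relWeight r f < θ →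
      ∑ e : exponentBox r, (multiChoose e.1 f * t e : A) * α ^ (e.1 - f).degree = 0) :
    ∑ e : exponentBox r, monomial e.1 (t e) ∈ indexIdeal ℤ (fun _ ↦ α) r θ := by
  intro f
  rw [coeff_translate, map_sum, map_sum]
  simp only [aeval_hasseDeriv_monomial]
  contrapose!
  intro hf
  by_cases hfr : f ∈ exponentBox r
  · exact ht f hfr hf
  · refine Finset.sum_eq_zero fun e _ ↦ ?_
    rw [multiChoose_eq_zero fun hle ↦ hfr (mem_exponentBox.2 fun i ↦
      (hle i).trans (mem_exponentBox.1 e.2 i)), Nat.cast_zero, zero_mul, zero_mul]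

end BoxPolynomial

theorem exists_mem_indexIdeal {A : Type*} [CommRing A] [IsDomain A] [CharZero A]
    {α : A} (hα : IsAlgebraic ℤ α) :
    ∃ (d : ℕ) (K : ℝ), 1 ≤ K ∧ ∀ {σ : Type*} [Fintype σ] [DecidableEq σ] (r : σ → ℕ) (θ : ℝ),
      2 * (((exponentBox r).filter (relWeight r · < θ)).card * d) ≤ (exponentBox r).card →
      ∃ P : MvPolynomial σ ℤ, P ≠ 0 ∧ (∀ i, degreeOf i P ≤ r i) ∧ l1Norm P ≤ K ^ ∑ i, r i ∧
        P ∈ indexIdeal ℤ (fun _ ↦ α) r θ := by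
  obtain ⟨d, H, hH, hsiegel⟩ := exists_ne_zero_sum_mul_pow_eq_zero hα
  refine ⟨d, 2 * (2 * (2 * H)), by linarith, fun {σ} _ _ r θ hcard ↦ ?_⟩
  set S := (exponentBox r).filter (relWeight r · < θ)
  set R := ∑ i, r i
  have : Nonempty (exponentBox r) := ⟨0, mem_exponentBox.2 fun _ ↦ Nat.zero_le _⟩
  obtain ⟨t, ht0, ht, hbound⟩ := hsiegel
    (fun (f : S) (e : exponentBox r) ↦ multiChoose e.1 f.1) (fun f e ↦ (e.1 - f.1).degree) R (2 ^ R)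
    (one_le_pow₀ one_le_two)
    (fun f e ↦ by exact_mod_cast multiChoose_le_two_pow (mem_exponentBox.1 e.2) f.1)
    (fun f e ↦ by
      rw [Finsupp.degree_eq_sum]
      exact Finset.sum_le_sum fun i _ ↦ (Nat.sub_le _ _).trans (mem_exponentBox.1 e.2 i))
    (by simpa only [Fintype.card_coe] using hcard)
  refine ⟨∑ e : exponentBox r, monomial e.1 (t e), fun h ↦ ht0 (funext fun e ↦ ?_),
    degreeOf_sum_monomial_le, ?_,
    sum_monomial_mem_indexIdeal fun f hfr hf ↦ ht ⟨f, Finset.mem_filter.2 ⟨hfr, hf⟩⟩⟩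
  · have hcoeff := congrArg (coeff e.1) h
    simp only [coeff_sum, coeff_monomial, ← Subtype.ext_iff, coeff_zero] at hcoeff
    rwa [Finset.sum_ite_eq' Finset.univ e t, if_pos (Finset.mem_univ e)] at hcoeff
  · rw [Fintype.card_coe] at hbound
    calc _ ≤ 2 ^ R * ((exponentBox r).card * (2 ^ R * H ^ R)) :=
          l1Norm_sum_monomial_le (by positivity) hbound
      _ ≤ 2 ^ R * (2 ^ R * (2 ^ R * H ^ R)) := by
          have : ((exponentBox r).card : ℝ) ≤ 2 ^ R := by exact_mod_cast card_exponentBox_le r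
          gcongr
      _ = (2 * (2 * (2 * H))) ^ R := by simp only [mul_pow]

theorem exists_mem_indexIdeal_half_sub {A : Type*} [CommRing A] [IsDomain A] [CharZero A]
    {α : A} (hα : IsAlgebraic ℤ α) {ε : ℝ} (hε : 0 < ε) :
    ∃ m > 0, ∃ K : ℝ, 1 ≤ K ∧ ∀ r : Fin m → ℕ, (∀ i, 0 < r i) →
      ∃ P : MvPolynomial (Fin m) ℤ, P ≠ 0 ∧ (∀ i, degreeOf i P ≤ r i) ∧ l1Norm P ≤ K ^ ∑ i, r i ∧
        P ∈ indexIdeal ℤ (fun _ ↦ α) r (m * (1 / 2 - ε)) := by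
  obtain ⟨d, K, hK, hP⟩ := exists_mem_indexIdeal hα
  obtain ⟨m, hm⟩ := exists_nat_ge ((2 * d + 1) / (2 * ε ^ 2))
  have hm0 : (0 : ℝ) < m := lt_of_lt_of_le (by positivity) hm
  refine ⟨m, Nat.cast_pos.1 hm0, K, hK, fun r hr ↦ hP r _ ?_⟩
  have hexp : 2 * d * Real.exp (-(2 * ε ^ 2 * m)) ≤ 1 := by
    rw [div_le_iff₀ (by positivity)] at hm
    rw [Real.exp_neg, ← div_eq_mul_inv, div_le_one (Real.exp_pos _)]
    linarith [Real.add_one_le_exp (2 * ε ^ 2 * m)]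
  have hcard := card_filter_relWeight_le hr hε.le
  rw [Fintype.card_fin] at hcard
  suffices h : 2 * ((((exponentBox r).filter (relWeight r · < m * (1 / 2 - ε))).card : ℝ) * d) ≤
      (exponentBox r).card by exact_mod_cast h
  calc _ ≤ 2 * ((exponentBox r).card * Real.exp (-(2 * ε ^ 2 * m)) * d) := by gcongr
    _ = (exponentBox r).card * (2 * d * Real.exp (-(2 * ε ^ 2 * m))) := by ring
    _ ≤ (exponentBox r).card := mul_le_of_le_one_right (Nat.cast_nonneg _) hexp

end AuxiliaryPolynomial

section Evaluation

variable {σ : Type*} {r : σ → ℕ} {Q : MvPolynomial σ ℤ}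

theorem one_le_abs_aeval_mul_prod_den [Fintype σ] {x : σ → ℚ} (hr : ∀ i, degreeOf i Q ≤ r i)
    (hQ : aeval x Q ≠ 0) : 1 ≤ |aeval x Q| * ∏ i, ((x i).den : ℚ) ^ r i := by
  obtain ⟨z, hz⟩ : ∃ z : ℤ, aeval x Q * ∏ i, ((x i).den : ℚ) ^ r i = z := by
    refine ⟨∑ e ∈ Q.support,
      coeff e Q * ∏ i, ((x i).num ^ e i * (x i).den ^ (r i - e i)), ?_⟩
    rw [aeval_def, eval₂_eq', Finset.sum_mul]
    push_cast
    refine Finset.sum_congr rfl fun e he ↦ ?_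
    rw [mul_assoc, ← Finset.prod_mul_distrib]
    congr 1
    refine Finset.prod_congr rfl fun i _ ↦ ?_
    rw [← Rat.mul_den_eq_num (x i), mul_pow, mul_assoc, ← pow_add,
      Nat.add_sub_cancel' ((monomial_le_degreeOf i he).trans (hr i))]
  have hden : 0 < ∏ i, ((x i).den : ℚ) ^ r i :=
    Finset.prod_pos fun i _ ↦ pow_pos (Nat.cast_pos.2 (x i).den_pos) _
  have hz0 : z ≠ 0 := by
    rintro rfl
    exact mul_ne_zero hQ hden.ne' (by simpa using hz)
  rw [← abs_of_pos hden, ← abs_mul, hz]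
  exact_mod_cast Int.one_le_abs hz0

theorem abs_aeval_le_of_mem_indexIdeal [Finite σ] {a b : σ → ℝ} {θ t : ℝ} (hr : ∀ i, 0 < r i)
    (hQ : Q ∈ indexIdeal ℤ a r θ) (ht : 0 < t) (ht1 : t ≤ 1)
    (hab : ∀ i, |b i - a i| ^ r i ≤ t) :
    |aeval b Q| ≤ l1Norm (translate a Q) * t ^ θ := by
  cases nonempty_fintype σ
  rw [aeval_eq_sum_translate a b Q, l1Norm, Finset.sum_mul]
  refine (Finset.abs_sum_le_sum_abs _ _).trans (Finset.sum_le_sum fun f hf ↦ ?_)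
  rw [abs_mul, Finset.abs_prod, Real.norm_eq_abs]
  refine mul_le_mul_of_nonneg_left ?_ (abs_nonneg _)
  have hfactor (i : σ) : |(b i - a i) ^ f i| ≤ t ^ ((f i : ℝ) / r i) := by
    have hri : (r i : ℝ) ≠ 0 := Nat.cast_ne_zero.2 (hr i).ne'
    calc |(b i - a i) ^ f i| = (|b i - a i| ^ r i) ^ ((f i : ℝ) / r i) := by
          rw [← Real.rpow_natCast_mul (abs_nonneg _), mul_div_cancel₀ _ hri, Real.rpow_natCast,
            abs_pow]
      _ ≤ t ^ ((f i : ℝ) / r i) := Real.rpow_le_rpow (by positivity) (hab i) (by positivity)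
  calc ∏ i, |(b i - a i) ^ f i| ≤ ∏ i, t ^ ((f i : ℝ) / r i) :=
        Finset.prod_le_prod (fun _ _ ↦ abs_nonneg _) fun i _ ↦ hfactor i
    _ = t ^ relWeight r f := by rw [relWeight_apply, Real.rpow_sum_of_pos ht]
    _ ≤ t ^ θ := Real.rpow_le_rpow_of_exponent_ge ht ht1
        (mem_indexIdeal.1 hQ f (mem_support_iff.1 hf))

theorem mul_le_of_mem_indexIdeal [Fintype σ] {a : σ → ℝ} {x : σ → ℚ} {θ μ Λ c : ℝ}
    (hr : ∀ i, 0 < r i) (hdeg : ∀ i, degreeOf i Q ≤ r i) (hQ : aeval x Q ≠ 0)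
    (hmem : Q ∈ indexIdeal ℤ a r θ) (hμ : 0 ≤ μ) (hΛ : 0 ≤ Λ)
    (hx : ∀ i, |x i - a i| ≤ ((x i).den : ℝ) ^ (-μ))
    (hlow : ∀ i, Λ ≤ r i * Real.log (x i).den) (hup : ∀ i, r i * Real.log (x i).den ≤ c) :
    μ * Λ * θ ≤ Fintype.card σ * c + Real.log (l1Norm (translate a Q)) := by
  have hden (i : σ) : (0 : ℝ) < (x i).den := Nat.cast_pos.2 (x i).den_pos
  have hclose (i : σ) : |(x i : ℝ) - a i| ^ r i ≤ Real.exp (-(μ * Λ)) := by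
    refine (pow_le_pow_left₀ (abs_nonneg _) (hx i) _).trans ?_
    rw [Real.rpow_def_of_pos (hden i), ← Real.exp_nat_mul]
    exact Real.exp_le_exp.2 (by linarith [mul_le_mul_of_nonneg_left (hlow i) hμ])
  have hprod : ∏ i, ((x i).den : ℝ) ^ r i ≤ Real.exp (Fintype.card σ * c) := by
    rw [← nsmul_eq_mul, ← Finset.card_univ, ← Finset.sum_const, Real.exp_sum]
    refine Finset.prod_le_prod (fun _ _ ↦ by positivity) fun i _ ↦ ?_
    rw [← Real.log_le_iff_le_exp (pow_pos (hden i) _), Real.log_pow]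
    exact hup i
  have hupper := abs_aeval_le_of_mem_indexIdeal hr hmem (Real.exp_pos _)
    (Real.exp_le_one_iff.2 (neg_nonpos.2 (mul_nonneg hμ hΛ))) hclose
  have hlower : 1 ≤ |aeval (fun i ↦ (x i : ℝ)) Q| * ∏ i, ((x i).den : ℝ) ^ r i := by
    have hcast : aeval (fun i ↦ (x i : ℝ)) Q = ((aeval x Q : ℚ) : ℝ) :=
      aeval_algebraMap_apply ℝ x Q
    rw [hcast]
    exact_mod_cast one_le_abs_aeval_mul_prod_den hdeg hQ
  have hone : 1 ≤ l1Norm (translate a Q) * Real.exp (-(μ * Λ * θ) + Fintype.card σ * c) := by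
    rw [Real.exp_add, ← mul_assoc, ← neg_mul, Real.exp_mul]
    exact hlower.trans (mul_le_mul hupper hprod (by positivity)
      ((abs_nonneg _).trans hupper))
  have hnorm : 0 < l1Norm (translate a Q) :=
    pos_of_mul_pos_left (one_pos.trans_le hone) (Real.exp_pos _).le
  have hlog := Real.log_nonneg hone
  rw [Real.log_mul hnorm.ne' (Real.exp_ne_zero _), Real.log_exp] at hlog
  linarith

end Evaluation

theorem exists_fin_seq_mul_le {X : Type*} {s : Set X} {g : X → ℝ}
    (hs : ∀ B, ∃ x ∈ s, B ≤ g x) (M B : ℝ) (m : ℕ) :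
    ∃ x : Fin m → X, (∀ i, x i ∈ s ∧ B ≤ g (x i)) ∧ ∀ i j, i < j → M * g (x j) ≤ g (x i) := by
  induction m with
  | zero => exact ⟨Fin.elim0, fun i ↦ i.elim0, fun i ↦ i.elim0⟩
  | succ m ih =>
    obtain ⟨x, hx, hgap⟩ := ih
    obtain ⟨C, hC⟩ := Finite.exists_le fun j ↦ M * g (x j)
    obtain ⟨y, hy, hyC⟩ := hs (max B C)
    refine ⟨Fin.cons y x,
      Fin.cases ⟨hy, (le_max_left _ _).trans hyC⟩ hx, fun i j hij ↦ ?_⟩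
    induction j using Fin.cases with
    | zero => exact absurd hij (Fin.not_lt_zero i)
    | succ j =>
      induction i using Fin.cases with
      | zero => exact (hC j).trans ((le_max_right _ _).trans hyC)
      | succ i => exact hgap i j (Fin.succ_lt_succ_iff.1 hij)

theorem exists_nat_mul_mem_Icc {ι : Type*} [Finite ι] {L : ι → ℝ} (hL : ∀ i, 0 < L i) {η : ℝ}
    (hη : 0 < η) :
    ∃ Λ > 0, ∃ r : ι → ℕ, ∀ i, 0 < r i ∧ Λ ≤ r i * L i ∧ r i * L i ≤ (1 + η) * Λ := by
  obtain ⟨M, hM⟩ := Finite.exists_le L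
  set Λ := max M 1 / η
  have hΛ : 0 < Λ := by positivity
  refine ⟨Λ, hΛ, fun i ↦ ⌈Λ / L i⌉₊, fun i ↦ ⟨Nat.ceil_pos.2 (div_pos hΛ (hL i)),
    (div_le_iff₀ (hL i)).1 (Nat.le_ceil _), ?_⟩⟩
  calc ⌈Λ / L i⌉₊ * L i ≤ (Λ / L i + 1) * L i := mul_le_mul_of_nonneg_right
        (Nat.ceil_lt_add_one (div_pos hΛ (hL i)).le).le (hL i).le
    _ = L i + Λ := by rw [add_mul, div_mul_cancel₀ _ (hL i).ne', one_mul, add_comm]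
    _ ≤ η * Λ + Λ := by
        rw [mul_div_cancel₀ _ hη.ne']
        linarith [(hM i).trans (le_max_left M 1)]
    _ = (1 + η) * Λ := by ring

theorem exists_balanced_degrees {s : Set ℚ} (hs : ∀ B, ∃ x ∈ s, B ≤ Real.log x.den) (m : ℕ)
    (M : ℝ) {η c : ℝ} (hη : 0 < η) (hc : 0 < c) :
    ∃ x : Fin m → ℚ, (∀ i, x i ∈ s) ∧
      (∀ i j, i < j → M * Real.log (x j).den ≤ Real.log (x i).den) ∧
      ∃ Λ > 0, ∃ r : Fin m → ℕ, (∀ i, 0 < r i) ∧ (∀ i, Λ ≤ r i * Real.log (x i).den) ∧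
        (∀ i, r i * Real.log (x i).den ≤ (1 + η) * Λ) ∧ ∑ i, (r i : ℝ) ≤ c * Λ := by
  set B := 1 + m * (1 + η) / c
  have hB : 0 < B := by positivity
  have hBc : m * (1 + η) ≤ B * c := by
    rw [← div_le_iff₀ hc]
    exact le_add_of_nonneg_left zero_le_one
  obtain ⟨x, hx, hgap⟩ := exists_fin_seq_mul_le hs M B m
  obtain ⟨Λ, hΛ, r, hr⟩ := exists_nat_mul_mem_Icc (fun i ↦ hB.trans_le (hx i).2) hη
  refine ⟨x, fun i ↦ (hx i).1, hgap, Λ, hΛ, r, fun i ↦ (hr i).1, fun i ↦ (hr i).2.1,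
    fun i ↦ (hr i).2.2, le_of_mul_le_mul_left ?_ hB⟩
  calc B * ∑ i, (r i : ℝ) = ∑ i, r i * B := by rw [mul_comm, Finset.sum_mul]
    _ ≤ ∑ _i : Fin m, (1 + η) * Λ := Finset.sum_le_sum fun i _ ↦
        (mul_le_mul_of_nonneg_left (hx i).2 (Nat.cast_nonneg _)).trans (hr i).2.2
    _ = m * (1 + η) * Λ := by simp [mul_assoc]
    _ ≤ B * (c * Λ) := by rw [← mul_assoc]; exact mul_le_mul_of_nonneg_right hBc hΛ.le

theorem isRothAdmissible_of_balanced {m : ℕ} {δ Λ K : ℝ} {r : Fin m → ℕ} {x : Fin m → ℚ}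
    {P : MvPolynomial (Fin m) ℤ} (hδ : 0 < δ) (hΛ : 0 < Λ) (hr : ∀ i, 0 < r i) (hP : P ≠ 0)
    (hdeg : ∀ i, degreeOf i P ≤ r i) (hnorm : l1Norm P ≤ K ^ ∑ i, r i)
    (hgap : ∀ i j, i < j → 2 / δ * Real.log (x j).den ≤ Real.log (x i).den)
    (hlow : ∀ i, Λ ≤ r i * Real.log (x i).den) (hup : ∀ i, r i * Real.log (x i).den ≤ 2 * Λ)
    (hsum : (∑ i, (r i : ℝ)) * (Real.log K + 1) ≤ δ * Λ) :
    IsRothAdmissible δ r x P where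
  pos := hr
  ne_zero := hP
  degreeOf_le := hdeg
  le_mul i j hij := by
    have hLj : 0 < Real.log (x j).den :=
      pos_of_mul_pos_right (hΛ.trans_le (hlow j)) (Nat.cast_nonneg _)
    have hgap' : 2 * Real.log (x j).den ≤ δ * Real.log (x i).den := by
      have h := hgap i j hij
      rw [div_mul_eq_mul_div, div_le_iff₀ hδ] at h
      linarith
    refine le_of_mul_le_mul_right ?_ (mul_pos two_pos hLj)
    calc (r i : ℝ) * (2 * Real.log (x j).den) ≤ r i * (δ * Real.log (x i).den) := by gcongr
      _ = δ * (r i * Real.log (x i).den) := by ring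
      _ ≤ δ * (2 * (r j * Real.log (x j).den)) := by
          exact mul_le_mul_of_nonneg_left (by linarith [hup i, hlow j]) hδ.le
      _ = δ * r j * (2 * Real.log (x j).den) := by ring
  log_l1Norm_add_le i := by
    have hlog : Real.log (l1Norm P) ≤ (∑ i, (r i : ℝ)) * Real.log K := by
      rw [← Nat.cast_sum, ← Real.log_pow]
      exact Real.log_le_log (one_pos.trans_le (one_le_l1Norm hP)) hnorm
    calc _ ≤ (∑ i, (r i : ℝ)) * (Real.log K + 1) := by linarith
      _ ≤ δ * (r i * Real.log (x i).den) := hsum.trans (by gcongr; exact hlow i)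

theorem exists_slack {μ : ℝ} (hμ : 2 < μ) :
    ∃ η : ℝ, 0 < η ∧ η ≤ 1 ∧ 1 + 2 * η < μ * (1 / 2 - 2 * η) := by
  refine ⟨(μ - 2) / (10 * μ), div_pos (by linarith) (by linarith), ?_, ?_⟩
  · rw [div_le_one (by linarith)]
    linarith
  · rw [← sub_pos]
    have : μ * (1 / 2 - 2 * ((μ - 2) / (10 * μ))) - (1 + 2 * ((μ - 2) / (10 * μ))) =
        (μ - 2) * (3 * μ - 2) / (10 * μ) := by
      field_simp
      ring
    rw [this]
    exact div_pos (mul_pos (by linarith) (by linarith)) (by linarith)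

theorem log_l1Norm_translate_hasseDeriv_le {σ : Type*} [Fintype σ] {P : MvPolynomial σ ℤ}
    {r : σ → ℕ} {α K : ℝ} (hK : 1 ≤ K) (hdeg : ∀ i, degreeOf i P ≤ r i)
    (hnorm : l1Norm P ≤ K ^ ∑ i, r i) (J : σ →₀ ℕ) :
    Real.log (l1Norm (translate (fun _ ↦ α) (hasseDeriv J P))) ≤
      (∑ i, (r i : ℝ)) * Real.log ((1 + |α|) * (2 * K)) := by
  have hA : 1 ≤ 1 + |α| := le_add_of_nonneg_right (abs_nonneg α)
  have hbase : 1 ≤ (1 + |α|) * (2 * K) := one_le_mul_of_one_le_of_one_le hA (by linarith)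
  rcases (l1Norm_nonneg (translate (fun _ ↦ α) (hasseDeriv J P))).eq_or_lt with h0 | hpos
  · rw [← h0, Real.log_zero]
    exact mul_nonneg (by positivity) (Real.log_nonneg hbase)
  rw [← Nat.cast_sum, ← Real.log_pow]
  refine Real.log_le_log hpos ?_
  calc _ ≤ (1 + |α|) ^ (∑ i, r i) * l1Norm (hasseDeriv J P) :=
        l1Norm_translate_le (fun _ ↦ le_rfl) fun i ↦ (degreeOf_hasseDeriv_le i J P).trans (hdeg i)
    _ ≤ (1 + |α|) ^ (∑ i, r i) * (2 ^ (∑ i, r i) * K ^ ∑ i, r i) := by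
        gcongr
        exact (l1Norm_hasseDeriv_le hdeg J).trans (by gcongr)
    _ = ((1 + |α|) * (2 * K)) ^ ∑ i, r i := by rw [mul_pow, mul_pow]

theorem exists_log_den_lt {α μ : ℝ} (hα : IsAlgebraic ℚ α) (hμ : 2 < μ) :
    ∃ B, ∀ x : ℚ, |x - α| ≤ (x.den : ℝ) ^ (-μ) → Real.log x.den < B := by
  by_contra! hunbounded
  obtain ⟨η, hη, hη1, hslack⟩ := exists_slack hμ
  obtain ⟨m, hm, K, hK, haux⟩ :=
    exists_mem_indexIdeal_half_sub ((IsFractionRing.isAlgebraic_iff ℤ ℚ ℝ).2 hα) hη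
  obtain ⟨δ, hδ, hroth⟩ := roth_lemma m hη
  set T := (1 + |α|) * (2 * K)
  have hT : 0 ≤ Real.log T := Real.log_nonneg <|
    one_le_mul_of_one_le_of_one_le (le_add_of_nonneg_right (abs_nonneg α)) (by linarith)
  have hlogK : 0 ≤ Real.log K := Real.log_nonneg hK
  obtain ⟨x, hx, hgap, Λ, hΛ, r, hr, hlow, hup, hsum⟩ := exists_balanced_degrees
    (s := {x : ℚ | |x - α| ≤ (x.den : ℝ) ^ (-μ)}) hunbounded m (2 / δ) hη
    (c := min (δ / (Real.log K + 1)) (η / (Real.log T + 1))) (by positivity)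
  have hsumK : (∑ i, (r i : ℝ)) * (Real.log K + 1) ≤ δ * Λ := by
    rw [← le_div_iff₀ (by positivity), mul_div_right_comm]
    exact hsum.trans (by gcongr; exact min_le_left _ _)
  have hsumT : (∑ i, (r i : ℝ)) * (Real.log T + 1) ≤ η * Λ := by
    rw [← le_div_iff₀ (by positivity), mul_div_right_comm]
    exact hsum.trans (by gcongr; exact min_le_right _ _)
  obtain ⟨P, hP, hdeg, hnorm, hmem⟩ := haux r hr
  obtain ⟨J, hJ, hJη⟩ : ∃ J, coeff J (translate x P) ≠ 0 ∧ relWeight r J < η := by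
    have hnot := hroth r x P (isRothAdmissible_of_balanced hδ hΛ hr hP hdeg hnorm hgap hlow
      (fun i ↦ (hup i).trans (by gcongr; linarith)) hsumK)
    simpa only [mem_indexIdeal, not_forall, not_le, exists_prop] using hnot
  rw [coeff_translate] at hJ
  have hm1 : (1 : ℝ) ≤ m := Nat.one_le_cast.2 hm
  have hmemJ : hasseDeriv J P ∈ indexIdeal ℤ (fun _ ↦ α) r (m * (1 / 2 - 2 * η)) :=
    indexIdeal_antitone ℤ _ r (by nlinarith) (hasseDeriv_mem_indexIdeal hmem J)
  have hmain := mul_le_of_mem_indexIdeal hr (fun i ↦ (degreeOf_hasseDeriv_le i J P).trans (hdeg i))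
    hJ hmemJ (by linarith) hΛ.le hx hlow hup
  have hlogT := log_l1Norm_translate_hasseDeriv_le (α := α) hK hdeg hnorm J
  rw [Fintype.card_fin] at hmain
  have hsum0 : 0 ≤ ∑ i, (r i : ℝ) := by positivity
  have hupper : μ * Λ * (m * (1 / 2 - 2 * η)) ≤ m * ((1 + η) * Λ) + η * Λ := by linarith
  have hmΛ : 0 < m * Λ := by positivity
  linarith [hupper, mul_lt_mul_of_pos_left hslack hmΛ,
    mul_le_mul_of_nonneg_right hm1 (mul_pos hη hΛ).le]

theorem finite_setOf_den_le_abs_le (N : ℕ) (C : ℝ) :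
    {x : ℚ | x.den ≤ N ∧ |(x : ℝ)| ≤ C}.Finite := by
  refine (((Set.finite_Icc (-⌈C * N⌉) ⌈C * N⌉).prod (Set.finite_Iic N)).image
    fun y : ℤ × ℕ ↦ (y.1 : ℚ) / y.2).subset ?_
  rintro x ⟨hden, hC⟩
  refine ⟨(x.num, x.den), ⟨abs_le.1 ?_, hden⟩, Rat.num_div_den x⟩
  have hnum : |(x.num : ℝ)| ≤ C * N := by
    rw [← Rat.cast_intCast, ← Rat.mul_den_eq_num, Rat.cast_mul, Rat.cast_natCast, abs_mul,
      Nat.abs_cast]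
    exact mul_le_mul hC (Nat.cast_le.2 hden) (Nat.cast_nonneg _) ((abs_nonneg _).trans hC)
  exact_mod_cast hnum.trans (Int.le_ceil _)

theorem finite_setOf_abs_sub_le_den_rpow {α μ : ℝ} (hα : IsAlgebraic ℚ α) (hμ : 2 < μ) :
    {x : ℚ | |x - α| ≤ (x.den : ℝ) ^ (-μ)}.Finite := by
  obtain ⟨B, hB⟩ := exists_log_den_lt hα hμ
  refine (finite_setOf_den_le_abs_le ⌊Real.exp B⌋₊ (1 + |α|)).subset fun x hx ↦ ⟨?_, ?_⟩
  · exact Nat.le_floor ((Real.log_lt_iff_lt_exp (Nat.cast_pos.2 x.den_pos)).1 (hB x hx)).le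
  · have hx1 : |x - α| ≤ 1 := hx.trans <|
      Real.rpow_le_one_of_one_le_of_nonpos (Nat.one_le_cast.2 x.den_pos) (by linarith)
    linarith [abs_sub_abs_le_abs_sub (x : ℝ) α]

theorem abs_div_sub_le_den_rpow {α ρ : ℝ} (hρ : 0 ≤ ρ) {p q : ℤ} (hq : 1 ≤ q)
    (h : (q : ℝ) ^ ρ * |q * α - p| ≤ 1) :
    |((p / q : ℚ) : ℝ) - α| ≤ ((p / q : ℚ).den : ℝ) ^ (-(1 + ρ)) := by
  have hq0 : (0 : ℝ) < q := by exact_mod_cast hq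
  have hden : ((p / q : ℚ).den : ℝ) ≤ q := by
    have hdvd := Rat.den_dvd p q
    rw [Rat.divInt_eq_div] at hdvd
    exact_mod_cast Int.le_of_dvd (by lia) hdvd
  refine le_trans ?_ (Real.rpow_le_rpow_of_nonpos (Nat.cast_pos.2 (Rat.den_pos _)) hden
    (by linarith))
  rw [Real.rpow_neg hq0.le, ← one_div, le_div_iff₀ (by positivity), Real.rpow_add hq0,
    Real.rpow_one]
  refine le_of_eq_of_le ?_ h
  have habs : |((p / q : ℚ) : ℝ) - α| * q = |q * α - p| := by
    rw [abs_sub_comm, ← abs_of_pos hq0, ← abs_mul, abs_of_pos hq0]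
    push_cast
    rw [sub_mul, div_mul_cancel₀ _ hq0.ne', mul_comm]
  rw [← habs]
  ring

theorem finite_setOf_div_eq {α ρ : ℝ} (hα : Irrational α) (hρ : 0 ≤ ρ) (x : ℚ) :
    {pq : ℤ × ℤ | (1 ≤ pq.2 ∧ (pq.2 : ℝ) ^ ρ * |(pq.2 : ℝ) * α - (pq.1 : ℝ)| ≤ 1) ∧
      (pq.1 / pq.2 : ℚ) = x}.Finite := by
  have hdist : 0 < |α - x| := abs_pos.2 (sub_ne_zero.2 (hα.ne_rat x))
  have hnum {p q : ℤ} (hq : 1 ≤ q) (hx : (p / q : ℚ) = x) : (p : ℚ) = q * x := by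
    rw [← hx, mul_div_cancel₀ _ (by exact_mod_cast (by lia : q ≠ 0))]
  refine Set.Finite.of_finite_image (f := Prod.snd)
    ((Set.finite_Icc 1 ⌊1 / |α - x|⌋).subset ?_) ?_
  · rintro _ ⟨⟨p, q⟩, ⟨⟨hq, h⟩, hx⟩, rfl⟩
    refine ⟨hq, Int.le_floor.2 ?_⟩
    have hq1 : (1 : ℝ) ≤ q := by exact_mod_cast hq
    have hpx : (p : ℝ) = q * x := by exact_mod_cast hnum hq hx
    rw [le_div_iff₀ hdist]
    calc q * |α - x| = |q * α - p| := by
          rw [hpx, ← mul_sub, abs_mul, abs_of_pos (one_pos.trans_le hq1)]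
      _ ≤ (q : ℝ) ^ ρ * |q * α - p| :=
          le_mul_of_one_le_left (abs_nonneg _) (Real.one_le_rpow hq1 hρ)
      _ ≤ 1 := h
  · rintro ⟨p, q⟩ ⟨⟨hq, -⟩, hx⟩ ⟨p', q'⟩ ⟨⟨hq', -⟩, hx'⟩ (rfl : q = q')
    have hpp : (p : ℚ) = p' := (hnum hq hx).trans (hnum hq' hx').symm
    exact Prod.ext (by exact_mod_cast hpp) rfl

end Roth

/-- Roth's theorem: if `α` is a real algebraic irrational number and `ρ > 1`, then the set
of integer pairs `(p, q)` with `q ≥ 1` and `q^ρ * |q·α − p| ≤ 1` is finite. -/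
theorem roth_theorem (α : ℝ) (hα : IsAlgebraic ℚ α) (hirr : Irrational α)
    (ρ : ℝ) (hρ : 1 < ρ) :
    {pq : ℤ × ℤ | 1 ≤ pq.2 ∧ (pq.2 : ℝ) ^ ρ * |(pq.2 : ℝ) * α - (pq.1 : ℝ)| ≤ 1}.Finite := by
  have hρ0 : 0 ≤ ρ := by linarith
  refine Set.Finite.of_finite_fibers (fun pq : ℤ × ℤ ↦ (pq.1 / pq.2 : ℚ)) ?_ fun x _ ↦
    Roth.finite_setOf_div_eq hirr hρ0 x
  refine (Roth.finite_setOf_abs_sub_le_den_rpow hα (by linarith : 2 < 1 + ρ)).subset ?_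
  rintro _ ⟨⟨p, q⟩, ⟨hq, h⟩, rfl⟩
  exact Roth.abs_div_sub_le_den_rpow hρ0 hq h
end
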